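/- arXiv:1306.3910 — 3 statements merged into one kernel-verified Lean document; each statement's English description precedes it below -/
import Mathlib

section
/- (Schur's conjecture in ℝ⁴.) For every n ≥ 5: (a) every set X of n points in Euclidean 4-space with all pairwise distances at most 1 contains at most n four-element subsets in which all six pairwise distances equal 1; and (b) there exists such an n-point set X containing exactly n such four-element subsets. -/
attribute [local instance] Classical.propDecidable

/-- The set of 4-element subsets of `X` with all six pairwise distances equal to `1`
(unit simplices / 4-cliques of the diameter graph). -/
noncomputable def unitSimplices (X : Finset (EuclideanSpace ℝ (Fin 4))) :
    Finset (Finset (EuclideanSpace ℝ (Fin 4))) :=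
  (X.powersetCard 4).filter (fun s => ∀ x ∈ s, ∀ y ∈ s, x ≠ y → ‖x - y‖ = 1)

open Matrix

abbrev V4 := Fin 4 → ℝ

lemma polar_zero {A B : ℝ} (h : ∀ t : ℝ, 0 ≤ A * t ^ 2 + 2 * B * t) : B = 0 := by
  by_contra hB
  by_cases hA : A ≤ 0
  · have h1 := h (-B)
    nlinarith [sq_nonneg B, mul_self_pos.mpr hB]
  · push Not at hA
    have h1 := h (-B / A)
    have : A * (-B / A) ^ 2 + 2 * B * (-B / A) = - B ^ 2 / A := by field_simp; ring
    rw [this] at h1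
    have : 0 < B ^ 2 / A := by positivity
    have h3 : -B ^ 2 / A = - (B ^ 2 / A) := by ring
    linarith

/-- quadratic form -/
def qf (F : Matrix (Fin 4) (Fin 4) ℝ) (s : ℝ) (x y : V4) : ℝ :=
  s * (x ⬝ᵥ x + y ⬝ᵥ y) - 2 * (x ⬝ᵥ F *ᵥ y)

def bf (F : Matrix (Fin 4) (Fin 4) ℝ) (s : ℝ) (x y u v : V4) : ℝ :=
  s * (x ⬝ᵥ u + y ⬝ᵥ v) - (x ⬝ᵥ F *ᵥ v) - (u ⬝ᵥ F *ᵥ y)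

lemma qf_add (F : Matrix (Fin 4) (Fin 4) ℝ) (s : ℝ) (x y u v : V4) (p t : ℝ) :
    qf F s (p • x + t • u) (p • y + t • v)
      = p ^ 2 * qf F s x y + 2 * p * t * bf F s x y u v + t ^ 2 * qf F s u v := by
  simp only [qf, bf, mulVec_add, mulVec_smul, add_dotProduct, dotProduct_add, smul_dotProduct,
    dotProduct_smul, smul_eq_mul]
  rw [dotProduct_comm u x, dotProduct_comm v y]
  ring

lemma qf_polar (F : Matrix (Fin 4) (Fin 4) ℝ) (s : ℝ) (x y u v : V4)
    (h0 : qf F s x y = 0) (h : ∀ t : ℝ, 0 ≤ qf F s (x + t • u) (y + t • v)) :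
    bf F s x y u v = 0 := by
  apply polar_zero (A := qf F s u v)
  intro t
  have := h t
  have h2 := qf_add F s x y u v 1 t
  rw [one_smul, one_smul] at h2
  rw [h2, h0] at this
  linarith

lemma bf_kernel (F : Matrix (Fin 4) (Fin 4) ℝ) (s : ℝ) (x y : V4)
    (h : ∀ u v, bf F s x y u v = 0) : F *ᵥ y = s • x ∧ x ᵥ* F = s • y := by
  constructor
  · ext i
    have := h (Pi.single i 1) 0
    simp [bf] at this
    simp; linarith
  · ext i
    have := h 0 (Pi.single i 1)
    rw [bf, dotProduct_mulVec] at this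
    simp at this
    simp; linarith

/-- positive part -/
def pp (x : V4) : V4 := fun i => max (x i) 0

lemma pp_nonneg (x : V4) (i) : 0 ≤ pp x i := le_max_right _ _
lemma le_pp (x : V4) (i) : x i ≤ pp x i := le_max_left _ _
lemma pp_mul (x : V4) (i) : pp x i * pp x i = pp x i * x i := by
  unfold pp
  rcases le_total (x i) 0 with h | h
  · simp [max_eq_right h]
  · simp [max_eq_left h]
lemma pp_neg (x : V4) (i) : pp (-x) i = pp x i - x i := by
  simp only [pp, Pi.neg_apply]
  rcases le_total (x i) 0 with h | h
  · rw [max_eq_right h, max_eq_left (by linarith)]; ring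
  · rw [max_eq_left h, max_eq_right (by linarith)]; ring

lemma dot_mono (F : Matrix (Fin 4) (Fin 4) ℝ) (hF : ∀ i j, 0 ≤ F i j) (x x' y y' : V4)
    (hx : ∀ i, 0 ≤ x i) (hxx : ∀ i, x i = x' i)  (hy : ∀ i, y i ≤ y' i) :
    x ⬝ᵥ F *ᵥ y ≤ x' ⬝ᵥ F *ᵥ y' := by
  simp only [dotProduct, mulVec]
  apply Finset.sum_le_sum
  intro i _
  rw [← hxx i]
  apply mul_le_mul_of_nonneg_left _ (hx i)
  apply Finset.sum_le_sum
  intro j _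
  exact mul_le_mul_of_nonneg_left (hy j) (hF i j)

lemma dot_abs (F : Matrix (Fin 4) (Fin 4) ℝ) (hF : ∀ i j, 0 ≤ F i j) (x y : V4) :
    x ⬝ᵥ F *ᵥ y ≤ (fun i => |x i|) ⬝ᵥ F *ᵥ (fun i => |y i|) := by
  simp only [dotProduct, mulVec, Finset.mul_sum]
  apply Finset.sum_le_sum
  intro i _
  apply Finset.sum_le_sum
  intro j _
  have := mul_le_mul_of_nonneg_left (le_abs_self (x i * y j)) (hF i j)
  rw [abs_mul] at this
  nlinarith

structure InK (F : Matrix (Fin 4) (Fin 4) ℝ) (x y : V4) : Prop where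
  hx : x = F *ᵥ y
  hy : y = x ᵥ* F
  hs : ∑ i, x i = ∑ i, y i

lemma InK.neg {F : Matrix (Fin 4) (Fin 4) ℝ} {x y : V4} (h : InK F x y) : InK F (-x) (-y) where
  hx := by rw [mulVec_neg, ← h.hx]
  hy := by rw [neg_vecMul, ← h.hy]
  hs := by simp [h.hs]

lemma InK.pos {F : Matrix (Fin 4) (Fin 4) ℝ} (hF : ∀ i j, 0 ≤ F i j) {x y : V4} (h : InK F x y) :
    qf F 1 (pp x) (pp y) ≤ 0 := by
  have h1 : pp x ⬝ᵥ pp x = pp x ⬝ᵥ F *ᵥ y := by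
    rw [← h.hx]
    exact Finset.sum_congr rfl fun i _ => pp_mul x i
  have h2 : pp y ⬝ᵥ pp y = x ⬝ᵥ F *ᵥ pp y := by
    rw [dotProduct_mulVec, ← h.hy, dotProduct_comm y]
    exact Finset.sum_congr rfl fun i _ => pp_mul y i
  have h3 : pp x ⬝ᵥ F *ᵥ y ≤ pp x ⬝ᵥ F *ᵥ pp y :=
    dot_mono F hF _ _ _ _ (pp_nonneg x) (fun _ => rfl) (le_pp y)
  have h4 : x ⬝ᵥ F *ᵥ pp y ≤ pp x ⬝ᵥ F *ᵥ pp y := by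
    simp only [dotProduct, mulVec]
    apply Finset.sum_le_sum
    intro i _
    apply mul_le_mul_of_nonneg_right (le_pp x i)
    exact Finset.sum_nonneg fun j _ => mul_nonneg (hF i j) (pp_nonneg y j)
  unfold qf
  linarith

/-- Lemma X -/
lemma lemX {F : Matrix (Fin 4) (Fin 4) ℝ} (hF : ∀ i j, 0 ≤ F i j) (hF1 : ∀ i j, F i j ≤ 1)
    {x y : V4} (h : x = F *ᵥ y) (i : Fin 4) (hi : 0 < x i) (hs : ∑ j, pp y j ≤ x i) :
    ∃ j, F i j = 1 := by
  by_contra hc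
  push Not at hc
  have h1 : x i = ∑ j, F i j * y j := congrFun h i
  have h2 : ∑ j, F i j * y j ≤ ∑ j, F i j * pp y j :=
    Finset.sum_le_sum fun j _ => mul_le_mul_of_nonneg_left (le_pp y j) (hF i j)
  have h3 : ∀ j, F i j * pp y j ≤ pp y j := fun j => by
    nlinarith [pp_nonneg y j, hF1 i j]
  have h4 : ∑ j, pp y j ≤ ∑ j, F i j * pp y j := by linarith
  have h5 : ∀ j, pp y j = 0 := by
    intro j
    by_contra hj
    have hlt : ∑ j, F i j * pp y j < ∑ j, pp y j := by
      apply Finset.sum_lt_sum (fun j _ => h3 j)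
      refine ⟨j, Finset.mem_univ j, ?_⟩
      have ha : 0 < pp y j := lt_of_le_of_ne (pp_nonneg y j) (Ne.symm hj)
      have hb : F i j < 1 := lt_of_le_of_ne (hF1 i j) (hc j)
      nlinarith
    linarith
  simp [h5] at h2
  linarith

lemma single_sum {x : V4} {p : Fin 4} (hp : 0 < x p) (h : ∀ q, q ≠ p → x q ≤ 0) :
    ∑ i, pp x i = x p := by
  rw [Finset.sum_eq_single p]
  · simp [pp, hp.le]
  · intro b _ hb; simp [pp, h b hb]
  · simp

/-- sign pattern lemma -/
lemma pattern (u x : V4) (hu : ∀ i, 0 ≤ u i) (i l l' : Fin 4) (h1 : l ≠ i) (h2 : l' ≠ i)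
    (h3 : l ≠ l') (hl : 0 < u l) (hl' : 0 < u l') (hxi : x i = 0) (hx : x ≠ 0)
    (h0 : u ⬝ᵥ x = 0) : ∃ p, p ≠ i ∧ ((0 < x p ∧ ∀ q, q ≠ p → x q ≤ 0) ∨
      (0 < (-x) p ∧ ∀ q, q ≠ p → (-x) q ≤ 0)) := by
  obtain ⟨m, hm⟩ : ∃ m : Fin 4, ∀ q, q = i ∨ q = l ∨ q = l' ∨ q = m := by
    clear hl hl' hxi
    revert i l l'; decide
  by_cases hmm : m = i ∨ m = l ∨ m = l'
  · exfalso
    have hc : (Finset.univ : Finset (Fin 4)) ⊆ {i, l, l'} := by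
      intro q _
      simp only [Finset.mem_insert, Finset.mem_singleton]
      rcases hm q with h | h | h | h
      · tauto
      · tauto
      · tauto
      · subst h; tauto
    have := Finset.card_le_card hc
    have h5 := Finset.card_le_three (a := i) (b := l) (c := l')
    simp at this; omega
  push Not at hmm
  obtain ⟨m1, m2, m3⟩ := hmm
  have hS : (Finset.univ : Finset (Fin 4)) = {i, l, l', m} := by
    ext q; simpa using hm q
  have e : u l * x l + u l' * x l' + u m * x m = 0 := by
    have : u ⬝ᵥ x = ∑ j ∈ ({i, l, l', m} : Finset (Fin 4)), u j * x j := by rw [← hS]; rfl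
    rw [this, Finset.sum_insert (by simp [h1.symm, h2.symm, Ne.symm m1]),
      Finset.sum_insert (by simp [h3, Ne.symm m2]),
      Finset.sum_insert (by simp [Ne.symm m3]), Finset.sum_singleton, hxi] at h0
    linarith
  have all : ∀ (P : Fin 4 → Prop), P i → P l → P l' → P m → ∀ q, P q := by
    intro P a b c d q
    rcases hm q with h | h | h | h <;> (subst h; assumption)
  have hum := hu m
  by_contra hcon
  push Not at hcon
  have kill : ∀ p, p ≠ i → (0 < x p → ¬ ∀ q, q ≠ p → x q ≤ 0) ∧
      (x p < 0 → ¬ ∀ q, q ≠ p → 0 ≤ x q) := by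
    intro p hp
    obtain ⟨c1, c2⟩ := hcon p hp
    constructor
    · intro hh hq
      obtain ⟨q, hq1, hq2⟩ := c1 hh
      linarith [hq q hq1]
    · intro hh hq
      obtain ⟨q, hq1, hq2⟩ := c2 (by simpa using hh)
      have := hq q hq1
      simp at hq2
      linarith
  have kl := kill l h1
  have kl' := kill l' h2
  have km := kill m m1
  have P1 : ∀ p, (x i ≤ 0 → (l ≠ p → x l ≤ 0) → (l' ≠ p → x l' ≤ 0) → (m ≠ p → x m ≤ 0) →
      ∀ q, q ≠ p → x q ≤ 0) := by
    intro p a b c d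
    exact all (fun q => q ≠ p → x q ≤ 0) (fun _ => a) b c d
  have P2 : ∀ p, (0 ≤ x i → (l ≠ p → 0 ≤ x l) → (l' ≠ p → 0 ≤ x l') → (m ≠ p → 0 ≤ x m) →
      ∀ q, q ≠ p → 0 ≤ x q) := by
    intro p a b c d
    exact all (fun q => q ≠ p → 0 ≤ x q) (fun _ => a) b c d
  have a1 : 0 < x l → ¬ (x l' ≤ 0 ∧ x m ≤ 0) := fun h ⟨b, c⟩ =>
    kl.1 h (P1 l hxi.le (fun h => absurd rfl h) (fun _ => b) (fun _ => c))
  have a2 : 0 < x l' → ¬ (x l ≤ 0 ∧ x m ≤ 0) := fun h ⟨b, c⟩ =>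
    kl'.1 h (P1 l' hxi.le (fun _ => b) (fun h => absurd rfl h) (fun _ => c))
  have a3 : 0 < x m → ¬ (x l ≤ 0 ∧ x l' ≤ 0) := fun h ⟨b, c⟩ =>
    km.1 h (P1 m hxi.le (fun _ => b) (fun _ => c) (fun h => absurd rfl h))
  have b1 : x l < 0 → ¬ (0 ≤ x l' ∧ 0 ≤ x m) := fun h ⟨b, c⟩ =>
    kl.2 h (P2 l hxi.ge (fun h => absurd rfl h) (fun _ => b) (fun _ => c))
  have b2 : x l' < 0 → ¬ (0 ≤ x l ∧ 0 ≤ x m) := fun h ⟨b, c⟩ =>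
    kl'.2 h (P2 l' hxi.ge (fun _ => b) (fun h => absurd rfl h) (fun _ => c))
  have b3 : x m < 0 → ¬ (0 ≤ x l ∧ 0 ≤ x l') := fun h ⟨b, c⟩ =>
    km.2 h (P2 m hxi.ge (fun _ => b) (fun _ => c) (fun h => absurd rfl h))
  have nz : ¬ (x l = 0 ∧ x l' = 0 ∧ x m = 0) := by
    rintro ⟨a, b, c⟩
    apply hx
    funext q
    exact all (fun q => x q = 0) hxi a b c q
  clear all kl kl' km P1 P2 kill hcon
  generalize x l = p at *
  generalize x l' = q at *
  generalize x m = r at *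
  generalize u l = α at *
  generalize u l' = β at *
  generalize u m = γ at *
  have c1 : ¬ (0 ≤ p ∧ 0 ≤ q ∧ 0 ≤ r ∧ (0 < p ∨ 0 < q)) := by
    rintro ⟨hp, hq, hr, h | h⟩
    · nlinarith [mul_pos hl h, mul_nonneg hl'.le hq, mul_nonneg hum hr]
    · nlinarith [mul_pos hl' h, mul_nonneg hl.le hp, mul_nonneg hum hr]
  have c2 : ¬ (p ≤ 0 ∧ q ≤ 0 ∧ r ≤ 0 ∧ (p < 0 ∨ q < 0)) := by
    rintro ⟨hp, hq, hr, h | h⟩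
    · nlinarith [mul_pos hl (neg_pos.mpr h), mul_nonneg hl'.le (neg_nonneg.mpr hq),
        mul_nonneg hum (neg_nonneg.mpr hr)]
    · nlinarith [mul_pos hl' (neg_pos.mpr h), mul_nonneg hl.le (neg_nonneg.mpr hp),
        mul_nonneg hum (neg_nonneg.mpr hr)]
  rcases lt_trichotomy p 0 with hp | hp | hp <;> rcases lt_trichotomy q 0 with hq | hq | hq <;>
    rcases lt_trichotomy r 0 with hr | hr | hr <;>
    first
    | exact a1 hp ⟨by linarith, by linarith⟩
    | exact a2 hq ⟨by linarith, by linarith⟩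
    | exact a3 hr ⟨by linarith, by linarith⟩
    | exact b1 hp ⟨by linarith, by linarith⟩
    | exact b2 hq ⟨by linarith, by linarith⟩
    | exact b3 hr ⟨by linarith, by linarith⟩
    | exact nz ⟨hp, hq, hr⟩
    | exact c1 ⟨by linarith, by linarith, by linarith, Or.inl hp⟩
    | exact c1 ⟨by linarith, by linarith, by linarith, Or.inr hq⟩
    | exact c2 ⟨by linarith, by linarith, by linarith, Or.inl hp⟩
    | exact c2 ⟨by linarith, by linarith, by linarith, Or.inr hq⟩

/-- two positive entries -/
lemma two_positive {u : V4} (hu : ∀ i, 0 ≤ u i) {α : ℝ} (h1 : α < ∑ i, u i) (h2 : u ⬝ᵥ u = α * α) (hα : 0 ≤ α) :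
    ∃ l l', l ≠ l' ∧ 0 < u l ∧ 0 < u l' := by
  by_contra hc
  push Not at hc
  have hz : ∀ i j, i ≠ j → u i * u j = 0 := by
    intro i j hij
    rcases (hu i).eq_or_lt with h | h
    · rw [← h, zero_mul]
    · rw [le_antisymm (hc i j hij h) (hu j), mul_zero]
  have h3 : (∑ i, u i) * (∑ i, u i) = u ⬝ᵥ u := by
    simp only [dotProduct, Fin.sum_univ_four]
    have := hz 0 1 (by decide)
    have := hz 0 2 (by decide)
    have := hz 0 3 (by decide)
    have := hz 1 2 (by decide)
    have := hz 1 3 (by decide)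
    have := hz 2 3 (by decide)
    linarith
  nlinarith

lemma sq_le_sum {v : V4} (hv : ∀ i, 0 ≤ v i) : v ⬝ᵥ v ≤ (∑ i, v i) * ∑ i, v i := by
  simp only [dotProduct, Fin.sum_univ_four]
  have := hv 0
  have := hv 1
  have := hv 2
  have := hv 3
  nlinarith [mul_nonneg (hv 0) (hv 1), mul_nonneg (hv 0) (hv 2), mul_nonneg (hv 0) (hv 3),
    mul_nonneg (hv 1) (hv 2), mul_nonneg (hv 1) (hv 3), mul_nonneg (hv 2) (hv 3)]

structure Perron (F : Matrix (Fin 4) (Fin 4) ℝ) (s : ℝ) (u v : V4) : Prop where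
  hs : 1 < s
  hu : ∀ i, 0 ≤ u i
  hv : ∀ i, 0 ≤ v i
  e1 : F *ᵥ v = s • u
  e2 : u ᵥ* F = s • v
  nz : 0 < u ⬝ᵥ u

lemma perron_exists {F : Matrix (Fin 4) (Fin 4) ℝ} (hF : ∀ i j, 0 ≤ F i j) {x y : V4}
    (h : qf F 1 x y < 0) : ∃ s u v, Perron F s u v := by
  let N : V4 × V4 → ℝ := fun z => z.1 ⬝ᵥ z.1 + z.2 ⬝ᵥ z.2
  let B : V4 × V4 → ℝ := fun z => 2 * (z.1 ⬝ᵥ F *ᵥ z.2)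
  have hN : Continuous N := by
    simp only [N, dotProduct]; fun_prop
  have hB : Continuous B := by
    simp only [B, dotProduct, mulVec]; fun_prop
  have hNsum : ∀ z, N z = ∑ i, z.1 i ^ 2 + ∑ i, z.2 i ^ 2 := by
    intro z; simp only [N, dotProduct]; congr 1 <;> exact Finset.sum_congr rfl fun i _ => by ring
  let S : Set (V4 × V4) := {z | N z = 1}
  have hS : IsCompact S := by
    apply Metric.isCompact_of_isClosed_isBounded
    · exact isClosed_eq hN continuous_const
    · refine (Metric.isBounded_closedBall (x := (0 : V4 × V4)) (r := 1)).subset ?_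
      intro z hz
      have hz' : ∑ i, z.1 i ^ 2 + ∑ i, z.2 i ^ 2 = 1 := by rw [← hNsum]; exact hz
      have n1 : 0 ≤ ∑ i, z.1 i ^ 2 := Finset.sum_nonneg fun i _ => sq_nonneg _
      have n2 : 0 ≤ ∑ i, z.2 i ^ 2 := Finset.sum_nonneg fun i _ => sq_nonneg _
      rw [mem_closedBall_zero_iff, Prod.norm_def]
      apply max_le
      · rw [pi_norm_le_iff_of_nonneg zero_le_one]
        intro i
        have := Finset.single_le_sum (f := fun i => z.1 i ^ 2) (fun i _ => sq_nonneg _) (Finset.mem_univ i)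
        rw [Real.norm_eq_abs]
        apply abs_le_of_sq_le_sq _ zero_le_one
        linarith
      · rw [pi_norm_le_iff_of_nonneg zero_le_one]
        intro i
        have := Finset.single_le_sum (f := fun i => z.2 i ^ 2) (fun i _ => sq_nonneg _) (Finset.mem_univ i)
        rw [Real.norm_eq_abs]
        apply abs_le_of_sq_le_sq _ zero_le_one
        linarith
  have hNs : ∀ (t : ℝ) z, N (t • z) = t ^ 2 * N z := by
    intro t z; simp [N, smul_dotProduct, dotProduct_smul]; ring
  have hBs : ∀ (t : ℝ) z, B (t • z) = t ^ 2 * B z := by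
    intro t z; simp [B, smul_dotProduct, dotProduct_smul, mulVec_smul]; ring
  have hNnn : ∀ z, 0 ≤ N z := by
    intro z; rw [hNsum]; positivity
  have hN0 : ∀ z, N z = 0 → B z = 0 := by
    intro z hz
    rw [hNsum] at hz
    have n1 : 0 ≤ ∑ i, z.1 i ^ 2 := Finset.sum_nonneg fun i _ => sq_nonneg _
    have n2 : 0 ≤ ∑ i, z.2 i ^ 2 := Finset.sum_nonneg fun i _ => sq_nonneg _
    have n3 : ∑ i, z.1 i ^ 2 = 0 := by linarith
    rw [Finset.sum_eq_zero_iff_of_nonneg (fun i _ => sq_nonneg _)] at n3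
    have : z.1 = 0 := by
      funext i; simpa using n3 i (Finset.mem_univ i)
    simp [B, this]
  have hnorm : ∀ z, N z ≠ 0 → (Real.sqrt (N z))⁻¹ • z ∈ S ∧ B ((Real.sqrt (N z))⁻¹ • z) = B z / N z := by
    intro z hz
    have hp : 0 < N z := lt_of_le_of_ne (hNnn z) (Ne.symm hz)
    have hsq : ((Real.sqrt (N z))⁻¹) ^ 2 = (N z)⁻¹ := by
      rw [inv_pow, Real.sq_sqrt hp.le]
    constructor
    · show N _ = 1
      rw [hNs, hsq]; field_simp
    · rw [hBs, hsq]; field_simp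
  have hxy : N (x, y) < B (x, y) := by
    simp only [N, B]; unfold qf at h; linarith
  have hxy0 : N (x, y) ≠ 0 := by
    intro h0
    have := hN0 _ h0; linarith
  obtain ⟨z, hz, hmax⟩ := hS.exists_isMaxOn ⟨_, (hnorm _ hxy0).1⟩ hB.continuousOn
  let z' : V4 × V4 := (fun i => |z.1 i|, fun i => |z.2 i|)
  have hz' : N z' = 1 := by
    have : N z = 1 := hz
    rw [hNsum] at this ⊢
    simpa [z'] using this
  have hBz : B z ≤ B z' := by
    have := dot_abs F hF z.1 z.2
    simp only [B, z']; linarith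
  have hgen : ∀ q, B q ≤ B z' * N q := by
    intro q
    by_cases hq : N q = 0
    · rw [hN0 q hq, hq, mul_zero]
    · have h1 := hmax (hnorm q hq).1
      simp only [Set.mem_ofPred_eq] at h1
      rw [(hnorm q hq).2] at h1
      have hp : 0 < N q := lt_of_le_of_ne (hNnn q) (Ne.symm hq)
      rw [div_le_iff₀ hp] at h1
      nlinarith
  have hs1 : 1 < B z' := by
    have h1 := hgen (x, y)
    have hp : 0 < N (x, y) := lt_of_le_of_ne (hNnn _) (Ne.symm hxy0)
    by_contra hc
    push Not at hc
    nlinarith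
  have hq : ∀ q r : V4, 0 ≤ qf F (B z') q r := by
    intro q r
    have := hgen (q, r)
    simp only [N] at this
    unfold qf
    have e : B (q, r) = 2 * (q ⬝ᵥ F *ᵥ r) := rfl
    linarith
  have hq0 : qf F (B z') z'.1 z'.2 = 0 := by
    have e : qf F (B z') z'.1 z'.2 = B z' * N z' - B z' := rfl
    rw [e, hz']; ring
  obtain ⟨e1, e2⟩ := bf_kernel F (B z') z'.1 z'.2 (fun u v => qf_polar _ _ _ _ _ _ hq0 (fun t => hq _ _))
  refine ⟨B z', z'.1, z'.2, hs1, fun i => abs_nonneg _, fun i => abs_nonneg _, e1, e2, ?_⟩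
  have h5 : B z' = 2 * (B z' * (z'.1 ⬝ᵥ z'.1)) := by
    have : B z' = 2 * (z'.1 ⬝ᵥ F *ᵥ z'.2) := rfl
    rw [e1, dotProduct_smul, smul_eq_mul] at this
    exact this
  by_contra hc
  push Not at hc
  nlinarith

lemma Perron.norm_eq {F : Matrix (Fin 4) (Fin 4) ℝ} {s : ℝ} {u v : V4} (w : Perron F s u v) :
    u ⬝ᵥ u = v ⬝ᵥ v := by
  have h1 : u ⬝ᵥ F *ᵥ v = s * (u ⬝ᵥ u) := by rw [w.e1, dotProduct_smul, smul_eq_mul]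
  have h2 : u ⬝ᵥ F *ᵥ v = s * (v ⬝ᵥ v) := by rw [dotProduct_mulVec, w.e2, smul_dotProduct, smul_eq_mul]
  have := w.hs
  have h3 : s * (u ⬝ᵥ u) = s * (v ⬝ᵥ v) := by rw [← h1, h2]
  exact mul_left_cancel₀ (by linarith) h3

lemma Perron.qneg {F : Matrix (Fin 4) (Fin 4) ℝ} {s : ℝ} {u v : V4} (w : Perron F s u v) :
    qf F 1 u v < 0 := by
  have h1 : u ⬝ᵥ F *ᵥ v = s * (u ⬝ᵥ u) := by rw [w.e1, dotProduct_smul, smul_eq_mul]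
  unfold qf
  rw [h1, ← w.norm_eq]
  nlinarith [w.hs, w.nz]

lemma Perron.orth {F : Matrix (Fin 4) (Fin 4) ℝ} {s : ℝ} {u v : V4} (w : Perron F s u v)
    {x y : V4} (k : InK F x y) : u ⬝ᵥ x = 0 := by
  have h1 : u ⬝ᵥ x = s * (v ⬝ᵥ y) := by
    conv_lhs => rw [k.hx, dotProduct_mulVec, w.e2, smul_dotProduct, smul_eq_mul]
  have h2 : v ⬝ᵥ y = s * (u ⬝ᵥ x) := by
    conv_lhs => rw [k.hy, dotProduct_comm, ← dotProduct_mulVec, w.e1, dotProduct_smul, smul_eq_mul, dotProduct_comm]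
  have := w.hs
  rw [h2] at h1
  have h3 : (s * s - 1) * (u ⬝ᵥ x) = 0 := by linarith
  rcases mul_eq_zero.mp h3 with h | h
  · nlinarith
  · exact h

lemma Perron.sign {F : Matrix (Fin 4) (Fin 4) ℝ} (hF : ∀ i j, 0 ≤ F i j)
    (hQ : ∀ x y : V4, ∑ i, x i = ∑ i, y i → 0 ≤ qf F 1 x y)
    {s : ℝ} {u v : V4} (w : Perron F s u v) (hw : ∑ i, v i < ∑ i, u i)
    {x y : V4} (k : InK F x y) : ∑ i, pp y i ≤ ∑ i, pp x i := by
  by_contra hc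
  push Not at hc
  set p := ∑ i, u i - ∑ i, v i with hp
  set t := ∑ i, pp y i - ∑ i, pp x i with ht
  have h1 := hQ (p • pp x + t • u) (p • pp y + t • v) (by
    simp only [Pi.add_apply, Pi.smul_apply, smul_eq_mul, Finset.sum_add_distrib, ← Finset.mul_sum]
    rw [hp, ht]; ring)
  rw [qf_add] at h1
  have h2 := k.pos hF
  have h3 := w.qneg
  have h4 : bf F 1 (pp x) (pp y) u v ≤ 0 := by
    unfold bf
    rw [w.e1, dotProduct_mulVec u, w.e2, dotProduct_smul, smul_dotProduct, dotProduct_comm v]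
    have a1 : 0 ≤ pp x ⬝ᵥ u := Finset.sum_nonneg fun i _ => mul_nonneg (pp_nonneg _ _) (w.hu i)
    have a2 : 0 ≤ pp y ⬝ᵥ v := Finset.sum_nonneg fun i _ => mul_nonneg (pp_nonneg _ _) (w.hv i)
    simp only [smul_eq_mul]
    nlinarith [w.hs]
  have hp0 : 0 < p := by rw [hp]; linarith
  have ht0 : 0 < t := by rw [ht]; linarith
  have a1 : p ^ 2 * qf F 1 (pp x) (pp y) ≤ 0 := mul_nonpos_of_nonneg_of_nonpos (by positivity) h2
  have a2 : 2 * p * t * bf F 1 (pp x) (pp y) u v ≤ 0 := mul_nonpos_of_nonneg_of_nonpos (by positivity) h4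
  have a3 : t ^ 2 * qf F 1 u v < 0 := mul_neg_of_pos_of_neg (by positivity) h3
  linarith

/-- the non-psd case -/
lemma Perron.main {F : Matrix (Fin 4) (Fin 4) ℝ} (hF : ∀ i j, 0 ≤ F i j) (hF1 : ∀ i j, F i j ≤ 1)
    (hQ : ∀ x y : V4, ∑ i, x i = ∑ i, y i → 0 ≤ qf F 1 x y)
    (hE : ∀ i, ∃ x y, InK F x y ∧ x ≠ 0 ∧ x i = 0)
    {s : ℝ} {u v : V4} (w : Perron F s u v) (hw : ∑ i, v i < ∑ i, u i)
    (i l l' : Fin 4) (h1 : l ≠ i) (h2 : l' ≠ i)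
    (h3 : l ≠ l') (hl : 0 < u l) (hl' : 0 < u l') : ∃ p j, p ≠ i ∧ F p j = 1 := by
  obtain ⟨x, y, k, hx, hxi⟩ := hE i
  obtain ⟨p, hpi, ⟨hp, hq⟩ | ⟨hp, hq⟩⟩ := pattern u x w.hu i l l' h1 h2 h3 hl hl' hxi hx (w.orth k)
  · obtain ⟨j, hj⟩ := lemX hF hF1 k.hx p hp (by rw [← single_sum hp hq]; exact w.sign hF hQ hw k)
    exact ⟨p, j, hpi, hj⟩
  · obtain ⟨j, hj⟩ := lemX hF hF1 k.neg.hx p hp (by rw [← single_sum hp hq]; exact w.sign hF hQ hw k.neg)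
    exact ⟨p, j, hpi, hj⟩

lemma Perron.two {F : Matrix (Fin 4) (Fin 4) ℝ} 
    {s : ℝ} {u v : V4} (w : Perron F s u v) (hw : ∑ i, v i < ∑ i, u i) :
    ∃ l l', l ≠ l' ∧ 0 < u l ∧ 0 < u l' := by
  have hvv : 0 ≤ v ⬝ᵥ v := Finset.sum_nonneg fun i _ => mul_self_nonneg _
  have hs0 : 0 ≤ ∑ i, v i := Finset.sum_nonneg fun i _ => w.hv i
  refine two_positive w.hu (α := Real.sqrt (v ⬝ᵥ v)) (lt_of_le_of_lt ?_ hw) ?_ (Real.sqrt_nonneg _)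
  · rw [Real.sqrt_le_left hs0, sq]
    exact sq_le_sum w.hv
  · rw [Real.mul_self_sqrt hvv, w.norm_eq]

/-- swap -/
lemma qf_swap (F : Matrix (Fin 4) (Fin 4) ℝ) (s : ℝ) (x y : V4) : qf Fᵀ s y x = qf F s x y := by
  unfold qf
  rw [dotProduct_mulVec y, vecMul_transpose, dotProduct_comm (F *ᵥ y)]
  ring
lemma InK.swap {F : Matrix (Fin 4) (Fin 4) ℝ} {x y : V4} (k : InK F x y) : InK Fᵀ y x :=
  ⟨by rw [mulVec_transpose]; exact k.hy, by rw [vecMul_transpose]; exact k.hx, k.hs.symm⟩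
lemma Perron.swap {F : Matrix (Fin 4) (Fin 4) ℝ} {s : ℝ} {u v : V4} (w : Perron F s u v) :
    Perron Fᵀ s v u :=
  ⟨w.hs, w.hv, w.hu, by rw [mulVec_transpose]; exact w.e2, by rw [vecMul_transpose]; exact w.e1,
    by rw [← w.norm_eq]; exact w.nz⟩

structure Good (F : Matrix (Fin 4) (Fin 4) ℝ) : Prop where
  hF : ∀ i j, 0 ≤ F i j
  hF1 : ∀ i j, F i j ≤ 1
  hQ : ∀ x y : V4, ∑ i, x i = ∑ i, y i → 0 ≤ qf F 1 x y
  hK : ∀ φ : (V4 × V4) →ₗ[ℝ] (ℝ × ℝ), ∃ x y : V4, (x, y) ≠ 0 ∧ ∑ i, x i = ∑ i, y i ∧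
    qf F 1 x y = 0 ∧ φ (x, y) = 0

lemma Good.swap {F : Matrix (Fin 4) (Fin 4) ℝ} (g : Good F) : Good Fᵀ where
  hF := fun i j => g.hF j i
  hF1 := fun i j => g.hF1 j i
  hQ := fun x y h => by rw [qf_swap]; exact g.hQ _ _ h.symm
  hK := fun φ => by
    obtain ⟨x, y, h1, h2, h3, h4⟩ := g.hK (φ.comp (LinearEquiv.prodComm ℝ V4 V4).toLinearMap)
    refine ⟨y, x, ?_, h2.symm, by rw [qf_swap]; exact h3, h4⟩
    intro h; apply h1
    rw [Prod.mk_eq_zero] at h ⊢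
    exact h.symm

lemma InK.ne {F : Matrix (Fin 4) (Fin 4) ℝ} {x y : V4} (k : InK F x y) (h : (x, y) ≠ 0) : x ≠ 0 := by
  rintro rfl
  apply h
  rw [Prod.mk_eq_zero]
  refine ⟨rfl, ?_⟩
  rw [k.hy, zero_vecMul]

lemma Good.bf {F : Matrix (Fin 4) (Fin 4) ℝ} (g : Good F) {x y : V4} (hs : ∑ i, x i = ∑ i, y i)
    (h0 : qf F 1 x y = 0) (u v : V4) (huv : ∑ i, u i = ∑ i, v i) : bf F 1 x y u v = 0 := by
  apply qf_polar _ _ _ _ _ _ h0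
  intro t
  apply g.hQ
  simp only [Pi.add_apply, Pi.smul_apply, smul_eq_mul, Finset.sum_add_distrib, ← Finset.mul_sum, hs, huv]

lemma Good.E1 {F : Matrix (Fin 4) (Fin 4) ℝ} (g : Good F) (φ : (V4 × V4) →ₗ[ℝ] ℝ) :
    ∃ x y, InK F x y ∧ x ≠ 0 ∧ φ (x, y) = 0 := by
  let c : (V4 × V4) →ₗ[ℝ] ℝ :=
    (LinearMap.proj 0).comp (LinearMap.fst ℝ V4 V4) - (LinearMap.proj 0).comp ((mulVecLin F).comp (LinearMap.snd ℝ V4 V4))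
  obtain ⟨x, y, h1, h2, h3, h4⟩ := g.hK (c.prod φ)
  simp [LinearMap.prod_apply] at h4
  obtain ⟨hc, hφ⟩ := h4
  have hc' : x 0 = (F *ᵥ y) 0 := by
    simp [c] at hc
    linarith
  have b := fun i j => g.bf h2 h3 (Pi.single i 1) (Pi.single j 1) (by simp)
  have b' : ∀ i j, x i + y j - (x ᵥ* F) j - (F *ᵥ y) i = 0 := by
    intro i j
    have := b i j
    rw [_root_.bf, dotProduct_mulVec] at this
    simp only [dotProduct_single, single_dotProduct] at this
    linarith
  have hy : y = x ᵥ* F := by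
    ext j
    have := b' 0 j
    linarith
  have hx : x = F *ᵥ y := by
    ext i
    have := b' i 0
    have := congrFun hy 0
    linarith
  have k : InK F x y := ⟨hx, hy, h2⟩
  exact ⟨x, y, k, k.ne h1, hφ⟩

lemma psd_ker {F : Matrix (Fin 4) (Fin 4) ℝ} (hp : ∀ x y, 0 ≤ qf F 1 x y) {x y : V4}
    (h : qf F 1 x y ≤ 0) : x = F *ᵥ y ∧ y = x ᵥ* F := by
  have h0 := le_antisymm h (hp x y)
  obtain ⟨e1, e2⟩ := bf_kernel F 1 x y (fun u v => qf_polar _ _ _ _ _ _ h0 (fun t => hp _ _))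
  rw [e1, e2, one_smul, one_smul]
  exact ⟨rfl, rfl⟩

lemma Good.E2 {F : Matrix (Fin 4) (Fin 4) ℝ} (g : Good F) (hp : ∀ x y, 0 ≤ qf F 1 x y)
    (φ ψ : (V4 × V4) →ₗ[ℝ] ℝ) :
    ∃ x y, InK F x y ∧ x ≠ 0 ∧ φ (x, y) = 0 ∧ ψ (x, y) = 0 := by
  obtain ⟨x, y, h1, h2, h3, h4⟩ := g.hK (φ.prod ψ)
  simp [LinearMap.prod_apply] at h4
  obtain ⟨e1, e2⟩ := psd_ker hp h3.le
  have k : InK F x y := ⟨e1, e2, h2⟩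
  exact ⟨x, y, k, k.ne h1, h4⟩

def cx (i : Fin 4) : (V4 × V4) →ₗ[ℝ] ℝ := (LinearMap.proj i).comp (LinearMap.fst ℝ V4 V4)
def cy (i : Fin 4) : (V4 × V4) →ₗ[ℝ] ℝ := (LinearMap.proj i).comp (LinearMap.snd ℝ V4 V4)
lemma cx_apply (i) (x y : V4) : cx i (x, y) = x i := rfl
lemma cy_apply (i) (x y : V4) : cy i (x, y) = y i := rfl

lemma Good.hE {F : Matrix (Fin 4) (Fin 4) ℝ} (g : Good F) (i) : ∃ x y, InK F x y ∧ x ≠ 0 ∧ x i = 0 := 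
  g.E1 (cx i)

lemma other2 (l l' : Fin 4) : ∃ i, l ≠ i ∧ l' ≠ i := by
  revert l l'; decide

lemma Perron.ne_sum {F : Matrix (Fin 4) (Fin 4) ℝ} (g : Good F) {s : ℝ} {u v : V4} (w : Perron F s u v) :
    ∑ i, u i ≠ ∑ i, v i := fun h => by
  linarith [g.hQ u v h, w.qneg]

lemma not_psd {F : Matrix (Fin 4) (Fin 4) ℝ} (g : Good F) (h : ¬ ∀ x y, 0 ≤ qf F 1 x y) :
    ∃ s u v, Perron F s u v := by
  push Not at h
  obtain ⟨x, y, h⟩ := h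
  exact perron_exists g.hF h

/-- the pattern applied to vectors with zero coordinate sum -/
lemma pattern0 (x : V4) (i : Fin 4) (hxi : x i = 0) (hx : x ≠ 0) (hs : ∑ i, x i = 0) :
    ∃ p, p ≠ i ∧ ((0 < x p ∧ ∀ q, q ≠ p → x q ≤ 0) ∨
      (0 < (-x) p ∧ ∀ q, q ≠ p → (-x) q ≤ 0)) := by
  obtain ⟨l, l', h1, h2, h3⟩ : ∃ l l' : Fin 4, l ≠ i ∧ l' ≠ i ∧ l ≠ l' := by
    clear hxi; revert i; decide
  refine pattern (fun _ => 1) x (fun _ => zero_le_one) i l l' h1 h2 h3 zero_lt_one zero_lt_one hxi hx ?_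
  simpa [dotProduct] using hs

lemma sum_pp_neg (x : V4) (h : ∑ i, x i = 0) : ∑ i, pp (-x) i = ∑ i, pp x i := by
  simp only [pp_neg, Finset.sum_sub_distrib, h, sub_zero]

theorem phase1 {F : Matrix (Fin 4) (Fin 4) ℝ} (g : Good F) : ∃ i j, F i j = 1 := by
  by_cases hp : ∀ x y, 0 ≤ qf F 1 x y
  · let sm : (V4 × V4) →ₗ[ℝ] ℝ := ∑ i, cx i
    obtain ⟨x, y, k, hx, hx0, hxs⟩ := g.E2 hp (cx 0) sm
    have hxs : ∑ i, x i = 0 := by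
      simpa [sm, cx_apply] using hxs
    -- normalise the sign
    have key : ∀ x y : V4, InK F x y → ∀ i, (0 < x i ∧ ∀ q, q ≠ i → x q ≤ 0) → ∃ i j, F i j = 1 := by
      intro x y k i ⟨hi, hq⟩
      have hss := single_sum hi hq
      by_cases hle : ∑ j, pp y j ≤ x i
      · obtain ⟨j, hj⟩ := lemX g.hF g.hF1 k.hx i hi hle
        exact ⟨i, j, hj⟩
      push Not at hle
      obtain ⟨e1, e2⟩ := psd_ker hp (k.pos g.hF)
      have n1 : pp x ⬝ᵥ pp x = x i * x i := by
        rw [dotProduct, Finset.sum_eq_single i]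
        · simp [pp, hi.le]
        · intro b _ hb; simp [pp, hq b hb]
        · simp
      have n2 : pp y ⬝ᵥ pp y = pp x ⬝ᵥ pp x := by
        conv_lhs => rw [e2, ← e2, e2, ← dotProduct_mulVec, ← e2, ← e1]
      obtain ⟨j, j', hjj, hj, hj'⟩ := two_positive (pp_nonneg y) hle (by rw [n2, n1]) hi.le
      obtain ⟨q, q', hqq⟩ : ∃ q q' : Fin 4, ∀ m, m = j ∨ m = j' ∨ m = q ∨ m = q' := by
        clear hj hj'; revert j j'; decide
      obtain ⟨x2, y2, k2, hx2, hy1, hy2⟩ := g.E2 hp (cy q) (cy q')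
      rw [cy_apply] at hy1 hy2
      have hz : ∀ l, l ≠ i → ∀ m, 0 < pp y m → F l m = 0 := by
        intro l hl m hm
        have h1 : pp x l = 0 := by simp [pp, hq l hl]
        have h2 : pp x l = ∑ m, F l m * pp y m := congrFun e1 l
        rw [h1] at h2
        have h3 := (Finset.sum_eq_zero_iff_of_nonneg
          (fun m _ => mul_nonneg (g.hF l m) (pp_nonneg y m))).mp h2.symm m (Finset.mem_univ m)
        rcases mul_eq_zero.mp h3 with h | h
        · exact h
        · linarith
      have hx2l : ∀ l, l ≠ i → x2 l = 0 := by
        intro l hl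
        have h2 : x2 l = ∑ m, F l m * y2 m := congrFun k2.hx l
        rw [h2]
        apply Finset.sum_eq_zero
        intro m _
        rcases hqq m with h | h | h | h
        · rw [h, hz l hl j hj, zero_mul]
        · rw [h, hz l hl j' hj', zero_mul]
        · rw [h, hy1, mul_zero]
        · rw [h, hy2, mul_zero]
      have fin : ∀ x2 y2, InK F x2 y2 → (∀ l, l ≠ i → x2 l = 0) → 0 < x2 i → ∃ i j, F i j = 1 := by
        intro x2 y2 k2 hl hi2
        have hsum : ∑ l, x2 l = x2 i := Finset.sum_eq_single i (fun b _ hb => hl b hb) (by simp)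
        have hyn : ∀ m, 0 ≤ y2 m := by
          intro m
          have : y2 m = ∑ l, x2 l * F l m := congrFun k2.hy m
          rw [this]
          apply Finset.sum_nonneg
          intro l _
          by_cases h : l = i
          · rw [h]; exact mul_nonneg hi2.le (g.hF _ _)
          · rw [hl l h, zero_mul]
        have hpp : pp y2 = y2 := by funext m; simp [pp, hyn m]
        obtain ⟨j, hj⟩ := lemX g.hF g.hF1 k2.hx i hi2 (by rw [hpp, ← k2.hs, hsum])
        exact ⟨i, j, hj⟩
      rcases lt_trichotomy (x2 i) 0 with h | h | h
      · exact fin (-x2) (-y2) k2.neg (fun l hl => by simp [hx2l l hl]) (by simpa using h)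
      · exfalso; apply hx2; funext l
        by_cases hl : l = i
        · rw [hl, h]; rfl
        · exact hx2l l hl
      · exact fin x2 y2 k2 hx2l h
    obtain ⟨p, _, h | h⟩ := pattern0 x 0 hx0 hx hxs
    · exact key x y k p h
    · exact key _ _ k.neg p h
  · obtain ⟨s, u, v, w⟩ := not_psd g hp
    rcases lt_or_gt_of_ne (w.ne_sum g) with h | h
    · obtain ⟨l, l', a, b, c⟩ := w.swap.two h
      obtain ⟨i, h1, h2⟩ := other2 l l'
      obtain ⟨p, j, _, hj⟩ := w.swap.main g.swap.hF g.swap.hF1 g.swap.hQ g.swap.hE h i l l' h1 h2 a b c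
      exact ⟨j, p, hj⟩
    · obtain ⟨l, l', a, b, c⟩ := w.two h
      obtain ⟨i, h1, h2⟩ := other2 l l'
      obtain ⟨p, j, _, hj⟩ := w.main g.hF g.hF1 g.hQ g.hE h i l l' h1 h2 a b c
      exact ⟨p, j, hj⟩

lemma Perron.zero {F : Matrix (Fin 4) (Fin 4) ℝ} {s : ℝ} {u v : V4} (w : Perron F s u v)
    (i0 j0 : Fin 4) (h0 : F i0 j0 = 1) (hr : ∀ j, j ≠ j0 → F i0 j = 0) (hc : ∀ i, i ≠ i0 → F i j0 = 0) :
    u i0 = 0 := by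
  have h1 : (F *ᵥ v) i0 = v j0 := by
    rw [mulVec, dotProduct, Finset.sum_eq_single j0]
    · rw [h0, one_mul]
    · intro b _ hb; rw [hr b hb, zero_mul]
    · simp
  have h2 : (u ᵥ* F) j0 = u i0 := by
    rw [vecMul, dotProduct, Finset.sum_eq_single i0]
    · rw [h0, mul_one]
    · intro b _ hb; rw [hc b hb, mul_zero]
    · simp
  rw [w.e1] at h1
  rw [w.e2] at h2
  simp at h1 h2
  have := w.hs
  have := w.hu i0
  rw [← h1] at h2
  have h3 : (s * s - 1) * u i0 = 0 := by linarith
  rcases mul_eq_zero.mp h3 with h | h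
  · nlinarith [w.hs]
  · exact h

theorem phase2 {F : Matrix (Fin 4) (Fin 4) ℝ} (g : Good F) (i0 j0 : Fin 4) (h0 : F i0 j0 = 1)
    (hr : ∀ j, j ≠ j0 → F i0 j = 0) (hc : ∀ i, i ≠ i0 → F i j0 = 0) :
    ∃ i j, (i ≠ i0 ∨ j ≠ j0) ∧ F i j = 1 := by
  by_cases hp : ∀ x y, 0 ≤ qf F 1 x y
  · let sm : (V4 × V4) →ₗ[ℝ] ℝ := ∑ i, cx i
    obtain ⟨x, y, k, hx, hx0, hxs⟩ := g.E2 hp (cx i0) sm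
    have hxs : ∑ i, x i = 0 := by
      simpa [sm, cx_apply] using hxs
    rw [cx_apply] at hx0
    have hys : ∑ i, y i = 0 := by rw [← k.hs, hxs]
    have hy0 : y j0 = 0 := by
      have : y j0 = ∑ l, x l * F l j0 := congrFun k.hy j0
      rw [this]
      apply Finset.sum_eq_zero
      intro l _
      by_cases h : l = i0
      · rw [h, hx0, zero_mul]
      · rw [hc l h, mul_zero]
    have hy : y ≠ 0 := by
      intro h; apply hx; rw [k.hx, h, mulVec_zero]
    rcases le_total (∑ j, pp y j) (∑ j, pp x j) with hle | hle
    · obtain ⟨p, hpi, ⟨hp1, hp2⟩ | ⟨hp1, hp2⟩⟩ := pattern0 x i0 hx0 hx hxs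
      · obtain ⟨j, hj⟩ := lemX g.hF g.hF1 k.hx p hp1 (by rw [← single_sum hp1 hp2]; exact hle)
        exact ⟨p, j, Or.inl hpi, hj⟩
      · obtain ⟨j, hj⟩ := lemX g.hF g.hF1 k.neg.hx p hp1 (by
          rw [← single_sum hp1 hp2, sum_pp_neg _ hxs, sum_pp_neg _ hys]; exact hle)
        exact ⟨p, j, Or.inl hpi, hj⟩
    · obtain ⟨p, hpi, ⟨hp1, hp2⟩ | ⟨hp1, hp2⟩⟩ := pattern0 y j0 hy0 hy hys
      · obtain ⟨j, hj⟩ := lemX g.swap.hF g.swap.hF1 k.swap.hx p hp1 (by rw [← single_sum hp1 hp2]; exact hle)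
        exact ⟨j, p, Or.inr hpi, hj⟩
      · obtain ⟨j, hj⟩ := lemX g.swap.hF g.swap.hF1 k.swap.neg.hx p hp1 (by
          rw [← single_sum hp1 hp2, sum_pp_neg _ hxs, sum_pp_neg _ hys]; exact hle)
        exact ⟨j, p, Or.inr hpi, hj⟩
  · obtain ⟨s, u, v, w⟩ := not_psd g hp
    rcases lt_or_gt_of_ne (w.ne_sum g) with h | h
    · obtain ⟨l, l', a, b, c⟩ := w.swap.two h
      have hz := w.swap.zero j0 i0 h0 (fun j hj => hc j hj) (fun j hj => hr j hj)
      obtain ⟨p, j, hp, hj⟩ := w.swap.main g.swap.hF g.swap.hF1 g.swap.hQ g.swap.hE h j0 l l'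
        (by rintro rfl; linarith) (by rintro rfl; linarith) a b c
      exact ⟨j, p, Or.inr hp, hj⟩
    · obtain ⟨l, l', a, b, c⟩ := w.two h
      have hz := w.zero i0 j0 h0 hr hc
      obtain ⟨p, j, hp, hj⟩ := w.main g.hF g.hF1 g.hQ g.hE h i0 l l'
        (by rintro rfl; linarith) (by rintro rfl; linarith) a b c
      exact ⟨p, j, Or.inl hp, hj⟩

abbrev E4 := EuclideanSpace ℝ (Fin 4)

lemma qf_geom (a b : Fin 4 → E4) (ha : ∀ i j, i ≠ j → ‖a i - a j‖ = 1)
    (hb : ∀ i j, i ≠ j → ‖b i - b j‖ = 1) (x y : V4) (h : ∑ i, x i = ∑ i, y i) :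
    qf (Matrix.of fun i j => 1 - ‖a i - b j‖ ^ 2) 1 x y
      = 2 * ‖∑ i, x i • a i - ∑ i, y i • b i‖ ^ 2 := by
  have key := inner_sum_smul_sum_smul_of_sum_eq_zero (ι₁ := Fin 4 ⊕ Fin 4) (ι₂ := Fin 4 ⊕ Fin 4)
    (s₁ := Finset.univ) (s₂ := Finset.univ) (w₁ := Sum.elim x (-y)) (w₂ := Sum.elim x (-y))
    (Sum.elim a b) (by simp [h]) (Sum.elim a b) (by simp [h])
  have e : ∑ i, (Sum.elim x (-y)) i • (Sum.elim a b) i = ∑ i, x i • a i - ∑ i, y i • b i := by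
    simp [sub_eq_add_neg]
  rw [e, real_inner_self_eq_norm_sq] at key
  rw [key]
  have ha0 : ∀ i j, ‖a i - a j‖ = if i = j then 0 else 1 := by
    intro i j; split_ifs with h
    · simp [h]
    · exact ha i j h
  have hb0 : ∀ i j, ‖b i - b j‖ = if i = j then 0 else 1 := by
    intro i j; split_ifs with h
    · simp [h]
    · exact hb i j h
  have hab : ∀ i j, ‖b i - a j‖ = ‖a j - b i‖ := fun i j => norm_sub_rev _ _
  simp only [Fintype.sum_sum_type, Sum.elim_inl, Sum.elim_inr, ha0, hb0, hab]
  simp only [Fin.sum_univ_four] at h ⊢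
  simp [qf, mulVec, dotProduct, Fin.sum_univ_four]
  have h' : x 0 = y 0 + y 1 + y 2 + y 3 - x 1 - x 2 - x 3 := by linarith
  rw [h']
  ring

theorem good_geom (a b : Fin 4 → E4) (ha : ∀ i j, i ≠ j → ‖a i - a j‖ = 1)
    (hb : ∀ i j, i ≠ j → ‖b i - b j‖ = 1) (hab : ∀ i j, ‖a i - b j‖ ≤ 1) :
    Good (Matrix.of fun i j => 1 - ‖a i - b j‖ ^ 2) where
  hF i j := by
    have := hab i j
    simp only [of_apply]
    nlinarith [norm_nonneg (a i - b j)]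
  hF1 i j := by
    simp only [of_apply]
    nlinarith [norm_nonneg (a i - b j)]
  hQ x y h := by
    rw [qf_geom a b ha hb x y h]; positivity
  hK φ := by
    let L : (V4 × V4) →ₗ[ℝ] E4 :=
      (∑ i, (cx i).smulRight (a i)) - ∑ i, (cy i).smulRight (b i)
    let S : (V4 × V4) →ₗ[ℝ] ℝ := (∑ i, cx i) - ∑ i, cy i
    have : LinearMap.ker (L.prod (S.prod φ)) ≠ ⊥ := by
      apply LinearMap.ker_ne_bot_of_finrank_lt
      simp
    obtain ⟨⟨x, y⟩, h1, h2⟩ := Submodule.exists_mem_ne_zero_of_ne_bot this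
    simp [L, S, cx_apply, cy_apply] at h1
    obtain ⟨h1, h3, h4⟩ := h1
    have h3 : ∑ i, x i = ∑ i, y i := sub_eq_zero.mp h3
    refine ⟨x, y, h2, h3, ?_, h4⟩
    rw [qf_geom a b ha hb x y h3, h1]; simp

theorem share_aux (a b : Fin 4 → E4) (ha : ∀ i j, i ≠ j → ‖a i - a j‖ = 1)
    (hb : ∀ i j, i ≠ j → ‖b i - b j‖ = 1) (hab : ∀ i j, ‖a i - b j‖ ≤ 1) :
    ∃ i j k l, i ≠ k ∧ a i = b j ∧ a k = b l := by
  have g := good_geom a b ha hb hab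
  have one : ∀ i j, (Matrix.of fun i j => 1 - ‖a i - b j‖ ^ 2 : Matrix (Fin 4) (Fin 4) ℝ) i j = 1 → a i = b j := by
    intro i j h
    simpa [sub_eq_zero] using h
  obtain ⟨i, j, h⟩ := phase1 g
  have h1 := one i j h
  obtain ⟨k, l, h2, h3⟩ := phase2 g i j h
    (by intro j' hj'; simp [h1, hb j j' hj'.symm]) (by intro j' hj'; simp [← h1, ha j' i hj'])
  have h4 := one k l h3
  have inj : ∀ j l, b j = b l → j = l := by
    intro j l h
    by_contra h'
    have := hb j l h'
    rw [h] at this; simp at this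
  refine ⟨i, j, k, l, ?_, h1, h4⟩
  rintro rfl
  have := inj j l (h1.symm.trans h4)
  simp [this] at h2

theorem mem_us {X A : Finset E4} : A ∈ unitSimplices X ↔
    A ⊆ X ∧ A.card = 4 ∧ ∀ x ∈ A, ∀ y ∈ A, x ≠ y → ‖x - y‖ = 1 := by
  simp [unitSimplices, Finset.mem_powersetCard, and_assoc]

theorem two_share {X A B : Finset E4} (hX : ∀ x ∈ X, ∀ y ∈ X, ‖x - y‖ ≤ 1)
    (hA : A ∈ unitSimplices X) (hB : B ∈ unitSimplices X) : 2 ≤ (A ∩ B).card := by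
  obtain ⟨A1, A2, A3⟩ := mem_us.mp hA
  obtain ⟨B1, B2, B3⟩ := mem_us.mp hB
  let e := (Finset.equivFinOfCardEq A2).symm
  let f := (Finset.equivFinOfCardEq B2).symm
  obtain ⟨i, j, k, l, h1, h2, h3⟩ := share_aux (fun i => (e i : E4)) (fun i => (f i : E4))
    (fun i j h => A3 _ (e i).2 _ (e j).2 (fun h' => h (e.injective (Subtype.ext h'))))
    (fun i j h => B3 _ (f i).2 _ (f j).2 (fun h' => h (f.injective (Subtype.ext h'))))
    (fun i j => hX _ (A1 (e i).2) _ (B1 (f j).2))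
  have : 1 < (A ∩ B).card := by
    rw [Finset.one_lt_card]
    refine ⟨e i, ?_, e k, ?_, ?_⟩
    · rw [Finset.mem_inter]; exact ⟨(e i).2, by rw [h2]; exact (f j).2⟩
    · rw [Finset.mem_inter]; exact ⟨(e k).2, by rw [h3]; exact (f l).2⟩
    · exact fun h' => h1 (e.injective (Subtype.ext h'))
  omega

lemma affdep (P : Fin 6 → E4) : ∃ t : Fin 6 → ℝ, t ≠ 0 ∧ ∑ i, t i = 0 ∧
    ∃ κ : ℝ, ∀ w, ∑ i, t i * ‖w - P i‖ ^ 2 = κ := by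
  let L : (Fin 6 → ℝ) →ₗ[ℝ] E4 := ∑ i, (LinearMap.proj i : (Fin 6 → ℝ) →ₗ[ℝ] ℝ).smulRight (P i)
  let S : (Fin 6 → ℝ) →ₗ[ℝ] ℝ := ∑ i, LinearMap.proj i
  have : LinearMap.ker (L.prod S) ≠ ⊥ := by
    apply LinearMap.ker_ne_bot_of_finrank_lt
    simp
  obtain ⟨t, h1, h2⟩ := Submodule.exists_mem_ne_zero_of_ne_bot this
  simp [L, S] at h1
  refine ⟨t, h2, h1.2, ∑ i, t i * ‖P i‖ ^ 2, fun w => ?_⟩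
  have e : ∀ i, t i * ‖w - P i‖ ^ 2 = t i * ‖w‖ ^ 2 - 2 * inner ℝ w (t i • P i) + t i * ‖P i‖ ^ 2 := by
    intro i
    rw [norm_sub_sq_real, real_inner_smul_right]; ring
  simp only [e, Finset.sum_add_distrib, Finset.sum_sub_distrib, ← Finset.mul_sum, ← Finset.sum_mul,
    ← inner_sum, h1.1, h1.2]
  simp

lemma dsq {x y : E4} (h : ‖x - y‖ ≤ 1) : ‖x - y‖ ^ 2 ≤ 1 := by
  nlinarith [norm_nonneg (x - y)]

lemma leaf_core {α β γ κ u v s X Y Z T : ℝ} (hκ : 0 < κ) (hβ : β < 0)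
    (hu : 0 < u) (hv : 0 < v) (hs : 0 < s) (h0 : α + β + γ = 3 * κ)
    (h1 : β * u + γ * v = 4 * κ) (h3 : α * v + β * s = 4 * κ)
    (hX : X ≤ 1) (hY : Y = 1) (hZ : Z ≤ 1) (hw : α * X + β * Y + γ * Z = κ * (1 + T)) : T ≤ 2 := by
  have hα : 0 < α := by
    by_contra h
    nlinarith [mul_neg_of_neg_of_pos hβ hs]
  have hγ : 0 < γ := by
    by_contra h
    nlinarith [mul_neg_of_neg_of_pos hβ hu]
  subst hY
  have : κ * (1 + T) ≤ κ * 3 := by nlinarith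
  have := le_of_mul_le_mul_left this hκ
  linarith

lemma leaf {a b c x y z : E4} (hab : ‖a - b‖ = 1) (hac : ‖a - c‖ = 1) (hbc : ‖b - c‖ = 1)
    (hxy : x ≠ y) (hxz : x ≠ z) (hyz : y ≠ z)
    (dxy : ‖x - y‖ ≤ 1) (dxz : ‖x - z‖ ≤ 1) (dyz : ‖y - z‖ ≤ 1)
    (xa : ‖x - a‖ = 1) (xb : ‖x - b‖ = 1) (xc : ‖x - c‖ = 1)
    (ya : ‖y - a‖ = 1) (yb : ‖y - b‖ = 1) (yc : ‖y - c‖ = 1)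
    (za : ‖z - a‖ = 1) (zb : ‖z - b‖ = 1) (zc : ‖z - c‖ = 1) :
    ∃ q, (q = x ∨ q = y ∨ q = z) ∧ ∀ w, ‖w - x‖ ≤ 1 → ‖w - y‖ ≤ 1 → ‖w - z‖ ≤ 1 → ‖w - q‖ = 1 →
      ‖w - a‖ ^ 2 + ‖w - b‖ ^ 2 + ‖w - c‖ ^ 2 ≤ 2 := by
  have hu : 0 < ‖x - y‖ ^ 2 := by have := norm_pos_iff.mpr (sub_ne_zero.mpr hxy); positivity
  have hv : 0 < ‖x - z‖ ^ 2 := by have := norm_pos_iff.mpr (sub_ne_zero.mpr hxz); positivity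
  have hs : 0 < ‖y - z‖ ^ 2 := by have := norm_pos_iff.mpr (sub_ne_zero.mpr hyz); positivity
  have hu1 := dsq dxy
  have hv1 := dsq dxz
  have hs1 := dsq dyz
  obtain ⟨t, ht, hsum, κ, hk⟩ := affdep ![x, y, z, a, b, c]
  wlog hκ : 0 ≤ κ generalizing t κ
  · refine this (-t) (by simpa using ht) (by simp [hsum]) (-κ) ?_ (by linarith)
    intro w
    simp [hk w]
  have key : ∀ w, t 0 * ‖w - x‖ ^ 2 + t 1 * ‖w - y‖ ^ 2 + t 2 * ‖w - z‖ ^ 2 + t 3 * ‖w - a‖ ^ 2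
      + t 4 * ‖w - b‖ ^ 2 + t 5 * ‖w - c‖ ^ 2 = κ := by
    intro w
    rw [← hk w]
    simp [Fin.sum_univ_succ]
    ring_nf
  have hsum : t 0 + t 1 + t 2 + t 3 + t 4 + t 5 = 0 := by
    rw [← hsum]; simp [Fin.sum_univ_succ]; ring_nf
  have ka := key a
  have kb := key b
  have kc := key c
  have kx := key x
  have ky := key y
  have kz := key z
  rw [norm_sub_rev a x, norm_sub_rev a y, norm_sub_rev a z, xa, ya, za, hab, hac] at ka
  rw [norm_sub_rev b x, norm_sub_rev b y, norm_sub_rev b z, norm_sub_rev b a, xb, yb, zb, hab, hbc] at kb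
  rw [norm_sub_rev c x, norm_sub_rev c y, norm_sub_rev c z, norm_sub_rev c a, norm_sub_rev c b, xc, yc, zc, hac, hbc] at kc
  rw [xa, xb, xc] at kx
  rw [ya, yb, yc, norm_sub_rev y x] at ky
  rw [za, zb, zc, norm_sub_rev z x, norm_sub_rev z y] at kz
  simp only [sub_self, norm_zero] at ka kb kc kx ky kz
  generalize ‖x - y‖ ^ 2 = u at *
  generalize ‖x - z‖ ^ 2 = v at *
  generalize ‖y - z‖ ^ 2 = s at *
  have ta : t 3 = -κ := by linarith
  have tb : t 4 = -κ := by linarith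
  have tc : t 5 = -κ := by linarith
  have h0 : t 0 + t 1 + t 2 = 3 * κ := by linarith
  have kx : t 1 * u + t 2 * v = 4 * κ := by linarith
  have ky : t 0 * u + t 2 * s = 4 * κ := by linarith
  have kz : t 0 * v + t 1 * s = 4 * κ := by linarith
  have hκ0 : 0 < κ := by
    rcases hκ.lt_or_eq with h | h
    · exact h
    · exfalso
      subst h
      have e : t 0 * (2 * u * v) = 0 := by linear_combination v * ky + u * kz - s * kx
      have e0 : t 0 = 0 := by
        rcases mul_eq_zero.mp e with h | h
        · exact h
        · have : 0 < 2 * u * v := by positivity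
          linarith
      have e1 : t 1 = 0 := by
        have : t 1 * s = 0 := by rw [e0] at kz; linarith
        exact (mul_eq_zero.mp this).resolve_right hs.ne'
      have e2 : t 2 = 0 := by linarith
      apply ht
      ext i
      fin_cases i <;> simp [*]
  have key2 : ∀ w, t 0 * ‖w - x‖ ^ 2 + t 1 * ‖w - y‖ ^ 2 + t 2 * ‖w - z‖ ^ 2 =
      κ * (1 + (‖w - a‖ ^ 2 + ‖w - b‖ ^ 2 + ‖w - c‖ ^ 2)) := by
    intro w
    have := key w
    rw [ta, tb, tc] at this
    linarith
  have hneg : t 0 < 0 ∨ t 1 < 0 ∨ t 2 < 0 := by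
    by_contra! h
    obtain ⟨h1, h2, h3⟩ := h
    nlinarith
  rcases hneg with h | h | h
  · refine ⟨x, Or.inl rfl, fun w wx wy wz hw => ?_⟩
    exact leaf_core (Y := ‖w - x‖ ^ 2) (α := t 1) (β := t 0) (γ := t 2) (u := u) (v := s) (s := v) hκ0 h hu hs hv (by linarith) (by linarith) (by linarith) (dsq wy) (by rw [hw]; norm_num) (dsq wz) (by rw [← key2 w]; ring)
  · refine ⟨y, Or.inr (Or.inl rfl), fun w wx wy wz hw => ?_⟩
    exact leaf_core (Y := ‖w - y‖ ^ 2) (α := t 0) (β := t 1) (γ := t 2) (u := u) (v := v) (s := s) hκ0 h hu hv hs (by linarith) (by linarith) (by linarith) (dsq wx) (by rw [hw]; norm_num) (dsq wz) (by rw [← key2 w])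
  · refine ⟨z, Or.inr (Or.inr rfl), fun w wx wy wz hw => ?_⟩
    exact leaf_core (Y := ‖w - z‖ ^ 2) (α := t 0) (β := t 2) (γ := t 1) (u := v) (v := u) (s := s) hκ0 h hv hu hs (by linarith) (by linarith) (by linarith) (dsq wx) (by rw [hw]; norm_num) (dsq wy) (by rw [← key2 w]; ring)

lemma leaf_T {X T : Finset E4} (hX : ∀ x ∈ X, ∀ y ∈ X, ‖x - y‖ ≤ 1) (hT : T.card = 3)
    {x y z : E4} (hx : x ∉ T) (hy : y ∉ T) (hz : z ∉ T) (hxy : x ≠ y) (hxz : x ≠ z) (hyz : y ≠ z)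
    (hx' : insert x T ∈ unitSimplices X) (hy' : insert y T ∈ unitSimplices X)
    (hz' : insert z T ∈ unitSimplices X) :
    ∃ q, q ∉ T ∧ q ∈ X ∧ (∃ p, p ≠ q ∧ insert p T ∈ unitSimplices X ∧
      ∀ D ∈ unitSimplices X, q ∈ D → p ∉ D) ∧
      ∀ w ∈ X, ‖w - q‖ = 1 → ∑ t ∈ T, ‖w - t‖ ^ 2 ≤ 2 := by
  obtain ⟨a, b, c, hab, hac, hbc, rfl⟩ := Finset.card_eq_three.mp hT
  obtain ⟨x1, -, x3⟩ := mem_us.mp hx'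
  obtain ⟨y1, -, y3⟩ := mem_us.mp hy'
  obtain ⟨z1, -, z3⟩ := mem_us.mp hz'
  have hxX : x ∈ X := x1 (by simp)
  have hyX : y ∈ X := y1 (by simp)
  have hzX : z ∈ X := z1 (by simp)
  simp only [Finset.mem_insert, Finset.mem_singleton, not_or] at hx hy hz
  have xd : ∀ t ∈ ({a, b, c} : Finset E4), ‖x - t‖ = 1 := fun t ht => x3 x (by simp) t (Finset.mem_insert_of_mem ht) (by rintro rfl; simp at ht; tauto)
  have yd : ∀ t ∈ ({a, b, c} : Finset E4), ‖y - t‖ = 1 := fun t ht => y3 y (by simp) t (Finset.mem_insert_of_mem ht) (by rintro rfl; simp at ht; tauto)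
  have zd : ∀ t ∈ ({a, b, c} : Finset E4), ‖z - t‖ = 1 := fun t ht => z3 z (by simp) t (Finset.mem_insert_of_mem ht) (by rintro rfl; simp at ht; tauto)
  obtain ⟨q, hq, h⟩ := leaf (x3 a (by simp) b (by simp) hab) (x3 a (by simp) c (by simp) hac)
    (x3 b (by simp) c (by simp) hbc) hxy hxz hyz (hX _ hxX _ hyX) (hX _ hxX _ hzX) (hX _ hyX _ hzX)
    (xd a (by simp)) (xd b (by simp)) (xd c (by simp))
    (yd a (by simp)) (yd b (by simp)) (yd c (by simp))
    (zd a (by simp)) (zd b (by simp)) (zd c (by simp))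
  have hqT : q ∉ ({a, b, c} : Finset E4) ∧ q ∈ X := by
    simp only [Finset.mem_insert, Finset.mem_singleton, not_or]
    rcases hq with rfl | rfl | rfl
    · exact ⟨hx, hxX⟩
    · exact ⟨hy, hyX⟩
    · exact ⟨hz, hzX⟩
  have hs : ∀ w : E4, ∑ t ∈ ({a, b, c} : Finset E4), ‖w - t‖ ^ 2 = ‖w - a‖ ^ 2 + ‖w - b‖ ^ 2 + ‖w - c‖ ^ 2 := by
    intro w
    rw [Finset.sum_insert (by simp [hab, hac]), Finset.sum_insert (by simp [hbc]), Finset.sum_singleton]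
    ring
  have hw : ∀ w ∈ X, ‖w - q‖ = 1 → ∑ t ∈ ({a, b, c} : Finset E4), ‖w - t‖ ^ 2 ≤ 2 := by
    intro w hw h1
    rw [hs]
    exact h w (hX _ hw _ hxX) (hX _ hw _ hyX) (hX _ hw _ hzX) h1
  refine ⟨q, hqT.1, hqT.2, ?_, hw⟩
  have main : ∀ p, p ≠ q → p ∈ X → (∀ t ∈ ({a, b, c} : Finset E4), ‖p - t‖ = 1) →
      ∀ D ∈ unitSimplices X, q ∈ D → p ∉ D := by
    intro p hpq hp hd D hD hqD hpD
    have := hw p hp ((mem_us.mp hD).2.2 p hpD q hqD hpq)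
    rw [hs, hd a (by simp), hd b (by simp), hd c (by simp)] at this
    norm_num at this
  by_cases hxq : x = q
  · exact ⟨y, by rw [← hxq]; exact hxy.symm, hy', main y (by rw [← hxq]; exact hxy.symm) hyX yd⟩
  · exact ⟨x, hxq, hx', main x hxq hxX xd⟩

lemma leaf_unique {X T : Finset E4} (hX : ∀ x ∈ X, ∀ y ∈ X, ‖x - y‖ ≤ 1) (hT : T.card = 3)
    {x y z : E4} (hx : x ∉ T) (hy : y ∉ T) (hz : z ∉ T) (hxy : x ≠ y) (hxz : x ≠ z) (hyz : y ≠ z)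
    (hx' : insert x T ∈ unitSimplices X) (hy' : insert y T ∈ unitSimplices X)
    (hz' : insert z T ∈ unitSimplices X) :
    ∃ q ∈ X, ∀ D ∈ unitSimplices X, q ∈ D → D = insert q T := by
  obtain ⟨q, hqT, hqX, ⟨p, hpq, hp, hpD⟩, hw⟩ := leaf_T hX hT hx hy hz hxy hxz hyz hx' hy' hz'
  refine ⟨q, hqX, fun D hD hqD => ?_⟩
  obtain ⟨D1, D2, D3⟩ := mem_us.mp hD
  have h2 := two_share hX hD hp
  rw [Finset.inter_insert_of_notMem (hpD D hD hqD)] at h2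
  by_cases hTD : T ⊆ D
  · symm
    apply Finset.eq_of_subset_of_card_le
    · exact Finset.insert_subset hqD hTD
    · rw [Finset.card_insert_of_notMem hqT]; omega
  · exfalso
    obtain ⟨r, hrT, hrD⟩ := Finset.not_subset.mp hTD
    have hlt : (D ∩ T).card < 3 := by
      rw [← hT]
      apply Finset.card_lt_card
      refine ⟨Finset.inter_subset_right, fun h => hrD (Finset.mem_inter.mp (h hrT)).1⟩
    have hDT : 1 < (D \ T).card := by
      have := Finset.card_sdiff_add_card_inter D T
      omega
    obtain ⟨w, hwD, hwq⟩ := Finset.exists_mem_ne hDT q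
    rw [Finset.mem_sdiff] at hwD
    have h3 := hw w (D1 hwD.1) (D3 w hwD.1 q hqD hwq)
    have h4 : ∑ t ∈ insert r (D ∩ T), ‖w - t‖ ^ 2 ≤ ∑ t ∈ T, ‖w - t‖ ^ 2 := by
      apply Finset.sum_le_sum_of_subset_of_nonneg
      · exact Finset.insert_subset hrT Finset.inter_subset_right
      · intros; positivity
    rw [Finset.sum_insert (by simp [hrD])] at h4
    have h5 : ∑ t ∈ D ∩ T, ‖w - t‖ ^ 2 = ∑ t ∈ D ∩ T, 1 := by
      apply Finset.sum_congr rfl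
      intro t ht
      rw [Finset.mem_inter] at ht
      rw [D3 w hwD.1 t ht.1 (by rintro rfl; exact hwD.2 ht.2)]; norm_num
    rw [h5] at h4
    simp at h4
    have h6 : (2 : ℝ) ≤ (D ∩ T).card := by exact_mod_cast h2
    have h7 : ‖w - r‖ ^ 2 = 0 := le_antisymm (by linarith) (by positivity)
    have : w = r := by simpa [sub_eq_zero] using h7
    exact hwD.2 (this ▸ hrT)

lemma ne_of_card4 {a b c d : E4} (h : ({a, b, c, d} : Finset E4).card = 4) :
    a ≠ b ∧ a ≠ c ∧ a ≠ d ∧ b ≠ c ∧ b ≠ d ∧ c ≠ d := by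
  have h3 : ∀ x y z : E4, ({x, y, z} : Finset E4).card < 4 := fun x y z =>
    lt_of_le_of_lt Finset.card_le_three (by norm_num)
  refine ⟨?_, ?_, ?_, ?_, ?_, ?_⟩ <;> rintro rfl
  · have := h3 a c d; simp at h; omega
  · have := h3 a b d
    rw [Finset.insert_comm b, Finset.insert_eq_of_mem (by simp)] at h; omega
  · have := h3 a b c
    rw [Finset.insert_eq_of_mem (by simp)] at h; have := h3 b c a; omega
  · have := h3 a b d; simp at h; omega
  · have := h3 a b c
    rw [Finset.insert_eq_of_mem (a := b) (by simp)] at h; have := h3 a c b; omega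
  · have := h3 a b c; simp at h; omega

lemma card4 {a b c d : E4} (h1 : a ≠ b) (h2 : a ≠ c) (h3 : a ≠ d) (h4 : b ≠ c) (h5 : b ≠ d)
    (h6 : c ≠ d) : ({a, b, c, d} : Finset E4).card = 4 := by
  rw [Finset.card_insert_of_notMem (by simp [*]), Finset.card_insert_of_notMem (by simp [*]),
    Finset.card_insert_of_notMem (by simp [*]), Finset.card_singleton]

def Ad (X : Finset E4) (p q : E4) : Prop := p ∈ X ∧ q ∈ X ∧ ‖p - q‖ = 1

lemma Ad.symm {X : Finset E4} {p q : E4} (h : Ad X p q) : Ad X q p :=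
  ⟨h.2.1, h.1, by rw [norm_sub_rev]; exact h.2.2⟩

lemma Ad.ne {X : Finset E4} {p q : E4} (h : Ad X p q) : p ≠ q := by
  rintro rfl
  have := h.2.2
  simp at this

lemma ad_of {X D : Finset E4} (hD : D ∈ unitSimplices X) {p q : E4} (hp : p ∈ D) (hq : q ∈ D)
    (h : p ≠ q) : Ad X p q := by
  obtain ⟨D1, D2, D3⟩ := mem_us.mp hD
  exact ⟨D1 hp, D1 hq, D3 p hp q hq h⟩

lemma mk_clique {X : Finset E4} {a b c d : E4} (h1 : Ad X a b) (h2 : Ad X a c) (h3 : Ad X a d)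
    (h4 : Ad X b c) (h5 : Ad X b d) (h6 : Ad X c d) : {a, b, c, d} ∈ unitSimplices X := by
  rw [mem_us]
  refine ⟨?_, card4 h1.ne h2.ne h3.ne h4.ne h5.ne h6.ne, ?_⟩
  · intro x hx
    simp only [Finset.mem_insert, Finset.mem_singleton] at hx
    rcases hx with rfl | rfl | rfl | rfl
    · exact h1.1
    · exact h1.2.1
    · exact h2.2.1
    · exact h3.2.1
  · intro x hx y hy hxy
    simp only [Finset.mem_insert, Finset.mem_singleton] at hx hy
    rcases hx with rfl | rfl | rfl | rfl <;> rcases hy with rfl | rfl | rfl | rfl <;>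
    first
      | exact absurd rfl hxy
      | exact h1.2.2
      | exact h2.2.2
      | exact h3.2.2
      | exact h4.2.2
      | exact h5.2.2
      | exact h6.2.2
      | exact h1.symm.2.2
      | exact h2.symm.2.2
      | exact h3.symm.2.2
      | exact h4.symm.2.2
      | exact h5.symm.2.2
      | exact h6.symm.2.2

/-- every triple lies in at most two cliques -/
def Tri (X : Finset E4) : Prop :=
  ∀ T : Finset E4, T.card = 3 → ((unitSimplices X).filter (fun D => T ⊆ D)).card ≤ 2

lemma Tri.three {X : Finset E4} (h : Tri X) {T D E G : Finset E4} (hT : T.card = 3)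
    (hD : D ∈ unitSimplices X) (hE : E ∈ unitSimplices X) (hG : G ∈ unitSimplices X)
    (tD : T ⊆ D) (tE : T ⊆ E) (tG : T ⊆ G) (h1 : D ≠ E) (h2 : D ≠ G) (h3 : E ≠ G) : False := by
  have h4 := h T hT
  have : 2 < ((unitSimplices X).filter (fun D => T ⊆ D)).card := by
    rw [Finset.two_lt_card]
    exact ⟨D, by simp [*], E, by simp [*], G, by simp [*], h1, h2, h3⟩
  omega

lemma ext_of {T D : Finset E4} (hT : T.card = 3) (hD : D.card = 4) (h : T ⊆ D) :
    ∃ x, x ∉ T ∧ insert x T = D := by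
  have : (D \ T).card = 1 := by rw [Finset.card_sdiff_of_subset h]; omega
  obtain ⟨x, hx⟩ := Finset.card_eq_one.mp this
  have hxm : x ∈ D \ T := by simp [hx]
  rw [Finset.mem_sdiff] at hxm
  refine ⟨x, hxm.2, Finset.eq_of_subset_of_card_le (Finset.insert_subset hxm.1 h) ?_⟩
  rw [Finset.card_insert_of_notMem hxm.2]; omega

lemma not_tri {X : Finset E4} (hX : ∀ x ∈ X, ∀ y ∈ X, ‖x - y‖ ≤ 1) (h : ¬ Tri X) :
    ∃ q ∈ X, ∃ T, ∀ D ∈ unitSimplices X, q ∈ D → D = T := by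
  unfold Tri at h
  push Not at h
  obtain ⟨T, hT, h⟩ := h
  rw [Finset.two_lt_card] at h
  obtain ⟨D, hD, E, hE, G, hG, h1, h2, h3⟩ := h
  rw [Finset.mem_filter] at hD hE hG
  obtain ⟨x, hx, rfl⟩ := ext_of hT (mem_us.mp hD.1).2.1 hD.2
  obtain ⟨y, hy, rfl⟩ := ext_of hT (mem_us.mp hE.1).2.1 hE.2
  obtain ⟨z, hz, rfl⟩ := ext_of hT (mem_us.mp hG.1).2.1 hG.2
  obtain ⟨q, hq, hh⟩ := leaf_unique hX hT hx hy hz (by rintro rfl; exact h1 rfl)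
    (by rintro rfl; exact h2 rfl) (by rintro rfl; exact h3 rfl) hD.1 hE.1 hG.1
  exact ⟨q, hq, _, hh⟩

lemma Tri.pts {X : Finset E4} (h : Tri X) {a b c x y z : E4} (hab : Ad X a b) (hac : Ad X a c)
    (hbc : Ad X b c) (xa : Ad X a x) (xb : Ad X b x) (xc : Ad X c x)
    (ya : Ad X a y) (yb : Ad X b y) (yc : Ad X c y) (za : Ad X a z) (zb : Ad X b z) (zc : Ad X c z)
    (hxy : x ≠ y) (hxz : x ≠ z) (hyz : y ≠ z) : False := by
  have hne : ∀ p q, p ≠ a → p ≠ b → p ≠ c → p ≠ q → ({a, b, c, p} : Finset E4) ≠ {a, b, c, q} := by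
    intro p q h1 h2 h3 h4 h
    have : p ∈ ({a, b, c, q} : Finset E4) := by rw [← h]; simp
    simp [h1, h2, h3, h4] at this
  refine h.three (T := {a, b, c}) ?_ (mk_clique hab hac xa hbc xb xc) (mk_clique hab hac ya hbc yb yc)
    (mk_clique hab hac za hbc zb zc) ?_ ?_ ?_ (hne _ _ xa.ne.symm xb.ne.symm xc.ne.symm hxy)
    (hne _ _ xa.ne.symm xb.ne.symm xc.ne.symm hxz) (hne _ _ ya.ne.symm yb.ne.symm yc.ne.symm hyz)
  · exact Finset.card_eq_three.mpr ⟨a, b, c, hab.ne, hac.ne, hbc.ne, rfl⟩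
  all_goals
    intro p hp
    simp only [Finset.mem_insert, Finset.mem_singleton] at hp ⊢
    tauto

lemma caseI {X : Finset E4} (h : Tri X) {a b : E4} (hab : a ≠ b)
    (hD : ∀ D ∈ unitSimplices X, a ∈ D ∧ b ∈ D) : (unitSimplices X).card ≤ X.card := by
  have := Finset.card_mul_le_card_mul (s := unitSimplices X) (t := X \ {a, b}) (m := 2) (n := 2)
    (fun D x => x ∈ D) ?_ ?_
  · have h2 : (X \ {a, b}).card ≤ X.card := Finset.card_le_card Finset.sdiff_subset
    omega
  · intro D hD'
    obtain ⟨D1, D2, D3⟩ := mem_us.mp hD'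
    obtain ⟨h1, h2⟩ := hD D hD'
    have : D \ {a, b} ⊆ (X \ {a, b}).bipartiteAbove (fun D x => x ∈ D) D := by
      intro x hx
      rw [Finset.mem_sdiff] at hx
      rw [Finset.mem_bipartiteAbove, Finset.mem_sdiff]
      exact ⟨⟨D1 hx.1, hx.2⟩, hx.1⟩
    have h3 := Finset.card_le_card this
    rw [Finset.card_sdiff_of_subset (by simp [Finset.insert_subset_iff, h1, h2]), D2,
      Finset.card_pair hab] at h3
    exact h3
  · intro x hx
    rw [Finset.mem_sdiff] at hx
    simp only [Finset.mem_insert, Finset.mem_singleton, not_or] at hx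
    refine le_trans (Finset.card_le_card ?_) (h {a, b, x} ?_)
    · intro D hD'
      rw [Finset.mem_bipartiteBelow] at hD'
      obtain ⟨h1, h2⟩ := hD D hD'.1
      simp [Finset.insert_subset_iff, h1, h2, hD'.1, hD'.2]
    · exact Finset.card_eq_three.mpr ⟨a, b, x, hab, fun h => hx.2.1 h.symm, fun h => hx.2.2 h.symm, rfl⟩

lemma caseII {X S : Finset E4} (h : Tri X) (hS : S ∈ unitSimplices X)
    (hD : ∀ D ∈ unitSimplices X, 3 ≤ (D ∩ S).card) : (unitSimplices X).card ≤ 5 := by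
  have hS4 := (mem_us.mp hS).2.1
  have key : ∀ D ∈ (unitSimplices X).erase S, (D ∩ S).card = 3 := by
    intro D hD'
    rw [Finset.mem_erase] at hD'
    have h1 := hD D hD'.2
    have h2 := (mem_us.mp hD'.2).2.1
    have h3 : (D ∩ S).card ≤ 4 := (Finset.card_le_card Finset.inter_subset_right).trans hS4.le
    by_contra h4
    have h5 : (D ∩ S).card = 4 := by omega
    have h6 : D ∩ S = D := Finset.eq_of_subset_of_card_le Finset.inter_subset_left (by omega)
    have h7 : D ∩ S = S := Finset.eq_of_subset_of_card_le Finset.inter_subset_right (by omega)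
    exact hD'.1 (h6.symm.trans h7)
  have h1 : ((unitSimplices X).erase S).card ≤ (S.powersetCard 3).card := by
    apply Finset.card_le_card_of_injOn (fun D => D ∩ S)
    · intro D hD'
      simp only [Finset.mem_coe, Finset.mem_powersetCard]
      exact ⟨Finset.inter_subset_right, key D hD'⟩
    · intro D hD' D' hD'' e
      simp only at e
      by_contra hne
      have k := key D hD'
      simp only [Finset.mem_coe, Finset.mem_erase] at hD' hD''
      exact h.three k hD'.2 hD''.2 hS Finset.inter_subset_left
        (by rw [e]; exact Finset.inter_subset_left) Finset.inter_subset_right hne hD'.1 hD''.1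
  rw [Finset.card_powersetCard, hS4, Finset.card_erase_of_mem hS] at h1
  have : Nat.choose 4 3 = 4 := by decide
  omega

lemma inter4 (D : Finset E4) {a b c d : E4} (h1 : a ≠ b) (h2 : a ≠ c) (h3 : a ≠ d) (h4 : b ≠ c) (h5 : b ≠ d)
    (h6 : c ≠ d) : (D ∩ {a, b, c, d}).card = (if a ∈ D then 1 else 0) + (if b ∈ D then 1 else 0)
      + (if c ∈ D then 1 else 0) + (if d ∈ D then 1 else 0) := by
  have : D ∩ {a, b, c, d} = ({a, b, c, d} : Finset E4).filter (fun x => x ∈ D) := by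
    ext x; simp only [Finset.mem_inter, Finset.mem_filter]; tauto
  rw [this, Finset.card_filter, Finset.sum_insert (by simp [*]), Finset.sum_insert (by simp [*]),
    Finset.sum_insert (by simp [*]), Finset.sum_singleton]
  ring

lemma ind1 (p : Prop) [Decidable p] : (if p then 1 else 0 : ℕ) ≤ 1 := by split_ifs <;> omega

lemma ind2 {p q : Prop} [Decidable p] [Decidable q] (h : ¬ (p ∧ q)) :
    (if p then 1 else 0 : ℕ) + (if q then 1 else 0) ≤ 1 := by
  split_ifs with h1 h2
  · exact absurd ⟨h1, h2⟩ h
  all_goals omega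

lemma caseIII {X : Finset E4} (hX : ∀ x ∈ X, ∀ y ∈ X, ‖x - y‖ ≤ 1) (h : Tri X) {a b c d e f : E4}
    (hA : {a, b, c, d} ∈ unitSimplices X) (hB : {a, b, e, f} ∈ unitSimplices X)
    (hce : c ≠ e) (hcf : c ≠ f) (hde : d ≠ e) (hdf : d ≠ f)
    {C : Finset E4} (hC : C ∈ unitSimplices X) (aC : a ∈ C) (bC : b ∉ C) (cC : c ∈ C) (eC : e ∈ C) :
    (unitSimplices X).card ≤ 5 := by
  obtain ⟨nab, nac, nad, nbc, nbd, ncd⟩ := ne_of_card4 (mem_us.mp hA).2.1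
  obtain ⟨-, nae, naf, nbe, nbf, nef⟩ := ne_of_card4 (mem_us.mp hB).2.1
  have ab := ad_of hA (p := a) (q := b) (by simp) (by simp) nab
  have ac := ad_of hA (p := a) (q := c) (by simp) (by simp) nac
  have ad := ad_of hA (p := a) (q := d) (by simp) (by simp) nad
  have bc := ad_of hA (p := b) (q := c) (by simp) (by simp) nbc
  have bd := ad_of hA (p := b) (q := d) (by simp) (by simp) nbd
  have cd := ad_of hA (p := c) (q := d) (by simp) (by simp) ncd
  have ae := ad_of hB (p := a) (q := e) (by simp) (by simp) nae
  have af := ad_of hB (p := a) (q := f) (by simp) (by simp) naf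
  have be := ad_of hB (p := b) (q := e) (by simp) (by simp) nbe
  have bf := ad_of hB (p := b) (q := f) (by simp) (by simp) nbf
  have ef := ad_of hB (p := e) (q := f) (by simp) (by simp) nef
  have ce := ad_of hC cC eC hce
  have hS := mk_clique ab ac ae bc be ce
  have hde' : ¬ Ad X d e := fun de => h.pts ab ae be af bf ef ac bc ce.symm ad bd de.symm
    hcf.symm hdf.symm ncd
  have hfc' : ¬ Ad X c f := fun cf => h.pts ab ac bc ad bd cd ae be ce af bf cf hde hdf nef
  obtain ⟨g, hg, rfl⟩ := ext_of (T := {a, c, e}) (Finset.card_eq_three.mpr ⟨a, c, e, nac, nae, hce, rfl⟩)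
    (mem_us.mp hC).2.1 (by simp [Finset.insert_subset_iff, *])
  simp only [Finset.mem_insert, Finset.mem_singleton, not_or] at hg
  obtain ⟨nga, ngc, nge⟩ := hg
  have ag := ad_of hC (p := a) (q := g) (by simp) (by simp) (Ne.symm nga)
  have cg := ad_of hC (p := c) (q := g) (by simp) (by simp) (Ne.symm ngc)
  have eg := ad_of hC (p := e) (q := g) (by simp) (by simp) (Ne.symm nge)
  have ngd : g ≠ d := by rintro rfl; exact hde' eg.symm
  have ngf : g ≠ f := by rintro rfl; exact hfc' cg
  have hgb' : ¬ Ad X b g := fun bg => h.pts ab ac bc ad bd cd ae be ce ag bg cg hde ngd.symm (Ne.symm nge)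
  apply caseII h hS
  intro D hD
  have k1 := two_share hX hD hA
  have k2 := two_share hX hD hB
  have k3 := two_share hX hD hC
  have k4 := two_share hX hD hS
  have k5 : ¬ (d ∈ D ∧ e ∈ D) := fun k => hde' (ad_of hD k.1 k.2 hde)
  have k6 : ¬ (c ∈ D ∧ f ∈ D) := fun k => hfc' (ad_of hD k.1 k.2 hcf)
  have k7 : ¬ (b ∈ D ∧ g ∈ D) := fun k => hgb' (ad_of hD k.1 k.2 (by rintro rfl; simp at bC))
  rw [inter4 D nab nac nad nbc nbd ncd] at k1
  rw [inter4 D nab nae naf nbe nbf nef] at k2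
  rw [inter4 D nga ngc nge nac nae hce] at k3
  rw [inter4 D nab nac nae nbc nbe hce] at k4 ⊢
  replace k5 := ind2 k5
  replace k6 := ind2 k6
  replace k7 := ind2 k7
  have i1 := ind1 (a ∈ D)
  have i2 := ind1 (b ∈ D)
  have i3 := ind1 (c ∈ D)
  have i4 := ind1 (d ∈ D)
  have i5 := ind1 (e ∈ D)
  have i6 := ind1 (f ∈ D)
  have i7 := ind1 (g ∈ D)
  clear * - k1 k2 k3 k4 k5 k6 k7 i1 i2 i3 i4 i5 i6 i7
  generalize (if a ∈ D then 1 else 0) = a' at *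
  generalize (if b ∈ D then 1 else 0) = b' at *
  generalize (if c ∈ D then 1 else 0) = c' at *
  generalize (if d ∈ D then 1 else 0) = d' at *
  generalize (if e ∈ D then 1 else 0) = e' at *
  generalize (if f ∈ D then 1 else 0) = f' at *
  generalize (if g ∈ D then 1 else 0) = g' at *
  omega

lemma two_pair {A : Finset E4} {a b : E4} (hA : A.card = 4) (ha : a ∈ A) (hb : b ∈ A) (hab : a ≠ b) :
    ∃ c d, A = {a, b, c, d} := by
  have : (A \ {a, b}).card = 2 := by
    rw [Finset.card_sdiff_of_subset (by simp [Finset.insert_subset_iff, *]), hA, Finset.card_pair hab]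
  obtain ⟨c, d, -, h⟩ := Finset.card_eq_two.mp this
  refine ⟨c, d, ?_⟩
  ext x
  have := Finset.ext_iff.mp h x
  simp only [Finset.mem_sdiff, Finset.mem_insert, Finset.mem_singleton] at this ⊢
  constructor
  · intro hx; tauto
  · rintro (rfl | rfl | h | h) <;> tauto

lemma swap34 (a b c d : E4) : ({a, b, c, d} : Finset E4) = {a, b, d, c} := by
  rw [Finset.pair_comm c d]

lemma caseIII' {X A B C : Finset E4} (hX : ∀ x ∈ X, ∀ y ∈ X, ‖x - y‖ ≤ 1) (h : Tri X) {a b : E4}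
    (hab : a ≠ b) (hA : A ∈ unitSimplices X) (hB : B ∈ unitSimplices X) (hC : C ∈ unitSimplices X)
    (hAB : A ∩ B = {a, b}) (bC : b ∉ C) : (unitSimplices X).card ≤ 5 := by
  have haAB : a ∈ A ∩ B := by simp [hAB]
  have hbAB : b ∈ A ∩ B := by simp [hAB]
  rw [Finset.mem_inter] at haAB hbAB
  obtain ⟨c, d, rfl⟩ := two_pair (mem_us.mp hA).2.1 haAB.1 hbAB.1 hab
  obtain ⟨e, f, rfl⟩ := two_pair (mem_us.mp hB).2.1 haAB.2 hbAB.2 hab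
  obtain ⟨nab, nac, nad, nbc, nbd, ncd⟩ := ne_of_card4 (mem_us.mp hA).2.1
  obtain ⟨-, nae, naf, nbe, nbf, nef⟩ := ne_of_card4 (mem_us.mp hB).2.1
  have hc := Finset.ext_iff.mp hAB c
  have hd := Finset.ext_iff.mp hAB d
  simp only [Finset.mem_inter, Finset.mem_insert, Finset.mem_singleton] at hc hd
  have hc' : ¬ (c = e ∨ c = f) := fun hh => by
    rcases hc.mp ⟨by simp, Or.inr (Or.inr hh)⟩ with h | h
    · exact nac h.symm
    · exact nbc h.symm
  have hd' : ¬ (d = e ∨ d = f) := fun hh => by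
    rcases hd.mp ⟨by simp, Or.inr (Or.inr hh)⟩ with h | h
    · exact nad h.symm
    · exact nbd h.symm
  have hce : c ≠ e := fun h => hc' (Or.inl h)
  have hcf : c ≠ f := fun h => hc' (Or.inr h)
  have hde : d ≠ e := fun h => hd' (Or.inl h)
  have hdf : d ≠ f := fun h => hd' (Or.inr h)
  clear hc hd
  have k1 := two_share hX hC hA
  have k2 := two_share hX hC hB
  rw [inter4 C nab nac nad nbc nbd ncd] at k1
  rw [inter4 C nab nae naf nbe nbf nef] at k2
  by_cases aC : a ∈ C
  · have h1 : c ∈ C ∨ d ∈ C := by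
      by_contra! hh
      simp [*] at k1
    have h2 : e ∈ C ∨ f ∈ C := by
      by_contra! hh
      simp [*] at k2
    rcases h1 with h1 | h1 <;> rcases h2 with h2 | h2
    · exact caseIII hX h hA hB hce hcf hde hdf hC aC bC h1 h2
    · exact caseIII hX h hA (swap34 a b e f ▸ hB) hcf hce hdf hde hC aC bC h1 h2
    · exact caseIII hX h (swap34 a b c d ▸ hA) hB hde hdf hce hcf hC aC bC h1 h2
    · exact caseIII hX h (swap34 a b c d ▸ hA) (swap34 a b e f ▸ hB) hdf hde hcf hce hC aC bC h1 h2
  · exfalso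
    have cC : c ∈ C := by by_contra hh; simp [*] at k1; split_ifs at k1 <;> omega
    have eC : e ∈ C := by by_contra hh; simp [*] at k2; split_ifs at k2 <;> omega
    have fC : f ∈ C := by by_contra hh; simp [*] at k2
    have ab := ad_of hA (p := a) (q := b) (by simp) (by simp) nab
    have ac := ad_of hA (p := a) (q := c) (by simp) (by simp) nac
    have ad := ad_of hA (p := a) (q := d) (by simp) (by simp) nad
    have bc := ad_of hA (p := b) (q := c) (by simp) (by simp) nbc
    have bd := ad_of hA (p := b) (q := d) (by simp) (by simp) nbd
    have cd := ad_of hA (p := c) (q := d) (by simp) (by simp) ncd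
    have ae := ad_of hB (p := a) (q := e) (by simp) (by simp) nae
    have af := ad_of hB (p := a) (q := f) (by simp) (by simp) naf
    have be := ad_of hB (p := b) (q := e) (by simp) (by simp) nbe
    have bf := ad_of hB (p := b) (q := f) (by simp) (by simp) nbf
    exact h.pts ab ac bc ad bd cd ae be (ad_of hC cC eC hce) af bf (ad_of hC cC fC hcf) hde hdf nef

lemma tri_bound {X : Finset E4} (hX : ∀ x ∈ X, ∀ y ∈ X, ‖x - y‖ ≤ 1) (h : Tri X) :
    (unitSimplices X).card ≤ max 5 X.card := by
  by_cases h3 : ∀ A ∈ unitSimplices X, ∀ B ∈ unitSimplices X, 3 ≤ (A ∩ B).card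
  · rcases (unitSimplices X).eq_empty_or_nonempty with h0 | ⟨S, hS⟩
    · simp [h0]
    · exact le_max_of_le_left (caseII h hS fun D hD => h3 D hD S hS)
  · push Not at h3
    obtain ⟨A, hA, B, hB, hlt⟩ := h3
    have := two_share hX hA hB
    obtain ⟨a, b, hab, hAB⟩ := Finset.card_eq_two.mp (show (A ∩ B).card = 2 by omega)
    have haA : a ∈ A ∩ B := by simp [hAB]
    have hbA : b ∈ A ∩ B := by simp [hAB]
    rw [Finset.mem_inter] at haA hbA
    by_cases hall : ∀ D ∈ unitSimplices X, a ∈ D ∧ b ∈ D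
    · exact le_max_of_le_right (caseI h hab hall)
    · push Not at hall
      obtain ⟨C, hC, hab'⟩ := hall
      apply le_max_of_le_left
      by_cases haC : a ∈ C
      · exact caseIII' hX h hab hA hB hC hAB (hab' haC)
      · exact caseIII' hX h hab.symm hA hB hC (by rw [hAB, Finset.pair_comm]) haC

theorem upper (n : ℕ) : ∀ X : Finset E4, X.card = n → (∀ x ∈ X, ∀ y ∈ X, ‖x - y‖ ≤ 1) →
    (unitSimplices X).card ≤ n := by
  induction n with
  | zero =>
    intro X hX _
    rw [Finset.card_eq_zero] at hX
    subst hX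
    simp [unitSimplices]
  | succ n ih =>
    intro X hX hd
    by_cases h : Tri X
    · have h1 := tri_bound hd h
      by_cases h5 : 5 ≤ n + 1
      · rwa [hX, max_eq_right h5] at h1
      · have h2 : (unitSimplices X).card ≤ (X.powersetCard 4).card :=
          Finset.card_le_card (Finset.filter_subset _ _)
        rw [Finset.card_powersetCard, hX] at h2
        refine h2.trans ?_
        have : n < 4 := by omega
        interval_cases n <;> decide
    · obtain ⟨q, hq, T, hT⟩ := not_tri hd h
      have h1 := ih (X.erase q) (by rw [Finset.card_erase_of_mem hq]; omega)
        (fun x hx y hy => hd x (Finset.mem_of_mem_erase hx) y (Finset.mem_of_mem_erase hy))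
      have h2 : unitSimplices X ⊆ insert T (unitSimplices (X.erase q)) := by
        intro D hD
        rw [Finset.mem_insert]
        by_cases hqD : q ∈ D
        · left; exact hT D hD hqD
        · right
          obtain ⟨D1, D2, D3⟩ := mem_us.mp hD
          exact mem_us.mpr ⟨fun x hx => Finset.mem_erase.mpr ⟨by rintro rfl; exact hqD hx, D1 hx⟩, D2, D3⟩
      have h3 := (Finset.card_le_card h2).trans (Finset.card_insert_le _ _)
      omega

lemma lower_abs {X : Finset E4} {a b c : E4} (p : ℕ → E4) (m : ℕ) 
    (ab : Ad X a b) (ac : Ad X a c) (bc : Ad X b c) (ap : ∀ k ≤ m, Ad X a (p k))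
    (bp : ∀ k ≤ m, Ad X b (p k)) (cp : ∀ k ≤ m, Ad X c (p k)) (de : Ad X (p 0) (p m))
    (inj : ∀ k ≤ m, ∀ l ≤ m, p k = p l → k = l) : m + 4 ≤ (unitSimplices X).card := by
  let G1 : Finset (Finset E4) := (Finset.range (m + 1)).image (fun k => {a, b, c, p k})
  let G2 : Finset (Finset E4) := {{a, b, p 0, p m}, {a, c, p 0, p m}, {b, c, p 0, p m}}
  have a0 := ap 0 (by omega)
  have b0 := bp 0 (by omega)
  have c0 := cp 0 (by omega)
  have am := ap m le_rfl
  have bm := bp m le_rfl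
  have cm := cp m le_rfl
  have hc : c ∉ ({a, b, p 0, p m} : Finset E4) := by simp [ac.ne.symm, bc.ne.symm, c0.ne, cm.ne]
  have hb : b ∉ ({a, c, p 0, p m} : Finset E4) := by simp [ab.ne.symm, bc.ne, b0.ne, bm.ne]
  have ha : a ∉ ({b, c, p 0, p m} : Finset E4) := by simp [ab.ne, ac.ne, a0.ne, am.ne]
  have h1 : G1.card = m + 1 := by
    rw [Finset.card_image_of_injOn, Finset.card_range]
    intro k hk l hl h
    simp only [Finset.coe_range, Set.mem_Iio] at hk hl
    have hk : k ≤ m := by omega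
    have : p k ∈ ({a, b, c, p l} : Finset E4) := by
      simp only at h
      rw [← h]; simp
    simp [(ap k hk).ne.symm, (bp k hk).ne.symm, (cp k hk).ne.symm] at this
    exact inj k hk l (by omega) this
  have h2 : G2.card = 3 := by
    refine Finset.card_eq_three.mpr ⟨_, _, _, ?_, ?_, ?_, rfl⟩
    · intro h; apply hc; rw [h]; simp
    · intro h; apply hc; rw [h]; simp
    · intro h; apply hb; rw [h]; simp
  have h3 : Disjoint G1 G2 := by
    rw [Finset.disjoint_left]
    intro D hD hD'
    simp only [G1, Finset.mem_image] at hD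
    obtain ⟨k, -, rfl⟩ := hD
    simp only [G2, Finset.mem_insert, Finset.mem_singleton] at hD'
    rcases hD' with h | h | h
    · apply hc; rw [← h]; simp
    · apply hb; rw [← h]; simp
    · apply ha; rw [← h]; simp
  have h4 : G1 ∪ G2 ⊆ unitSimplices X := by
    intro D hD
    rw [Finset.mem_union] at hD
    rcases hD with hD | hD
    · simp only [G1, Finset.mem_image, Finset.mem_range] at hD
      obtain ⟨k, hk, rfl⟩ := hD
      have hk : k ≤ m := by omega
      exact mk_clique ab ac (ap k hk) bc (bp k hk) (cp k hk)
    · simp only [G2, Finset.mem_insert, Finset.mem_singleton] at hD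
      rcases hD with rfl | rfl | rfl
      · exact mk_clique ab a0 am b0 bm de
      · exact mk_clique ac a0 am c0 cm de
      · exact mk_clique bc b0 bm c0 cm de
  have h5 := Finset.card_le_card h4
  rw [Finset.card_union_of_disjoint h3] at h5
  omega

lemma nsq (v w : E4) : ‖v - w‖ ^ 2 = (v 0 - w 0) ^ 2 + (v 1 - w 1) ^ 2 + (v 2 - w 2) ^ 2 + (v 3 - w 3) ^ 2 := by
  rw [EuclideanSpace.real_norm_sq_eq, Fin.sum_univ_four]
  simp

lemma n1 {v w : E4} (h : (v 0 - w 0) ^ 2 + (v 1 - w 1) ^ 2 + (v 2 - w 2) ^ 2 + (v 3 - w 3) ^ 2 = 1) :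
    ‖v - w‖ = 1 := by
  rw [← nsq] at h
  exact (pow_eq_one_iff_of_nonneg (norm_nonneg _) two_ne_zero).mp h

lemma nle {v w : E4} (h : (v 0 - w 0) ^ 2 + (v 1 - w 1) ^ 2 + (v 2 - w 2) ^ 2 + (v 3 - w 3) ^ 2 ≤ 1) :
    ‖v - w‖ ≤ 1 := by
  rw [← nsq] at h
  exact (sq_le_one_iff₀ (norm_nonneg _)).mp h

noncomputable def qa : E4 := !₂[√3 / 3, 0, 0, 0]
noncomputable def qb : E4 := !₂[-√3 / 6, 1 / 2, 0, 0]
noncomputable def qc : E4 := !₂[-√3 / 6, -1 / 2, 0, 0]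
noncomputable def qp (t : ℝ) : E4 := !₂[0, 0, √6 / 3 * Real.cos t, √6 / 3 * Real.sin t]

lemma s3 : √3 ^ 2 = 3 := Real.sq_sqrt (by norm_num)
lemma s6 : √6 ^ 2 = 6 := Real.sq_sqrt (by norm_num)

lemma dab : ‖qa - qb‖ = 1 := by apply n1; simp [qa, qb]; linear_combination (1 / 4) * s3
lemma dac : ‖qa - qc‖ = 1 := by apply n1; simp [qa, qc]; linear_combination (1 / 4) * s3
lemma dbc : ‖qb - qc‖ = 1 := by apply n1; simp [qb, qc]; norm_num
lemma dap (t : ℝ) : ‖qa - qp t‖ = 1 := by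
  apply n1; simp [qa, qp]
  linear_combination (1 / 9) * s3 + √6 ^ 2 / 9 * Real.sin_sq_add_cos_sq t + (1 / 9) * s6
lemma dbp (t : ℝ) : ‖qb - qp t‖ = 1 := by
  apply n1; simp [qb, qp]
  linear_combination (1 / 36) * s3 + √6 ^ 2 / 9 * Real.sin_sq_add_cos_sq t + (1 / 9) * s6
lemma dcp (t : ℝ) : ‖qc - qp t‖ = 1 := by
  apply n1; simp [qc, qp]
  linear_combination (1 / 36) * s3 + √6 ^ 2 / 9 * Real.sin_sq_add_cos_sq t + (1 / 9) * s6
lemma dpp (t u : ℝ) : ‖qp t - qp u‖ ^ 2 = 4 / 3 * (1 - Real.cos (t - u)) := by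
  rw [nsq, Real.cos_sub]; simp [qp]
  linear_combination √6 ^ 2 / 9 * (Real.sin_sq_add_cos_sq t + Real.sin_sq_add_cos_sq u) +
    (1 / 9) * (2 - 2 * (Real.cos t * Real.cos u + Real.sin t * Real.sin u)) * s6

theorem lower (m : ℕ) (hm : 1 ≤ m) : ∃ X : Finset E4, X.card = m + 4 ∧
    (∀ x ∈ X, ∀ y ∈ X, ‖x - y‖ ≤ 1) ∧ m + 4 ≤ (unitSimplices X).card := by
  let θ := Real.arccos (1 / 4)
  have hθ0 : 0 < θ := Real.arccos_pos.mpr (by norm_num)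
  have hθπ : θ ≤ Real.pi := Real.arccos_le_pi _
  have hcos : Real.cos θ = 1 / 4 := Real.cos_arccos (by norm_num) (by norm_num)
  have hm' : (0 : ℝ) < m := by exact_mod_cast hm
  let ang : ℕ → ℝ := fun k => θ * (k / m)
  have ang0 : ang 0 = 0 := by simp [ang]
  have angm : ang m = θ := by simp [ang, hm'.ne']
  have angnn : ∀ k, 0 ≤ ang k := fun k => by simp only [ang]; positivity
  have angle : ∀ k ≤ m, ang k ≤ θ := by
    intro k hk
    have : (k : ℝ) / m ≤ 1 := by rw [div_le_one hm']; exact_mod_cast hk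
    simp only [ang]
    nlinarith
  let p : ℕ → E4 := fun k => qp (ang k)
  have inj : ∀ k ≤ m, ∀ l ≤ m, p k = p l → k = l := by
    intro k hk l hl h
    have h2 := congrArg (fun v : E4 => v 2) h
    simp [p, qp] at h2
    have h3 := Real.injOn_cos ⟨angnn k, (angle k hk).trans hθπ⟩ ⟨angnn l, (angle l hl).trans hθπ⟩ h2
    simp only [ang] at h3
    have h4 := mul_left_cancel₀ hθ0.ne' h3
    field_simp at h4
    exact_mod_cast h4
  have dp : ∀ k ≤ m, ∀ l ≤ m, ‖p k - p l‖ ≤ 1 := by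
    intro k hk l hl
    rw [← sq_le_one_iff₀ (norm_nonneg _), dpp, ← Real.cos_abs]
    have : Real.cos θ ≤ Real.cos |ang k - ang l| := by
      apply Real.cos_le_cos_of_nonneg_of_le_pi (abs_nonneg _) hθπ
      rw [abs_le]
      constructor <;> linarith [angnn k, angnn l, angle k hk, angle l hl]
    rw [hcos] at this
    linarith
  have nab : qa ≠ qb := fun h => by have := dab; simp [h] at this
  have nac : qa ≠ qc := fun h => by have := dac; simp [h] at this
  have nbc : qb ≠ qc := fun h => by have := dbc; simp [h] at this
  have nap : ∀ k, qa ≠ p k := fun k h => by have := dap (ang k); simp [h, p] at this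
  have nbp : ∀ k, qb ≠ p k := fun k h => by have := dbp (ang k); simp [h, p] at this
  have ncp : ∀ k, qc ≠ p k := fun k h => by have := dcp (ang k); simp [h, p] at this
  let X : Finset E4 := {qa, qb, qc} ∪ (Finset.range (m + 1)).image p
  have memX : ∀ x, x ∈ X ↔ x = qa ∨ x = qb ∨ x = qc ∨ ∃ k ≤ m, x = p k := by
    intro x
    simp only [X, Finset.mem_union, Finset.mem_insert, Finset.mem_singleton, Finset.mem_image,
      Finset.mem_range, Nat.lt_succ_iff, or_assoc, eq_comm (a := x)]
  have aX : qa ∈ X := (memX _).mpr (by simp)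
  have bX : qb ∈ X := (memX _).mpr (by simp)
  have cX : qc ∈ X := (memX _).mpr (by simp)
  have pX : ∀ k ≤ m, p k ∈ X := fun k hk => (memX _).mpr (Or.inr (Or.inr (Or.inr ⟨k, hk, rfl⟩)))
  refine ⟨X, ?_, ?_, ?_⟩
  · rw [Finset.card_union_of_disjoint, Finset.card_image_of_injOn, Finset.card_range,
      Finset.card_eq_three.mpr ⟨qa, qb, qc, nab, nac, nbc, rfl⟩]
    · omega
    · intro k hk l hl h
      simp only [Finset.coe_range, Set.mem_Iio] at hk hl
      exact inj k (by omega) l (by omega) h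
    · rw [Finset.disjoint_left]
      intro x hx hx'
      simp only [Finset.mem_insert, Finset.mem_singleton] at hx
      rw [Finset.mem_image] at hx'
      obtain ⟨k, -, rfl⟩ := hx'
      rcases hx with h | h | h
      · exact nap k h.symm
      · exact nbp k h.symm
      · exact ncp k h.symm
  · intro x hx y hy
    rw [memX] at hx hy
    rcases hx with rfl | rfl | rfl | ⟨k, hk, rfl⟩ <;> rcases hy with rfl | rfl | rfl | ⟨l, hl, rfl⟩
    · simp
    · exact dab.le
    · exact dac.le
    · exact (dap _).le
    · rw [norm_sub_rev]; exact dab.le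
    · simp
    · exact dbc.le
    · exact (dbp _).le
    · rw [norm_sub_rev]; exact dac.le
    · rw [norm_sub_rev]; exact dbc.le
    · simp
    · exact (dcp _).le
    · rw [norm_sub_rev]; exact (dap _).le
    · rw [norm_sub_rev]; exact (dbp _).le
    · rw [norm_sub_rev]; exact (dcp _).le
    · exact dp k hk l hl
  · refine lower_abs p m ⟨aX, bX, dab⟩ ⟨aX, cX, dac⟩ ⟨bX, cX, dbc⟩ (fun k hk => ⟨aX, pX k hk, dap _⟩)
      (fun k hk => ⟨bX, pX k hk, dbp _⟩) (fun k hk => ⟨cX, pX k hk, dcp _⟩)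
      ⟨pX 0 (by omega), pX m le_rfl, ?_⟩ inj
    have : ‖p 0 - p m‖ ^ 2 = 1 := by
      rw [dpp, ang0, angm, zero_sub, Real.cos_neg, hcos]; norm_num
    exact (pow_eq_one_iff_of_nonneg (norm_nonneg _) two_ne_zero).mp this

/-- Schur's conjecture in `ℝ⁴`. -/
theorem schur_conjecture_R4 (n : ℕ) (hn : n ≥ 5) :
    (∀ X : Finset (EuclideanSpace ℝ (Fin 4)), X.card = n →
      (∀ x ∈ X, ∀ y ∈ X, ‖x - y‖ ≤ 1) → (unitSimplices X).card ≤ n) ∧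
    (∃ X : Finset (EuclideanSpace ℝ (Fin 4)), X.card = n ∧
      (∀ x ∈ X, ∀ y ∈ X, ‖x - y‖ ≤ 1) ∧ (unitSimplices X).card = n) := by
  refine ⟨upper n, ?_⟩
  obtain ⟨m, rfl⟩ := Nat.exists_eq_add_of_le hn
  obtain ⟨X, h1, h2, h3⟩ := lower (m + 1) (by omega)
  have h4 : m + 1 + 4 = 5 + m := by omega
  rw [h4] at h1 h3
  exact ⟨X, h1, h2, le_antisymm (upper _ X h1 h2) h3⟩
end

section
/- Let d ≥ 4 and let X be a finite set of n points in Euclidean d-space with all pairwise distances at most 1. Suppose that any two d-element subsets of X, each with all pairwise distances within it equal to 1, share at least d − 3 common points. Then the number of d-element subsets of X with all pairwise distances equal to 1 is at most n. -/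
/-- positive-part comparison -/
theorem posPart_cmp (e : ℝ) (he : 0 < e) (M : Fin 3 → Fin 3 → ℝ) (x y : Fin 3 → ℝ)
    (h0 : ∀ i j, 0 ≤ M i j) (h1 : ∀ i j, M i j < e)
    (hx : ∀ i, e * x i ≤ ∑ j, M i j * y j)
    (i : Fin 3) (hi : ∀ j, j ≠ i → x j ≤ 0) :
    (∑ j, max (x j) 0 < ∑ j, max (y j) 0) ∨
      (∑ j, max (x j) 0 = 0 ∧ ∑ j, max (y j) 0 = 0) := by
  have hs : ∑ j, max (x j) 0 = max (x i) 0 := by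
    rw [Finset.sum_eq_single i]
    · intro j _ hj
      exact max_eq_right (hi j hj)
    · simp
  have hy0 : ∀ j, 0 ≤ max (y j) 0 := fun j => le_max_right _ _
  by_cases hz : ∀ j, y j ≤ 0
  · right
    have hy : ∑ j, max (y j) 0 = 0 := Finset.sum_eq_zero (fun j _ => max_eq_right (hz j))
    refine ⟨?_, hy⟩
    rw [hs]
    apply max_eq_right
    have : ∑ j, M i j * y j ≤ 0 :=
      Finset.sum_nonpos (fun j _ => mul_nonpos_of_nonneg_of_nonpos (h0 i j) (hz j))
    have := hx i
    nlinarith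
  · left
    push Not at hz
    obtain ⟨k, hk⟩ := hz
    rw [hs]
    have hpos : 0 < ∑ j, max (y j) 0 :=
      Finset.sum_pos' (fun j _ => hy0 j) ⟨k, Finset.mem_univ _, lt_max_of_lt_left hk⟩
    apply max_lt _ hpos
    have h2 : ∑ j, M i j * y j < ∑ j, e * max (y j) 0 := by
      apply Finset.sum_lt_sum
      · intro j _
        calc M i j * y j ≤ M i j * max (y j) 0 :=
              mul_le_mul_of_nonneg_left (le_max_left _ _) (h0 i j)
          _ ≤ e * max (y j) 0 := mul_le_mul_of_nonneg_right (h1 i j).le (hy0 j)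
      · refine ⟨k, Finset.mem_univ _, ?_⟩
        rw [max_eq_left hk.le]
        exact mul_lt_mul_of_pos_right (h1 i k) hk
    rw [← Finset.mul_sum] at h2
    have := hx i
    nlinarith

theorem fin3_sign (z : Fin 3 → ℝ) :
    (∃ i, ∀ j, j ≠ i → z j ≤ 0) ∨ (∃ i, ∀ j, j ≠ i → 0 ≤ z j) := by
  rcases le_total (z 0) 0 with h0 | h0 <;> rcases le_total (z 1) 0 with h1 | h1 <;>
    rcases le_total (z 2) 0 with h2 | h2
  · left; exact ⟨0, fun j hj => by fin_cases j <;> simp_all⟩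
  · left; exact ⟨2, fun j hj => by fin_cases j <;> simp_all⟩
  · left; exact ⟨1, fun j hj => by fin_cases j <;> simp_all⟩
  · right; exact ⟨0, fun j hj => by fin_cases j <;> simp_all⟩
  · left; exact ⟨0, fun j hj => by fin_cases j <;> simp_all⟩
  · right; exact ⟨1, fun j hj => by fin_cases j <;> simp_all⟩
  · right; exact ⟨2, fun j hj => by fin_cases j <;> simp_all⟩
  · right; exact ⟨0, fun j hj => by fin_cases j <;> simp_all⟩

theorem fin3_two_pos (z : Fin 3 → ℝ) (h : ¬ ∃ i, ∀ j, j ≠ i → z j ≤ 0) :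
    ∃ i, ∀ j, j ≠ i → 0 < z j := by
  rcases le_or_gt (z 0) 0 with h0 | h0 <;> rcases le_or_gt (z 1) 0 with h1 | h1 <;>
    rcases le_or_gt (z 2) 0 with h2 | h2
  · exact absurd ⟨0, fun j hj => by fin_cases j <;> simp_all⟩ h
  · exact absurd ⟨2, fun j hj => by fin_cases j <;> simp_all⟩ h
  · exact absurd ⟨1, fun j hj => by fin_cases j <;> simp_all⟩ h
  · exact ⟨0, fun j hj => by fin_cases j <;> simp_all⟩
  · exact absurd ⟨0, fun j hj => by fin_cases j <;> simp_all⟩ h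
  · exact ⟨1, fun j hj => by fin_cases j <;> simp_all⟩
  · exact ⟨2, fun j hj => by fin_cases j <;> simp_all⟩
  · exact ⟨0, fun j hj => by fin_cases j <;> simp_all⟩

/-- large multiples dominate -/
theorem fin3_large (z z' : Fin 3 → ℝ) (i : Fin 3) (h : ∀ j, j ≠ i → 0 < z j) :
    ∃ T : ℝ, ∀ t, T ≤ t → ∀ j, j ≠ i → 0 ≤ t * z j + z' j := by
  have : ∀ j, ∃ T : ℝ, j ≠ i → ∀ t, T ≤ t → 0 ≤ t * z j + z' j := by
    intro j
    by_cases hj : j = i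
    · exact ⟨0, fun h => absurd hj h⟩
    · refine ⟨- z' j / z j, fun _ t ht => ?_⟩
      have := h j hj
      rw [div_le_iff₀ this] at ht
      linarith
  choose T hT using this
  refine ⟨max (T 0) (max (T 1) (T 2)), fun t ht j hj => hT j hj t ?_⟩
  simp only [max_le_iff] at ht
  fin_cases j
  · exact ht.1
  · exact ht.2.1
  · exact ht.2.2

open RealInnerProductSpace in
theorem dep_fg {E : Type*} [NormedAddCommGroup E] [InnerProductSpace ℝ E]
    (a b : Fin 3 → E) (c : ℝ)
    (haa : ∀ i j, i ≠ j → inner ℝ (a i) (a j) = c)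
    (hbb : ∀ i j, i ≠ j → inner ℝ (b i) (b j) = c)
    (hab : ∀ i j, c ≤ inner ℝ (a i) (b j))
    (x y : Fin 3 → ℝ) (hdep : ∑ i, x i • a i = ∑ i, y i • b i) :
    0 ≤ c * ((∑ i, max (x i) 0 - ∑ i, max (y i) 0) *
      (∑ i, max (-x i) 0 - ∑ i, max (-y i) 0)) := by
  set v : E := ∑ i, max (x i) 0 • a i - ∑ i, max (y i) 0 • b i with hv
  have hxx : ∀ r : ℝ, max r 0 - max (-r) 0 = r := fun r => by
    rcases le_total r 0 with h | h
    · rw [max_eq_right h, max_eq_left (by linarith)]; ring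
    · rw [max_eq_left h, max_eq_right (by linarith)]; ring
  have hprod : ∀ r : ℝ, max r 0 * max (-r) 0 = 0 := fun r => by
    rcases le_total r 0 with h | h
    · rw [max_eq_right h]; ring
    · rw [max_eq_right (a := -r) (by linarith)]; ring
  have hv2 : v = ∑ i, max (-x i) 0 • a i - ∑ i, max (-y i) 0 • b i := by
    have h1 : ∑ i, x i • a i = ∑ i, max (x i) 0 • a i - ∑ i, max (-x i) 0 • a i := by
      rw [← Finset.sum_sub_distrib]
      exact Finset.sum_congr rfl fun i _ => by rw [← sub_smul, hxx]
    have h2 : ∑ i, y i • b i = ∑ i, max (y i) 0 • b i - ∑ i, max (-y i) 0 • b i := by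
      rw [← Finset.sum_sub_distrib]
      exact Finset.sum_congr rfl fun i _ => by rw [← sub_smul, hxx]
    rw [h1, h2] at hdep
    rw [hv, sub_eq_sub_iff_add_eq_add]
    rw [sub_eq_sub_iff_add_eq_add] at hdep
    rw [hdep]; abel
  have hnn : 0 ≤ inner ℝ v v := real_inner_self_nonneg
  nth_rewrite 1 [hv] at hnn
  rw [hv2] at hnn
  simp only [inner_sub_left, inner_sub_right, sum_inner, inner_sum, inner_smul_left,
    inner_smul_right, RCLike.conj_to_real] at hnn
  have e1 : ∀ (u : Fin 3 → E) (z : Fin 3 → ℝ), (∀ i j, i ≠ j → inner ℝ (u i) (u j) = c) →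
      ∑ i, ∑ j, max (-z i) 0 * (max (z j) 0 * inner ℝ (u j) (u i)) =
      c * ((∑ i, max (z i) 0) * ∑ i, max (-z i) 0) := by
    intro u z hu
    rw [Finset.sum_mul_sum, Finset.sum_comm, Finset.mul_sum]
    refine Finset.sum_congr rfl fun i _ => ?_
    rw [Finset.mul_sum]
    refine Finset.sum_congr rfl fun j _ => ?_
    by_cases hij : i = j
    · subst hij
      have := hprod (z i)
      linear_combination (inner ℝ (u i) (u i) - c) * this
    · rw [hu i j hij]; ring
  have e2 : ∀ (z z' : Fin 3 → ℝ), (∀ i, 0 ≤ z i) → (∀ i, 0 ≤ z' i) →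
      c * ((∑ i, z i) * ∑ i, z' i) ≤
      ∑ i, ∑ j, z' i * (z j * inner ℝ (a j) (b i)) := by
    intro z z' hz hz'
    rw [Finset.sum_mul_sum, Finset.sum_comm, Finset.mul_sum]
    refine Finset.sum_le_sum fun i _ => ?_
    rw [Finset.mul_sum]
    refine Finset.sum_le_sum fun j _ => ?_
    have := mul_le_mul_of_nonneg_left (hab j i) (mul_nonneg (hz' i) (hz j))
    linarith
  have e3 : ∀ (z z' : Fin 3 → ℝ), (∀ i, 0 ≤ z i) → (∀ i, 0 ≤ z' i) →
      c * ((∑ i, z i) * ∑ i, z' i) ≤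
      ∑ i, ∑ j, z i * (z' j * inner ℝ (b j) (a i)) := by
    intro z z' hz hz'
    rw [Finset.sum_mul_sum, Finset.mul_sum]
    refine Finset.sum_le_sum fun i _ => ?_
    rw [Finset.mul_sum]
    refine Finset.sum_le_sum fun j _ => ?_
    have := mul_le_mul_of_nonneg_left (hab i j) (mul_nonneg (hz i) (hz' j))
    rw [real_inner_comm (a i) (b j)]
    linarith
  have n1 : ∀ (z : Fin 3 → ℝ) i, 0 ≤ max (z i) 0 := fun z i => le_max_right _ _
  have n2 : ∀ (z : Fin 3 → ℝ) i, 0 ≤ max (-z i) 0 := fun z i => le_max_right _ _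
  have i1 := e1 a x haa
  have i2 := e1 b y hbb
  have i3 := e2 _ _ (n1 x) (n2 y)
  have i4 := e3 _ _ (n2 x) (n1 y)
  simp only [mul_sub, Finset.mul_sum, Finset.sum_sub_distrib] at hnn
  rw [i1, i2] at hnn
  linarith [i3, i4, hnn]

theorem dep_row {E : Type*} [NormedAddCommGroup E] [InnerProductSpace ℝ E]
    (a b : Fin 3 → E) (c e : ℝ)
    (ha : ∀ i, inner ℝ (a i) (a i) = c + e)
    (haa : ∀ i j, i ≠ j → inner ℝ (a i) (a j) = c)
    (x y : Fin 3 → ℝ) (hdep : ∑ i, x i • a i = ∑ i, y i • b i) (i : Fin 3) :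
    e * x i = ∑ j, (inner ℝ (a i) (b j) - c) * y j - c * (∑ j, x j - ∑ j, y j) := by
  have h := congrArg (fun u => inner ℝ (a i) u) hdep
  simp only [inner_sum, inner_smul_right] at h
  have h1 : ∑ j, x j * inner ℝ (a i) (a j) = e * x i + c * ∑ j, x j := by
    have : ∀ j, x j * inner ℝ (a i) (a j) = (if j = i then e * x i else 0) + c * x j := by
      intro j
      by_cases hj : j = i
      · subst hj; rw [ha]; simp; ring
      · rw [haa i j (Ne.symm hj)]; simp [hj]; ring
    rw [Finset.sum_congr rfl fun j _ => this j, Finset.sum_add_distrib, ← Finset.mul_sum]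
    simp
  have h2 : ∑ j, (inner ℝ (a i) (b j) - c) * y j =
      ∑ j, y j * inner ℝ (a i) (b j) - c * ∑ j, y j := by
    rw [Finset.mul_sum, ← Finset.sum_sub_distrib]
    exact Finset.sum_congr rfl fun j _ => by ring
  rw [h2]; linarith

theorem exists_dep {E : Type*} [NormedAddCommGroup E] [InnerProductSpace ℝ E]
    [FiniteDimensional ℝ E] (hE : Module.finrank ℝ E ≤ 4) (a b : Fin 3 → E) (p q : ℝ) :
    ∃ x y : Fin 3 → ℝ, (x ≠ 0 ∨ y ≠ 0) ∧ ∑ i, x i • a i = ∑ i, y i • b i ∧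
      p * ∑ i, x i + q * ∑ i, y i = 0 := by
  let L : ((Fin 3 → ℝ) × (Fin 3 → ℝ)) →ₗ[ℝ] (E × ℝ) :=
    { toFun := fun z => (∑ i, z.1 i • a i - ∑ i, z.2 i • b i, p * ∑ i, z.1 i + q * ∑ i, z.2 i)
      map_add' := by
        intro z w
        ext
        · simp [add_smul, Finset.sum_add_distrib]; abel
        · simp [Finset.sum_add_distrib]; ring
      map_smul' := by
        intro r z
        ext
        · simp [mul_smul, Finset.smul_sum, smul_sub]
        · simp [← Finset.mul_sum]; ring }
  have hlt : Module.finrank ℝ (E × ℝ) < Module.finrank ℝ ((Fin 3 → ℝ) × (Fin 3 → ℝ)) := by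
    simp; omega
  have hk : LinearMap.ker L ≠ ⊥ := LinearMap.ker_ne_bot_of_finrank_lt hlt
  obtain ⟨z, hz, hz0⟩ := Submodule.exists_mem_ne_zero_of_ne_bot hk
  rw [LinearMap.mem_ker] at hz
  have h1 : ∑ i, z.1 i • a i - ∑ i, z.2 i • b i = 0 := congrArg Prod.fst hz
  have h2 : p * ∑ i, z.1 i + q * ∑ i, z.2 i = 0 := congrArg Prod.snd hz
  refine ⟨z.1, z.2, ?_, sub_eq_zero.mp h1, h2⟩
  by_contra hcon
  push Not at hcon
  exact hz0 (Prod.ext hcon.1 hcon.2)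

theorem sum_max_zero (z : Fin 3 → ℝ) (h : ∑ i, max (z i) 0 = 0) (i : Fin 3) : z i ≤ 0 := by
  have := (Finset.sum_eq_zero_iff_of_nonneg (fun i _ => le_max_right (z i) 0)).1 h i
    (Finset.mem_univ _)
  exact max_eq_right_iff.1 this

theorem sum_max_sub (z : Fin 3 → ℝ) :
    ∑ i, z i = ∑ i, max (z i) 0 - ∑ i, max (-z i) 0 := by
  rw [← Finset.sum_sub_distrib]
  refine Finset.sum_congr rfl fun i _ => ?_
  rcases le_total (z i) 0 with h | h
  · rw [max_eq_right h, max_eq_left (by linarith)]; ring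
  · rw [max_eq_left h, max_eq_right (by linarith)]; ring

/-- Two "unit triangles" on a 3-sphere with small diameter share a vertex. -/
theorem two_triples {E : Type*} [NormedAddCommGroup E] [InnerProductSpace ℝ E]
    [FiniteDimensional ℝ E] (hE : Module.finrank ℝ E ≤ 4) (a b : Fin 3 → E) (c e : ℝ)
    (hc : 0 < c) (he : 0 < e)
    (ha : ∀ i, inner ℝ (a i) (a i) = c + e)
    (hb : ∀ i, inner ℝ (b i) (b i) = c + e)
    (haa : ∀ i j, i ≠ j → inner ℝ (a i) (a j) = c)
    (hbb : ∀ i j, i ≠ j → inner ℝ (b i) (b j) = c)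
    (hab : ∀ i j, c ≤ inner ℝ (a i) (b j)) :
    ∃ i j, a i = b j := by
  by_contra hcon
  push Not at hcon
  set M : Fin 3 → Fin 3 → ℝ := fun i j => inner ℝ (a i) (b j) - c with hM
  have hM0 : ∀ i j, 0 ≤ M i j := fun i j => sub_nonneg.2 (hab i j)
  have hM1 : ∀ i j, M i j < e := by
    intro i j
    have h : 0 < inner ℝ (a i - b j) (a i - b j) :=
      real_inner_self_pos.2 (sub_ne_zero.2 (hcon i j))
    rw [real_inner_sub_sub_self, ha, hb] at h
    simp only [hM]; linarith
  have hMt0 : ∀ i j, 0 ≤ (fun i j => M j i) i j := fun i j => hM0 j i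
  have hMt1 : ∀ i j, (fun i j => M j i) i j < e := fun i j => hM1 j i
  -- row relations
  have row : ∀ x y : Fin 3 → ℝ, ∑ i, x i • a i = ∑ i, y i • b i → ∀ i,
      e * x i = ∑ j, M i j * y j - c * (∑ j, x j - ∑ j, y j) :=
    fun x y h i => dep_row a b c e ha haa x y h i
  have col : ∀ x y : Fin 3 → ℝ, ∑ i, x i • a i = ∑ i, y i • b i → ∀ i,
      e * y i = ∑ j, M j i * x j + c * (∑ j, x j - ∑ j, y j) := by
    intro x y h i
    have := dep_row b a c e hb hbb y x h.symm i
    simp only [real_inner_comm] at this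
    simp only [hM, real_inner_comm]
    linarith
  have neg : ∀ x y : Fin 3 → ℝ, ∑ i, x i • a i = ∑ i, y i • b i →
      ∑ i, (-x) i • a i = ∑ i, (-y) i • b i := by
    intro x y h
    simp only [Pi.neg_apply, neg_smul, Finset.sum_neg_distrib, h]
  -- if w ≥ 0 and x has at most one positive entry
  have P1 : ∀ x y : Fin 3 → ℝ, ∑ i, x i • a i = ∑ i, y i • b i →
      0 ≤ ∑ j, x j - ∑ j, y j → (∃ i, ∀ j, j ≠ i → x j ≤ 0) →
      (∑ j, max (x j) 0 < ∑ j, max (y j) 0) ∨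
      (∑ j, max (x j) 0 = 0 ∧ ∑ j, max (y j) 0 = 0) := by
    rintro x y h hw ⟨i, hi⟩
    refine posPart_cmp e he M x y hM0 hM1 (fun i => ?_) i hi
    rw [row x y h i]
    nlinarith
  have P2 : ∀ x y : Fin 3 → ℝ, ∑ i, x i • a i = ∑ i, y i • b i →
      ∑ j, x j - ∑ j, y j ≤ 0 → (∃ i, ∀ j, j ≠ i → y j ≤ 0) →
      (∑ j, max (y j) 0 < ∑ j, max (x j) 0) ∨
      (∑ j, max (y j) 0 = 0 ∧ ∑ j, max (x j) 0 = 0) := by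
    rintro x y h hw ⟨i, hi⟩
    refine posPart_cmp e he (fun i j => M j i) y x hMt0 hMt1 (fun i => ?_) i hi
    rw [col x y h i]
    nlinarith
  have P3 : ∀ x y : Fin 3 → ℝ, ∑ i, x i • a i = ∑ i, y i • b i →
      0 ≤ ∑ j, x j - ∑ j, y j → (∃ i, ∀ j, j ≠ i → 0 ≤ y j) →
      (∑ j, max (-y j) 0 < ∑ j, max (-x j) 0) ∨
      (∑ j, max (-y j) 0 = 0 ∧ ∑ j, max (-x j) 0 = 0) := by
    rintro x y h hw ⟨i, hi⟩
    refine P2 (-x) (-y) (neg x y h) ?_ ⟨i, fun j hj => ?_⟩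
    · simp only [Pi.neg_apply, Finset.sum_neg_distrib]; linarith
    · simpa using hi j hj
  -- at w = 0 with at most one positive x everything is nonpositive
  have Z1 : ∀ x y : Fin 3 → ℝ, ∑ i, x i • a i = ∑ i, y i • b i →
      ∑ j, x j - ∑ j, y j = 0 → (∃ i, ∀ j, j ≠ i → x j ≤ 0) →
      (∀ i, x i ≤ 0) ∧ (∀ i, y i ≤ 0) := by
    intro x y h hw hx
    have hsx := sum_max_sub x
    have hsy := sum_max_sub y
    rcases P1 x y h hw.ge hx with h1 | h1
    · exfalso
      rcases fin3_sign y with hy | hy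
      · rcases P2 x y h hw.le hy with h2 | h2 <;> linarith
      · rcases P3 x y h hw.ge hy with h2 | h2 <;> linarith
    · exact ⟨sum_max_zero x h1.1, sum_max_zero y h1.2⟩
  have Z2 : ∀ x y : Fin 3 → ℝ, ∑ i, x i • a i = ∑ i, y i • b i →
      ∑ j, x j - ∑ j, y j = 0 →
      ((∀ i, x i ≤ 0) ∧ (∀ i, y i ≤ 0)) ∨ ((∀ i, 0 ≤ x i) ∧ (∀ i, 0 ≤ y i)) := by
    intro x y h hw
    rcases fin3_sign x with hx | ⟨i, hi⟩
    · exact Or.inl (Z1 x y h hw hx)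
    · right
      have := Z1 (-x) (-y) (neg x y h) (by
        simp only [Pi.neg_apply, Finset.sum_neg_distrib]; linarith)
        ⟨i, fun j hj => by simpa using hi j hj⟩
      simpa using this
  -- first dependency
  obtain ⟨x0, y0, hne, hdep0, hw0, hx0, hy0⟩ : ∃ x y : Fin 3 → ℝ, (x ≠ 0 ∨ y ≠ 0) ∧
      ∑ i, x i • a i = ∑ i, y i • b i ∧ ∑ j, x j - ∑ j, y j = 0 ∧
      (∀ i, 0 ≤ x i) ∧ (∀ i, 0 ≤ y i) := by
    obtain ⟨x, y, hne, hdep, hw⟩ := exists_dep hE a b 1 (-1)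
    have hw' : ∑ j, x j - ∑ j, y j = 0 := by linarith
    rcases Z2 x y hdep hw' with h | h
    · refine ⟨-x, -y, by simpa using hne, neg x y hdep, ?_, by simpa using h⟩
      simp only [Pi.neg_apply, Finset.sum_neg_distrib]; linarith
    · exact ⟨x, y, hne, hdep, hw', h⟩
  have hpos0 : 0 < ∑ j, x0 j := by
    rcases (Finset.sum_nonneg (fun i _ => hx0 i)).lt_or_eq with h | h
    · exact h
    · exfalso
      have h1 : ∑ j, y0 j = 0 := by linarith
      have h2 := (Finset.sum_eq_zero_iff_of_nonneg (fun i _ => hx0 i)).1 h.symm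
      have h3 := (Finset.sum_eq_zero_iff_of_nonneg (fun i _ => hy0 i)).1 h1
      rcases hne with h' | h'
      · exact h' (funext fun i => h2 i (Finset.mem_univ _))
      · exact h' (funext fun i => h3 i (Finset.mem_univ _))
  have hmx : ∑ j, max (x0 j) 0 = ∑ j, x0 j :=
    Finset.sum_congr rfl fun i _ => max_eq_left (hx0 i)
  have hmy : ∑ j, max (y0 j) 0 = ∑ j, y0 j :=
    Finset.sum_congr rfl fun i _ => max_eq_left (hy0 i)
  obtain ⟨ix, hix⟩ : ∃ i, ∀ j, j ≠ i → 0 < x0 j := by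
    apply fin3_two_pos
    intro hh
    rcases P1 x0 y0 hdep0 hw0.ge hh with h | h <;> linarith
  obtain ⟨iy, hiy⟩ : ∃ i, ∀ j, j ≠ i → 0 < y0 j := by
    apply fin3_two_pos
    intro hh
    rcases P2 x0 y0 hdep0 hw0.le hh with h | h <;> linarith
  -- second dependency
  obtain ⟨x1, y1, hdep1, hw1⟩ : ∃ x y : Fin 3 → ℝ,
      ∑ i, x i • a i = ∑ i, y i • b i ∧ 0 < ∑ j, x j - ∑ j, y j := by
    obtain ⟨x, y, hne, hdep, hs⟩ := exists_dep hE a b 1 0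
    have hs' : ∑ j, x j = 0 := by linarith
    rcases lt_trichotomy (∑ j, x j - ∑ j, y j) 0 with h | h | h
    · refine ⟨-x, -y, neg x y hdep, ?_⟩
      simp only [Pi.neg_apply, Finset.sum_neg_distrib]; linarith
    · exfalso
      have ht : ∑ j, y j = 0 := by linarith
      rcases Z2 x y hdep h with ⟨h1, h2⟩ | ⟨h1, h2⟩
      · have h3 := (Finset.sum_eq_zero_iff_of_nonpos (fun i _ => h1 i)).1 hs'
        have h4 := (Finset.sum_eq_zero_iff_of_nonpos (fun i _ => h2 i)).1 ht
        rcases hne with h' | h'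
        · exact h' (funext fun i => h3 i (Finset.mem_univ _))
        · exact h' (funext fun i => h4 i (Finset.mem_univ _))
      · have h3 := (Finset.sum_eq_zero_iff_of_nonneg (fun i _ => h1 i)).1 hs'
        have h4 := (Finset.sum_eq_zero_iff_of_nonneg (fun i _ => h2 i)).1 ht
        rcases hne with h' | h'
        · exact h' (funext fun i => h3 i (Finset.mem_univ _))
        · exact h' (funext fun i => h4 i (Finset.mem_univ _))
    · exact ⟨x, y, hdep, h⟩
  set ω := ∑ j, x1 j - ∑ j, y1 j with hω
  let x : ℝ → Fin 3 → ℝ := fun t i => t * x0 i + x1 i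
  let y : ℝ → Fin 3 → ℝ := fun t i => t * y0 i + y1 i
  have hdep : ∀ t, ∑ i, x t i • a i = ∑ i, y t i • b i := by
    intro t
    simp only [x, y, add_smul, mul_smul, Finset.sum_add_distrib, ← Finset.smul_sum, hdep0, hdep1]
  have hw : ∀ t, ∑ j, x t j - ∑ j, y t j = ω := by
    intro t
    simp only [x, y, Finset.sum_add_distrib, ← Finset.mul_sum]
    linear_combination t * hw0
  let g : ℝ → ℝ := fun t => ∑ j, max (-x t j) 0 - ∑ j, max (-y t j) 0
  have hg : Continuous g := by
    simp only [g, x, y]; fun_prop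
  have hfg : ∀ t, ∑ j, max (x t j) 0 - ∑ j, max (y t j) 0 = g t + ω := by
    intro t
    have h1 := sum_max_sub (x t)
    have h2 := sum_max_sub (y t)
    have h3 := hw t
    simp only [g]; linarith
  obtain ⟨T1, hT1⟩ := fin3_large y0 y1 iy hiy
  have hgT1 : 0 ≤ g T1 := by
    rcases P3 (x T1) (y T1) (hdep T1) (by rw [hw]; exact hw1.le) ⟨iy, hT1 T1 le_rfl⟩ with h | h
    · simp only [g]; linarith
    · simp only [g]; linarith
  obtain ⟨T2, hT2⟩ := fin3_large x0 (-x1) ix hix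
  have hgT2 : g (-T2) ≤ -ω := by
    have hh : ∑ j, max (x (-T2) j) 0 - ∑ j, max (y (-T2) j) 0 ≤ 0 := by
      rcases P1 (x (-T2)) (y (-T2)) (hdep _) (by rw [hw]; exact hw1.le)
        ⟨ix, fun j hj => by
          have := hT2 T2 le_rfl j hj
          simp only [Pi.neg_apply] at this
          simp only [x]; linarith⟩ with h | h <;> linarith
    rw [hfg] at hh; linarith
  obtain ⟨t, ht⟩ : ∃ t, g t = -(ω / 2) := by
    have := intermediate_value_univ (-T2) T1 hg
    exact this ⟨by linarith, by linarith⟩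
  have hfin := dep_fg a b c haa hbb hab (x t) (y t) (hdep t)
  rw [hfg t] at hfin
  change 0 ≤ c * ((g t + ω) * g t) at hfin
  rw [ht] at hfin
  nlinarith [mul_pos hc (mul_pos hw1 hw1)]


/-- Among three neighbours of `v` one has `v` as its only neighbour. -/
theorem middle_nbr {E : Type*} [NormedAddCommGroup E] [InnerProductSpace ℝ E]
    [FiniteDimensional ℝ E] (hE : Module.finrank ℝ E ≤ 3) (v : E) (w : Fin 3 → E) (c R : ℝ)
    (hc : 0 < c) (hR : c < R) (hinj : Function.Injective w)
    (hv : inner ℝ v v = R) (hw : ∀ i, inner ℝ (w i) (w i) = R)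
    (hvw : ∀ i, inner ℝ v (w i) = c) :
    ∃ i, ∀ z : E, inner ℝ z z = R → (∀ j, c ≤ inner ℝ z (w j)) →
      inner ℝ z (w i) = c → z = v := by
  let L : (ℝ × (Fin 3 → ℝ)) →ₗ[ℝ] E :=
    { toFun := fun z => z.1 • v + ∑ i, z.2 i • w i
      map_add' := by
        intro z w
        simp [add_smul, Finset.sum_add_distrib]; abel
      map_smul' := by
        intro r z
        simp [mul_smul, Finset.smul_sum] }
  have hlt : Module.finrank ℝ E < Module.finrank ℝ (ℝ × (Fin 3 → ℝ)) := by
    simp; omega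
  have hk : LinearMap.ker L ≠ ⊥ := LinearMap.ker_ne_bot_of_finrank_lt hlt
  obtain ⟨z, hz, hz0⟩ := Submodule.exists_mem_ne_zero_of_ne_bot hk
  rw [LinearMap.mem_ker] at hz
  have h1 : z.1 • v + ∑ i, z.2 i • w i = 0 := hz
  obtain ⟨x0, x, hdep, hne, i, hi⟩ : ∃ (x0 : ℝ) (x : Fin 3 → ℝ),
      x0 • v + ∑ i, x i • w i = 0 ∧ ¬ (x0 = 0 ∧ x = 0) ∧ ∃ i, ∀ j, j ≠ i → x j ≤ 0 := by
    rcases fin3_sign z.2 with h | ⟨i, hi⟩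
    · exact ⟨z.1, z.2, h1, fun h => hz0 (Prod.ext h.1 h.2), h⟩
    · refine ⟨-z.1, -z.2, ?_, fun h => hz0 (Prod.ext (neg_eq_zero.1 h.1) (neg_eq_zero.1 h.2)),
        i, fun j hj => by simpa using hi j hj⟩
      simp only [Pi.neg_apply, neg_smul, Finset.sum_neg_distrib]
      rw [← neg_add, h1, neg_zero]
  have dot : ∀ u : E, x0 * inner ℝ u v + ∑ j, x j * inner ℝ u (w j) = 0 := by
    intro u
    have := congrArg (fun t => inner ℝ u t) hdep
    simpa only [inner_add_right, inner_sum, inner_smul_right, inner_zero_right] using this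
  have hle : ∀ u u' : E, inner ℝ u u = R → inner ℝ u' u' = R → inner ℝ u u' ≤ R ∧
      (R ≤ inner ℝ u u' → u = u') := by
    intro u u' hu hu'
    have h0 : 0 ≤ inner ℝ (u - u') (u - u') := real_inner_self_nonneg
    have h2 := real_inner_sub_sub_self u u'
    rw [hu, hu'] at h2
    refine ⟨by linarith, fun h => ?_⟩
    have : inner ℝ (u - u') (u - u') = 0 := by linarith
    exact sub_eq_zero.1 (inner_self_eq_zero.1 this)
  have d1 : x0 * R + c * ∑ j, x j = 0 := by
    have := dot v
    simp only [hv, hvw] at this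
    rw [← Finset.sum_mul] at this; linarith
  have hRpos : 0 < R := hc.trans hR
  have hsneg : ∑ j, x j < 0 := by
    by_contra hs
    push Not at hs
    have h2 := dot (w i)
    rw [real_inner_comm, hvw] at h2
    have h3 : ∀ j, x j * R ≤ x j * inner ℝ (w i) (w j) := by
      intro j
      by_cases hj : j = i
      · rw [hj, hw]
      · exact mul_le_mul_of_nonpos_left (hle _ _ (hw i) (hw j)).1 (hi j hj)
    have h4 : (∑ j, x j) * R ≤ ∑ j, x j * inner ℝ (w i) (w j) := by
      rw [Finset.sum_mul]; exact Finset.sum_le_sum fun j _ => h3 j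
    have h5 : (∑ j, x j) * (R ^ 2 - c ^ 2) ≤ 0 := by nlinarith
    have h6 : 0 < R ^ 2 - c ^ 2 := by nlinarith
    have hs0 : ∑ j, x j = 0 := by
      apply le_antisymm _ hs
      by_contra h; push Not at h
      nlinarith [mul_pos h h6]
    have hx0 : x0 = 0 := by
      rw [hs0] at d1
      have : x0 * R = 0 := by linarith
      exact (mul_eq_zero.1 this).resolve_right hRpos.ne'
    rw [hx0] at h2
    have h7 : ∑ j, (x j * inner ℝ (w i) (w j) - x j * R) = 0 := by
      rw [Finset.sum_sub_distrib, ← Finset.sum_mul, hs0]; linarith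
    have h8 := (Finset.sum_eq_zero_iff_of_nonneg
      (fun j _ => sub_nonneg.2 (h3 j))).1 h7
    have h9 : ∀ j, j ≠ i → x j = 0 := by
      intro j hj
      by_contra hxj
      have := h8 j (Finset.mem_univ _)
      have h10 : inner ℝ (w i) (w j) = R := by
        apply mul_left_cancel₀ hxj; linarith
      exact hj (hinj ((hle _ _ (hw i) (hw j)).2 h10.ge)).symm
    have h11 : x i = 0 := by
      rw [Finset.sum_eq_single i (fun j _ hj => h9 j hj) (by simp)] at hs0
      exact hs0
    refine hne ⟨hx0, funext fun j => ?_⟩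
    by_cases hj : j = i
    · rw [hj, h11]; rfl
    · exact h9 j hj
  refine ⟨i, fun u hu hge heq => ?_⟩
  apply (hle u v hu hv).2
  have h2 := dot u
  have h3 : ∑ j, x j * inner ℝ u (w j) ≤ (∑ j, x j) * c := by
    rw [Finset.sum_mul]
    refine Finset.sum_le_sum fun j _ => ?_
    by_cases hj : j = i
    · rw [hj, heq]
    · exact mul_le_mul_of_nonpos_left (hge j) (hi j hj)
  -- x0 = -(c/R) s
  have h4 : 0 ≤ (c * ∑ j, x j) * (R - inner ℝ u v) := by
    have h5 : 0 ≤ c * ∑ j, x j + x0 * inner ℝ u v := by linarith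
    have h6 : (c * ∑ j, x j) * (R - inner ℝ u v) =
        R * (c * ∑ j, x j + x0 * inner ℝ u v) := by
      linear_combination (-(inner ℝ u v)) * d1
    rw [h6]
    exact mul_nonneg hRpos.le h5
  by_contra hlt
  push Not at hlt
  have h5 : c * ∑ j, x j < 0 := mul_neg_of_pos_of_neg hc hsneg
  nlinarith [mul_pos (neg_pos.2 h5) (sub_pos.2 hlt)]

theorem inj3 {α : Type*} {a b c : α} (h01 : a ≠ b) (h02 : a ≠ c) (h12 : b ≠ c) :
    Function.Injective ![a, b, c] := by
  intro i j hij
  fin_cases i <;> fin_cases j <;> simp_all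

/-- Hopf–Pannwitz style counting. -/
theorem edge_count {α : Type*} [DecidableEq α] (n : ℕ) : ∀ (Y : Finset α) (F : Finset (Finset α)),
    Y.card = n → (∀ s ∈ F, s ⊆ Y ∧ s.card = 2) →
    (∀ v : α, ∀ w : Fin 3 → α, Function.Injective w → (∀ i, v ≠ w i ∧ ({v, w i} : Finset α) ∈ F) →
      ∃ i, ∀ s ∈ F, w i ∈ s → s = {v, w i}) →
    F.card ≤ n := by
  induction n with
  | zero =>
    intro Y F hY hF _
    rw [Finset.card_eq_zero] at hY
    subst hY
    rw [Nat.le_zero, Finset.card_eq_zero, Finset.eq_empty_iff_forall_notMem]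
    intro s hs
    obtain ⟨h1, h2⟩ := hF s hs
    rw [Finset.subset_empty] at h1
    subst h1; simp at h2
  | succ n ih =>
    intro Y F hY hF hP
    by_cases hdeg : ∃ v ∈ Y, (F.filter (fun s => v ∈ s)).card ≤ 1
    · obtain ⟨v, hv, hle⟩ := hdeg
      have h1 : (F.filter (fun s => v ∉ s)).card ≤ n := by
        refine ih (Y.erase v) _ (by rw [Finset.card_erase_of_mem hv, hY]; rfl) ?_ ?_
        · intro s hs
          rw [Finset.mem_filter] at hs
          exact ⟨Finset.subset_erase.2 ⟨(hF s hs.1).1, hs.2⟩, (hF s hs.1).2⟩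
        · intro u w hw h
          obtain ⟨i, hi⟩ := hP u w hw
            (fun i => ⟨(h i).1, (Finset.mem_filter.1 (h i).2).1⟩)
          exact ⟨i, fun s hs hws => hi s (Finset.mem_filter.1 hs).1 hws⟩
      have h2 := Finset.card_filter_add_card_filter_not (s := F) (fun s => v ∈ s)
      omega
    · push Not at hdeg
      have hdeg2 : ∀ v ∈ Y, (F.filter (fun s => v ∈ s)).card ≤ 2 := by
        intro v hv
        by_contra hgt
        push Not at hgt
        obtain ⟨t, ht, ht3⟩ := Finset.exists_subset_card_eq (show 3 ≤ _ from hgt)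
        have hother : ∀ s ∈ F, v ∈ s → ∃ u, v ≠ u ∧ s = {v, u} := by
          intro s hs hvs
          obtain ⟨p, q, hpq, rfl⟩ := Finset.card_eq_two.1 (hF s hs).2
          simp only [Finset.mem_insert, Finset.mem_singleton] at hvs
          rcases hvs with rfl | rfl
          · exact ⟨q, hpq, rfl⟩
          · exact ⟨p, hpq.symm, Finset.pair_comm _ _⟩
        obtain ⟨s0, s1, s2, h01, h02, h12, rfl⟩ := Finset.card_eq_three.1 ht3
        have m0 := Finset.mem_filter.1 (ht (by simp : s0 ∈ _))
        have m1 := Finset.mem_filter.1 (ht (by simp : s1 ∈ _))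
        have m2 := Finset.mem_filter.1 (ht (by simp : s2 ∈ _))
        obtain ⟨u0, hu0, rfl⟩ := hother s0 m0.1 m0.2
        obtain ⟨u1, hu1, rfl⟩ := hother s1 m1.1 m1.2
        obtain ⟨u2, hu2, rfl⟩ := hother s2 m2.1 m2.2
        have n01 : u0 ≠ u1 := fun h => h01 (by rw [h])
        have n02 : u0 ≠ u2 := fun h => h02 (by rw [h])
        have n12 : u1 ≠ u2 := fun h => h12 (by rw [h])
        obtain ⟨i, hi⟩ := hP v ![u0, u1, u2] (inj3 n01 n02 n12) (by
          intro i
          fin_cases i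
          · exact ⟨hu0, m0.1⟩
          · exact ⟨hu1, m1.1⟩
          · exact ⟨hu2, m2.1⟩)
        have hmem : ({v, ![u0, u1, u2] i} : Finset α) ∈ F := by
          fin_cases i
          · exact m0.1
          · exact m1.1
          · exact m2.1
        have hY' : ![u0, u1, u2] i ∈ Y := (hF _ hmem).1 (by simp)
        have := hdeg _ hY'
        have hle : (F.filter (fun s => ![u0, u1, u2] i ∈ s)).card ≤ 1 := by
          rw [Finset.card_le_one]
          intro s hs s' hs'
          rw [Finset.mem_filter] at hs hs'
          rw [hi s hs.1 hs.2, hi s' hs'.1 hs'.2]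
        omega
      have hdc := Finset.sum_card_bipartiteAbove_eq_sum_card_bipartiteBelow
        (s := Y) (t := F) (fun v s => v ∈ s)
      simp only [Finset.bipartiteAbove, Finset.bipartiteBelow] at hdc
      have e1 : ∑ s ∈ F, (Y.filter (fun v => v ∈ s)).card = F.card * 2 := by
        rw [Finset.sum_const_nat]
        intro s hs
        have : Y.filter (fun v => v ∈ s) = s := by
          ext v
          simp only [Finset.mem_filter]
          exact ⟨fun h => h.2, fun h => ⟨(hF s hs).1 h, h⟩⟩
        rw [this, (hF s hs).2]
      have e2 := Finset.sum_le_card_nsmul Y (fun v => (F.filter (fun s => v ∈ s)).card) 2 hdeg2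
      rw [hY, smul_eq_mul] at e2
      omega

/-- Reduction to a sphere around the centroid of a clique. -/
theorem sphere_setup (d : ℕ) (C : Finset (EuclideanSpace ℝ (Fin d))) (hne : C.Nonempty)
    (hC : ∀ x ∈ C, ∀ y ∈ C, x ≠ y → ‖x - y‖ = 1) :
    ∃ (o : EuclideanSpace ℝ (Fin d)) (V : Submodule ℝ (EuclideanSpace ℝ (Fin d))),
      Module.finrank ℝ V + C.card ≤ d + 1 ∧
      (∀ x, (∀ q ∈ C, ‖x - q‖ = 1) → x - o ∈ V) ∧
      (∀ x y, (∀ q ∈ C, ‖x - q‖ = 1) → (∀ q ∈ C, ‖y - q‖ = 1) →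
        inner ℝ (x - o) (y - o) = 1 / 2 + 1 / (2 * (C.card : ℝ)) - ‖x - y‖ ^ 2 / 2) := by
  classical
  set k : ℝ := (C.card : ℝ) with hk
  have hkpos : 0 < k := by rw [hk]; exact_mod_cast hne.card_pos
  obtain ⟨q0, hq0⟩ := hne
  set o := k⁻¹ • ∑ q ∈ C, q with ho
  have four : ∀ x y p q : EuclideanSpace ℝ (Fin d), inner ℝ (x - q) (y - p) =
      (‖x - p‖ ^ 2 + ‖y - q‖ ^ 2 - ‖x - y‖ ^ 2 - ‖q - p‖ ^ 2) / 2 := by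
    intro x y p q
    simp only [← real_inner_self_eq_norm_sq, inner_sub_left, inner_sub_right]
    rw [real_inner_comm x y, real_inner_comm x p, real_inner_comm y q, real_inner_comm p q]
    ring
  have hsumC : ∀ q ∈ C, ∑ p ∈ C, ‖q - p‖ ^ 2 = k - 1 := by
    intro q hq
    have : ∀ p ∈ C, ‖q - p‖ ^ 2 = 1 - if p = q then 1 else 0 := by
      intro p hp
      by_cases h : p = q
      · simp [h]
      · rw [hC q hq p hp (Ne.symm h)]; simp [h]
    rw [Finset.sum_congr rfl this]
    simp [hq, hk]
  have hxo : ∀ x, k • (x - o) = ∑ q ∈ C, (x - q) := by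
    intro x
    rw [smul_sub, ho, smul_smul, mul_inv_cancel₀ hkpos.ne', one_smul, Finset.sum_sub_distrib,
      Finset.sum_const, hk, Nat.cast_smul_eq_nsmul]
  let f : {q // q ∈ C.erase q0} → EuclideanSpace ℝ (Fin d) := fun q => q.1 - q0
  have hli : LinearIndependent ℝ f := by
    rw [Fintype.linearIndependent_iff]
    intro l hl
    have hdot : ∀ p : {q // q ∈ C.erase q0}, l p + ∑ q, l q = 0 := by
      intro p
      have hp := Finset.mem_erase.1 p.2
      have := congrArg (fun u => inner ℝ (f p) u) hl
      simp only [inner_sum, inner_smul_right, inner_zero_right] at this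
      have h2 : ∀ q, l q * inner ℝ (f p) (f q) = (if q = p then l p else 0) / 2 + l q / 2 := by
        intro q
        have hq := Finset.mem_erase.1 q.2
        simp only [f]
        rw [four, hC p.1 hp.2 q0 hq0 hp.1, hC q.1 hq.2 q0 hq0 hq.1]
        by_cases h : q = p
        · subst h; simp
        · rw [hC p.1 hp.2 q.1 hq.2 (fun h' => h (Subtype.ext h'.symm))]; simp [h]; ring
      rw [Finset.sum_congr rfl fun q _ => h2 q, Finset.sum_add_distrib, ← Finset.sum_div,
        ← Finset.sum_div] at this
      simp only [Finset.sum_ite_eq', Finset.mem_univ, if_true] at this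
      linarith
    have hs : ∑ q, l q = 0 := by
      have h3 : ∑ p : {q // q ∈ C.erase q0}, (l p + ∑ q, l q) = 0 :=
        Finset.sum_eq_zero fun p _ => hdot p
      rw [Finset.sum_add_distrib, Finset.sum_const, nsmul_eq_mul] at h3
      have h4 : (1 + ((Finset.univ : Finset {q // q ∈ C.erase q0}).card : ℝ)) * ∑ q, l q = 0 := by
        linarith
      refine (mul_eq_zero.1 h4).resolve_left ?_
      positivity
    intro p
    have := hdot p
    linarith
  have hfr := finrank_span_eq_card hli
  refine ⟨o, (Submodule.span ℝ (Set.range f))ᗮ, ?_, ?_, ?_⟩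
  · have h1 := Submodule.finrank_add_finrank_orthogonal (Submodule.span ℝ (Set.range f))
    rw [hfr, finrank_euclideanSpace_fin, Fintype.card_coe, Finset.card_erase_of_mem hq0] at h1
    have : 0 < C.card := Finset.card_pos.2 ⟨q0, hq0⟩
    omega
  · intro x hx
    rw [Submodule.mem_orthogonal]
    intro u hu
    induction hu using Submodule.span_induction with
    | mem u hu =>
      obtain ⟨q, rfl⟩ := hu
      have hq := (Finset.mem_erase.1 q.2).2
      have h1 : inner ℝ (q.1 - q0) (k • (x - o)) = 0 := by
        rw [hxo, inner_sum]
        have : ∀ p ∈ C, inner ℝ (q.1 - q0) (x - p) = (‖q.1 - p‖ ^ 2 - ‖q0 - p‖ ^ 2) / 2 := by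
          intro p hp
          rw [four, hx q0 hq0, norm_sub_rev q.1 x, hx q.1 hq]; ring
        rw [Finset.sum_congr rfl this, ← Finset.sum_div, Finset.sum_sub_distrib,
          hsumC q.1 hq, hsumC q0 hq0]
        simp
      rw [inner_smul_right] at h1
      exact (mul_eq_zero.1 h1).resolve_left hkpos.ne'
    | zero => simp
    | add u v _ _ h1 h2 => rw [inner_add_left, h1, h2, add_zero]
    | smul r u _ h1 => rw [inner_smul_left, h1, mul_zero]
  · intro x y hx hy
    have h1 : inner ℝ (k • (x - o)) (k • (y - o)) =
        k * (k * (1 - ‖x - y‖ ^ 2 / 2)) - k * (k - 1) / 2 := by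
      rw [hxo, hxo, sum_inner]
      have : ∀ q ∈ C, inner ℝ (x - q) (∑ p ∈ C, (y - p)) =
          k * (1 - ‖x - y‖ ^ 2 / 2) - (k - 1) / 2 := by
        intro q hq
        rw [inner_sum]
        have h2 : ∀ p ∈ C, inner ℝ (x - q) (y - p) = (1 - ‖x - y‖ ^ 2 / 2) - ‖q - p‖ ^ 2 / 2 := by
          intro p hp
          rw [four, hx p hp, hy q hq]; ring
        rw [Finset.sum_congr rfl h2, Finset.sum_sub_distrib, ← Finset.sum_div, hsumC q hq,
          Finset.sum_const, nsmul_eq_mul]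
      rw [Finset.sum_congr rfl this, Finset.sum_const, nsmul_eq_mul, ← hk]; ring
    rw [inner_smul_left, inner_smul_right] at h1
    simp only [RCLike.conj_to_real] at h1
    field_simp
    have : k * (k * (inner ℝ (x - o) (y - o) * 2)) = k * (k * (1 - ‖x-y‖^2) + 1) := by linarith
    have := mul_left_cancel₀ hkpos.ne' this
    linarith


def IsClq {α : Type*} (adj : α → α → Prop) (s : Finset α) : Prop :=
  ∀ x ∈ s, ∀ y ∈ s, x ≠ y → adj x y

theorem IsClq.mono {α : Type*} {adj : α → α → Prop} {s t : Finset α} (h : IsClq adj t)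
    (hst : s ⊆ t) : IsClq adj s :=
  fun x hx y hy => h x (hst hx) y (hst hy)

theorem IsClq.insert {α : Type*} [DecidableEq α] {adj : α → α → Prop}
    (hsymm : ∀ x y, adj x y → adj y x) {s : Finset α} {v : α} (h : IsClq adj s)
    (hv : ∀ x ∈ s, x ≠ v → adj x v) : IsClq adj (insert v s) := by
  intro x hx y hy hxy
  rw [Finset.mem_insert] at hx hy
  rcases hx with rfl | hx <;> rcases hy with rfl | hy
  · exact absurd rfl hxy
  · exact hsymm _ _ (hv y hy (Ne.symm hxy))
  · exact hv x hx hxy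
  · exact h x hx y hy hxy

/-- Counting relative to a base set. -/
theorem count_base {α : Type*} [DecidableEq α] (d : ℕ) (X S : Finset α) (hSX : S ⊆ X)
    (F : Finset (Finset α)) (hFX : ∀ K ∈ F, K ⊆ X)
    (hin : (F.filter (fun K => K ⊆ S)).card ≤ S.card)
    (huniq : ∀ v ∈ X, v ∉ S → ∀ K ∈ F, ∀ L ∈ F, v ∈ K → v ∈ L → K = L) :
    F.card ≤ X.card := by
  have h1 : (F.filter (fun K => ¬ K ⊆ S)).card ≤ (X \ S).card := by
    apply Finset.card_le_card_of_forall_subsingleton (fun K v => v ∈ K)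
    · intro K hK
      rw [Finset.mem_filter, Finset.not_subset] at hK
      obtain ⟨hKF, v, hv, hvS⟩ := hK
      exact ⟨v, Finset.mem_sdiff.2 ⟨hFX K hKF hv, hvS⟩, hv⟩
    · intro v hv K hK L hL
      rw [Finset.mem_sdiff] at hv
      exact huniq v hv.1 hv.2 K (Finset.mem_filter.1 hK.1).1 L (Finset.mem_filter.1 hL.1).1
        hK.2 hL.2
  have h2 := Finset.card_filter_add_card_filter_not (s := F) (fun K => K ⊆ S)
  have h3 := Finset.card_sdiff_add_card_eq_card hSX
  omega

/-- If all cliques meet `S` in at least `d-1` points, two distinct ones outside through `v`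
make `v` adjacent to at least `d` points of `S`. -/
theorem two_through {α : Type*} [DecidableEq α] (d : ℕ) {adj : α → α → Prop} (S K L : Finset α)
    (hK : K.card = d) (hL : L.card = d) (cK : IsClq adj K) (cL : IsClq adj L)
    (hKS : d ≤ (K ∩ S).card + 1) (hLS : d ≤ (L ∩ S).card + 1) (v : α) (hv : v ∉ S)
    (hvK : v ∈ K) (hvL : v ∈ L) (hne : K ≠ L) :
    ∃ T, T ⊆ S ∧ T.card = d ∧ ∀ x ∈ T, adj x v := by
  have key : ∀ K : Finset α, K.card = d → d ≤ (K ∩ S).card + 1 → v ∈ K →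
      insert v (K ∩ S) = K := by
    intro K hK hKS hvK
    apply Finset.eq_of_subset_of_card_le
    · intro x hx
      rw [Finset.mem_insert, Finset.mem_inter] at hx
      rcases hx with rfl | hx
      · exact hvK
      · exact hx.1
    · rw [Finset.card_insert_of_notMem (by simp [hv])]; omega
  have kK := key K hK hKS hvK
  have kL := key L hL hLS hvL
  have hss : ¬ (L ∩ S ⊆ K ∩ S) := by
    intro h
    have : L ⊆ K := by
      rw [← kK, ← kL]; exact Finset.insert_subset_insert _ h
    exact hne (Finset.eq_of_subset_of_card_le this (by omega)).symm
  have hlt : (K ∩ S).card < ((K ∩ S) ∪ (L ∩ S)).card := by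
    apply Finset.card_lt_card
    refine ⟨Finset.subset_union_left, fun h => hss (Finset.subset_union_right.trans h)⟩
  obtain ⟨T, hT, hTd⟩ := Finset.exists_subset_card_eq (show d ≤ ((K ∩ S) ∪ (L ∩ S)).card by omega)
  refine ⟨T, fun x hx => ?_, hTd, fun x hx => ?_⟩
  · have := hT hx
    simp only [Finset.mem_union, Finset.mem_inter] at this
    tauto
  · have := hT hx
    simp only [Finset.mem_union, Finset.mem_inter] at this
    rcases this with h | h
    · exact cK x h.1 v hvK (fun e => hv (e ▸ h.2))
    · exact cL x h.1 v hvL (fun e => hv (e ▸ h.2))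

theorem clique_count {α : Type*} [DecidableEq α] (d : ℕ) (hd : 3 ≤ d) (adj : α → α → Prop)
    (hsymm : ∀ x y, adj x y → adj y x) (X : Finset α) (F : Finset (Finset α))
    (hF : ∀ K, K ∈ F ↔ K ⊆ X ∧ K.card = d ∧ IsClq adj K)
    (h1 : ∀ K ∈ F, ∀ L ∈ F, d ≤ (K ∩ L).card + 2)
    (h2 : ∀ S ∈ F, ∀ v ∈ X, ∀ v' ∈ X, (∀ x ∈ S, adj x v) → (∀ x ∈ S, adj x v') → v = v')
    (h3 : ∀ C, C ⊆ X → C.card + 2 = d → IsClq adj C → (∀ K ∈ F, C ⊆ K) → F.card ≤ X.card) :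
    F.card ≤ X.card := by
  have hFX : ∀ K ∈ F, K ⊆ X := fun K hK => ((hF K).1 hK).1
  have hFd : ∀ K ∈ F, K.card = d := fun K hK => ((hF K).1 hK).2.1
  have hFc : ∀ K ∈ F, IsClq adj K := fun K hK => ((hF K).1 hK).2.2
  by_cases hbig : ∃ S, S ⊆ X ∧ S.card = d + 1 ∧ IsClq adj S
  · obtain ⟨S, hSX, hSd, hSc⟩ := hbig
    have hsub : ∀ s ∈ S, S.erase s ∈ F := by
      intro s hs
      refine (hF _).2 ⟨(Finset.erase_subset _ _).trans hSX, ?_, hSc.mono (Finset.erase_subset _ _)⟩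
      rw [Finset.card_erase_of_mem hs, hSd]; rfl
    have hint : ∀ K ∈ F, d ≤ (K ∩ S).card + 1 := by
      intro K hK
      obtain ⟨s, hs⟩ : S.Nonempty := Finset.card_pos.1 (by omega)
      have hn : 0 < (K ∩ S.erase s).card := by
        have := h1 K hK _ (hsub s hs); omega
      obtain ⟨t, ht⟩ := Finset.card_pos.1 hn
      rw [Finset.mem_inter, Finset.mem_erase] at ht
      have := h1 K hK _ (hsub t ht.2.2)
      rw [← Finset.erase_inter_comm, Finset.erase_inter,
        Finset.card_erase_of_mem (Finset.mem_inter.2 ⟨ht.1, ht.2.2⟩)] at this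
      omega
    refine count_base d X S hSX F hFX ?_ ?_
    · calc (F.filter (fun K => K ⊆ S)).card ≤ (S.powersetCard d).card := by
            apply Finset.card_le_card
            intro K hK
            rw [Finset.mem_filter] at hK
            exact Finset.mem_powersetCard.2 ⟨hK.2, hFd K hK.1⟩
        _ = S.card := by
            rw [Finset.card_powersetCard, hSd]; simp
    · intro v hvX hvS K hK L hL hvK hvL
      by_contra hne
      obtain ⟨T, hTS, hTd, hTv⟩ := two_through d S K L (hFd K hK) (hFd L hL) (hFc K hK) (hFc L hL)
        (hint K hK) (hint L hL) v hvS hvK hvL hne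
      obtain ⟨s, hs, hsT⟩ : ∃ s ∈ S, s ∉ T := by
        by_contra h
        push Not at h
        have := Finset.card_le_card (show S ⊆ T from h)
        omega
      have := h2 T ((hF T).2 ⟨hTS.trans hSX, hTd, hSc.mono hTS⟩) v hvX s (hSX hs) hTv
        (fun x hx => hSc x (hTS hx) s hs (fun e => hsT (e ▸ hx)))
      exact hvS (this ▸ hs)
  · have nobig : ∀ K ∈ F, ∀ v ∈ X, v ∉ K → (∀ x ∈ K, adj x v) → False := by
      intro K hK v hv hvK h
      refine hbig ⟨insert v K, Finset.insert_subset hv (hFX K hK), ?_,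
        (hFc K hK).insert hsymm fun x hx _ => h x hx⟩
      rw [Finset.card_insert_of_notMem hvK, hFd K hK]
    -- base clique
    have base : ∀ F0 ∈ F, (∀ K ∈ F, d ≤ (K ∩ F0).card + 1) → F.card ≤ X.card := by
      intro F0 hF0 hint
      refine count_base d X F0 (hFX _ hF0) F hFX ?_ ?_
      · have : (F.filter (fun K => K ⊆ F0)).card ≤ 1 := by
          rw [Finset.card_le_one]
          intro K hK L hL
          rw [Finset.mem_filter] at hK hL
          rw [Finset.eq_of_subset_of_card_le hK.2 (by rw [hFd _ hK.1, hFd _ hF0]),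
            Finset.eq_of_subset_of_card_le hL.2 (by rw [hFd _ hL.1, hFd _ hF0])]
        rw [hFd _ hF0]; omega
      · intro v hvX hvS K hK L hL hvK hvL
        by_contra hne
        obtain ⟨T, hTS, hTd, hTv⟩ := two_through d F0 K L (hFd K hK) (hFd L hL) (hFc K hK)
          (hFc L hL) (hint K hK) (hint L hL) v hvS hvK hvL hne
        have hTF : T = F0 := Finset.eq_of_subset_of_card_le hTS (by rw [hTd, hFd _ hF0])
        subst hTF
        exact nobig T hF0 v hvX hvS hTv
    rcases F.eq_empty_or_nonempty with rfl | ⟨K, hK⟩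
    · simp
    by_cases hall : ∀ L ∈ F, d ≤ (L ∩ K).card + 1
    · exact base K hK hall
    push Not at hall
    obtain ⟨L, hL, hLK⟩ := hall
    have hKL2 := h1 L hL K hK
    set C := K ∩ L with hC
    have hCd : C.card + 2 = d := by
      have e : L ∩ K = C := Finset.inter_comm L K
      rw [e] at hLK hKL2; omega
    have hCK : C ⊆ K := Finset.inter_subset_left
    have hCL : C ⊆ L := Finset.inter_subset_right
    by_cases hcom : ∀ M ∈ F, C ⊆ M
    · exact h3 C (hCK.trans (hFX K hK)) hCd ((hFc K hK).mono hCK) hcom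
    push Not at hcom
    obtain ⟨M, hM, hMC⟩ := hcom
    have hKd := hFd K hK
    have hLd := hFd L hL
    have hKc := hFc K hK
    have hLc := hFc L hL
    have cKL : (K \ L).card = 2 := by
      have := Finset.card_sdiff_add_card_inter K L
      rw [← hC] at this; omega
    have cLK : (L \ K).card = 2 := by
      have := Finset.card_sdiff_add_card_inter L K
      rw [Finset.inter_comm, ← hC] at this; omega
    obtain ⟨a', b', hab', hKLe⟩ := Finset.card_eq_two.1 cKL
    obtain ⟨p', q', hpq', hLKe⟩ := Finset.card_eq_two.1 cLK
    -- no cross point adjacent to both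
    have noL : ∀ p ∈ L \ K, (∀ x ∈ K \ L, adj x p) → False := by
      intro p hp h
      rw [Finset.mem_sdiff] at hp
      refine nobig K hK p (hFX L hL hp.1) hp.2 fun x hx => ?_
      by_cases hxL : x ∈ L
      · exact hLc x hxL p hp.1 (fun e => hp.2 (e ▸ hx))
      · exact h x (Finset.mem_sdiff.2 ⟨hx, hxL⟩)
    have noK : ∀ p ∈ K \ L, (∀ x ∈ L \ K, adj x p) → False := by
      intro p hp h
      rw [Finset.mem_sdiff] at hp
      refine nobig L hL p (hFX K hK hp.1) hp.2 fun x hx => ?_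
      by_cases hxL : x ∈ K
      · exact hKc x hxL p hp.1 (fun e => hp.2 (e ▸ hx))
      · exact h x (Finset.mem_sdiff.2 ⟨hx, hxL⟩)
    -- structure of cliques not containing C
    have struct : ∀ N ∈ F, ¬ C ⊆ N → ∃ a ∈ K \ L, ∃ p ∈ L \ K, ∃ x ∈ X, x ∉ K ∧ x ∉ L ∧
        a ∈ N ∧ p ∈ N ∧ x ∈ N ∧ (N ∩ C).card + 3 = d ∧ N = insert x (insert a (insert p (N ∩ C))) := by
      intro N hN hCN
      have hNd := hFd N hN
      have hNC : (N ∩ C).card < C.card := by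
        apply Finset.card_lt_card
        refine ⟨Finset.inter_subset_right, fun h => hCN (h.trans Finset.inter_subset_left)⟩
      have i1 := h1 N hN K hK
      have i2 := h1 N hN L hL
      have e1 : (N ∩ K).card = (N ∩ C).card + (N ∩ (K \ L)).card := by
        rw [← Finset.card_union_of_disjoint]
        · congr 1; ext x; simp only [hC, Finset.mem_inter, Finset.mem_union, Finset.mem_sdiff]; tauto
        · rw [Finset.disjoint_left]; intro x; simp only [hC, Finset.mem_inter, Finset.mem_sdiff]; tauto
      have e2 : (N ∩ L).card = (N ∩ C).card + (N ∩ (L \ K)).card := by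
        rw [← Finset.card_union_of_disjoint]
        · congr 1; ext x; simp only [hC, Finset.mem_inter, Finset.mem_union, Finset.mem_sdiff]; tauto
        · rw [Finset.disjoint_left]; intro x; simp only [hC, Finset.mem_inter, Finset.mem_sdiff]; tauto
      obtain ⟨a, ha⟩ : (N ∩ (K \ L)).Nonempty := Finset.card_pos.1 (by omega)
      obtain ⟨p, hp⟩ : (N ∩ (L \ K)).Nonempty := Finset.card_pos.1 (by omega)
      rw [Finset.mem_inter] at ha hp
      have lt1 : (N ∩ (K \ L)).card < (K \ L).card := by
        apply Finset.card_lt_card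
        refine ⟨Finset.inter_subset_right, fun h => noL p hp.2 fun x hx => ?_⟩
        refine hFc N hN x (Finset.mem_inter.1 (h hx)).1 p hp.1 ?_
        rintro rfl
        exact (Finset.mem_sdiff.1 hp.2).2 (Finset.mem_sdiff.1 hx).1
      have lt2 : (N ∩ (L \ K)).card < (L \ K).card := by
        apply Finset.card_lt_card
        refine ⟨Finset.inter_subset_right, fun h => noK a ha.2 fun x hx => ?_⟩
        refine hFc N hN x (Finset.mem_inter.1 (h hx)).1 a ha.1 ?_
        rintro rfl
        exact (Finset.mem_sdiff.1 ha.2).2 (Finset.mem_sdiff.1 hx).1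
      have hap : a ≠ p := by
        rintro rfl
        exact (Finset.mem_sdiff.1 ha.2).2 (Finset.mem_sdiff.1 hp.2).1
      have haL := (Finset.mem_sdiff.1 ha.2)
      have hpK := (Finset.mem_sdiff.1 hp.2)
      have cc : (N ∩ C).card + 3 = d := by omega
      have pC : p ∉ N ∩ C := by
        simp only [hC, Finset.mem_inter]; tauto
      have aC : a ∉ insert p (N ∩ C) := by
        simp only [hC, Finset.mem_inter, Finset.mem_insert]; tauto
      have e3 : N ∩ (K ∪ L) = insert a (insert p (N ∩ C)) := by
        symm
        apply Finset.eq_of_subset_of_card_le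
        · intro x
          simp only [hC, Finset.mem_inter, Finset.mem_insert, Finset.mem_union]
          rintro (rfl | rfl | h)
          · exact ⟨ha.1, Or.inl haL.1⟩
          · exact ⟨hp.1, Or.inr hpK.1⟩
          · tauto
        · rw [Finset.card_insert_of_notMem aC, Finset.card_insert_of_notMem pC]
          have : N ∩ (K ∪ L) = (N ∩ K) ∪ (N ∩ (L \ K)) := by
            ext x; simp only [Finset.mem_inter, Finset.mem_union, Finset.mem_sdiff]; tauto
          rw [this]
          refine (Finset.card_union_le _ _).trans ?_
          omega
      have e4 : (N \ (K ∪ L)).card = 1 := by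
        have := Finset.card_sdiff_add_card_inter N (K ∪ L)
        rw [e3, Finset.card_insert_of_notMem aC, Finset.card_insert_of_notMem pC] at this
        omega
      obtain ⟨x, hx⟩ := Finset.card_eq_one.1 e4
      have hxm : x ∈ N \ (K ∪ L) := by rw [hx]; simp
      rw [Finset.mem_sdiff, Finset.mem_union, not_or] at hxm
      refine ⟨a, ha.2, p, hp.2, x, hFX N hN hxm.1, hxm.2.1, hxm.2.2, ha.1, hp.1, hxm.1, cc, ?_⟩
      rw [← e3, Finset.insert_eq, ← hx, Finset.sdiff_union_inter]
    obtain ⟨a, ha, p, hp, x, hxX, hxK, hxL, haM, hpM, hxM, hMd, hMe⟩ := struct M hM hMC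
    have ha' := Finset.mem_sdiff.1 ha
    have hp' := Finset.mem_sdiff.1 hp
    have hap : a ≠ p := by rintro rfl; exact ha'.2 hp'.1
    have adjap : adj a p := hFc M hM a haM p hpM hap
    have hpC : p ∉ C := fun h => hp'.2 (hCK h)
    have haC : a ∉ insert p C := by
      rw [Finset.mem_insert, not_or]; exact ⟨hap, fun h => ha'.2 (hCL h)⟩
    have hF0 : insert a (insert p C) ∈ F := by
      refine (hF _).2 ⟨?_, ?_, ?_⟩
      · exact Finset.insert_subset (hFX K hK ha'.1) (Finset.insert_subset (hFX L hL hp'.1)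
          (hCK.trans (hFX K hK)))
      · rw [Finset.card_insert_of_notMem haC, Finset.card_insert_of_notMem hpC]; omega
      · refine ((hKc.mono hCK).insert hsymm ?_).insert hsymm ?_
        · intro y hy hne
          exact hLc y (hCL hy) p hp'.1 hne
        · intro y hy hne
          rw [Finset.mem_insert] at hy
          rcases hy with rfl | hy
          · exact hsymm _ _ adjap
          · exact hKc y (hCK hy) a ha'.1 hne
    refine base _ hF0 fun N hN => ?_
    by_cases hCN : C ⊆ N
    · -- N contains C
      by_cases haN : a ∈ N
      · have : insert a C ⊆ N ∩ insert a (insert p C) := by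
          intro y hy
          rw [Finset.mem_insert] at hy
          simp only [Finset.mem_inter, Finset.mem_insert]
          rcases hy with rfl | hy
          · exact ⟨haN, Or.inl rfl⟩
          · exact ⟨hCN hy, Or.inr (Or.inr hy)⟩
        have := Finset.card_le_card this
        rw [Finset.card_insert_of_notMem (fun h => haC (Finset.mem_insert_of_mem h))] at this
        omega
      by_cases hpN : p ∈ N
      · have : insert p C ⊆ N ∩ insert a (insert p C) := by
          intro y hy
          have hy' := hy
          rw [Finset.mem_insert] at hy
          simp only [Finset.mem_inter, Finset.mem_insert]
          rcases hy with rfl | hy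
          · exact ⟨hpN, Or.inr (Or.inl rfl)⟩
          · exact ⟨hCN hy, Or.inr (Or.inr hy)⟩
        have := Finset.card_le_card this
        rw [Finset.card_insert_of_notMem hpC] at this
        omega
      exfalso
      have hxN : x ∈ N := by
        by_contra hxN
        have hsub : M ∩ N ⊆ M ∩ C := by
          intro y hy
          rw [Finset.mem_inter] at hy
          have := hy.1
          rw [hMe] at this
          simp only [Finset.mem_insert] at this
          rcases this with rfl | rfl | rfl | h
          · exact absurd hy.2 hxN
          · exact absurd hy.2 haN
          · exact absurd hy.2 hpN
          · exact h
        have := Finset.card_le_card hsub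
        have := h1 M hM N hN
        omega
      refine nobig _ hF0 x hxX ?_ ?_
      · simp only [Finset.mem_insert, not_or]
        exact ⟨fun e => hxK (e ▸ ha'.1), fun e => hxL (e ▸ hp'.1), fun h => hxK (hCK h)⟩
      · intro y hy
        simp only [Finset.mem_insert] at hy
        rcases hy with rfl | rfl | hy
        · exact hFc M hM _ haM x hxM (fun e => hxK (e ▸ ha'.1))
        · exact hFc M hM _ hpM x hxM (fun e => hxL (e ▸ hp'.1))
        · exact hFc N hN y (hCN hy) x hxN (fun e => hxK (e ▸ hCK hy))
    · obtain ⟨a2, ha2, p2, hp2, x2, hx2X, hx2K, hx2L, ha2N, hp2N, hx2N, hNd, hNe⟩ :=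
        struct N hN hCN
      have ha2' := Finset.mem_sdiff.1 ha2
      have hp2' := Finset.mem_sdiff.1 hp2
      have hap2 : a2 ≠ p2 := by rintro rfl; exact ha2'.2 hp2'.1
      have adjap2 : adj a2 p2 := hFc N hN a2 ha2N p2 hp2N hap2
      have two : ∀ (S : Finset α) (u v : α), S.card = 2 → u ∈ S → v ∈ S → u ≠ v →
          ∀ y ∈ S, y = u ∨ y = v := by
        intro S u v hS hu hv huv y hy
        by_contra h
        push Not at h
        have : ({y, u, v} : Finset α) ⊆ S := by
          intro z hz
          simp only [Finset.mem_insert, Finset.mem_singleton] at hz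
          rcases hz with rfl | rfl | rfl <;> assumption
        have := Finset.card_le_card this
        rw [Finset.card_eq_three.2 ⟨y, u, v, h.1, h.2, huv, rfl⟩] at this
        omega
      by_cases hA : a2 = a
      · by_cases hP : p2 = p
        · subst hA hP
          have : insert a2 (insert p2 (N ∩ C)) ⊆ N ∩ insert a2 (insert p2 C) := by
            intro y hy
            simp only [Finset.mem_insert, Finset.mem_inter] at hy ⊢
            rcases hy with rfl | rfl | hy
            · exact ⟨ha2N, Or.inl rfl⟩
            · exact ⟨hp2N, Or.inr (Or.inl rfl)⟩
            · exact ⟨hy.1, Or.inr (Or.inr hy.2)⟩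
          have := Finset.card_le_card this
          rw [Finset.card_insert_of_notMem, Finset.card_insert_of_notMem] at this
          · omega
          · exact fun h => hpC (Finset.mem_inter.1 h).2
          · intro h
            apply haC
            rw [Finset.mem_insert] at h ⊢
            exact h.imp_right fun h => (Finset.mem_inter.1 h).2
        · exfalso
          subst hA
          refine noK a2 ha2 fun y hy => ?_
          rcases two _ _ _ cLK hp hp2 (Ne.symm hP) y hy with rfl | rfl
          · exact hsymm _ _ adjap
          · exact hsymm _ _ adjap2
      · exfalso
        by_cases hP : p2 = p
        · subst hP
          refine noL p2 hp2 fun y hy => ?_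
          rcases two _ _ _ cKL ha ha2 (Ne.symm hA) y hy with rfl | rfl
          · exact adjap
          · exact adjap2
        · -- octahedron
          have haN : a ∉ N := by
            intro h
            rw [hNe] at h
            simp only [Finset.mem_insert] at h
            rcases h with h | h | h | h
            · exact hx2K (h ▸ ha'.1)
            · exact hA h.symm
            · exact ha'.2 (h ▸ hp2'.1)
            · exact ha'.2 (hCL (Finset.mem_inter.1 h).2)
          have hpN : p ∉ N := by
            intro h
            rw [hNe] at h
            simp only [Finset.mem_insert] at h
            rcases h with h | h | h | h
            · exact hx2L (h ▸ hp'.1)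
            · exact hp'.2 (h ▸ ha2'.1)
            · exact hP h.symm
            · exact hp'.2 (hCK (Finset.mem_inter.1 h).2)
          have hMN := h1 M hM N hN
          have hsub : M ∩ N ⊆ insert x (M ∩ N ∩ C) := by
            intro y hy
            have hy' := Finset.mem_inter.1 hy
            have := hy'.1
            rw [hMe] at this
            simp only [Finset.mem_insert] at this
            rw [Finset.mem_insert]
            rcases this with rfl | rfl | rfl | h
            · exact Or.inl rfl
            · exact absurd hy'.2 haN
            · exact absurd hy'.2 hpN
            · exact Or.inr (Finset.mem_inter.2 ⟨hy, (Finset.mem_inter.1 h).2⟩)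
          have c1 := Finset.card_le_card hsub
          have c2 := Finset.card_insert_le x (M ∩ N ∩ C)
          have s1 : M ∩ N ∩ C ⊆ M ∩ C := fun y hy => by
            simp only [Finset.mem_inter] at hy ⊢; tauto
          have s2 : M ∩ N ∩ C ⊆ N ∩ C := fun y hy => by
            simp only [Finset.mem_inter] at hy ⊢; tauto
          have q1 : M ∩ N ∩ C = M ∩ C := Finset.eq_of_subset_of_card_le s1 (by omega)
          have q2 : M ∩ N ∩ C = N ∩ C := Finset.eq_of_subset_of_card_le s2 (by omega)
          have hxN : x ∈ N := by
            by_contra hxN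
            have : M ∩ N ⊆ M ∩ N ∩ C := by
              intro y hy
              rcases Finset.mem_insert.1 (hsub hy) with rfl | h
              · exact absurd (Finset.mem_inter.1 hy).2 hxN
              · exact h
            have := Finset.card_le_card this
            have := Finset.card_le_card s1
            omega
          have hpp2 : p ≠ p2 := Ne.symm hP
          set D := M ∩ C with hD
          have hDN : ∀ y ∈ D, y ∈ N := fun y hy => by
            rw [← q1] at hy; simp only [Finset.mem_inter] at hy; exact hy.1.2
          have hDC : ∀ y ∈ D, y ∈ C := fun y hy => (Finset.mem_inter.1 hy).2
          have hDM : ∀ y ∈ D, y ∈ M := fun y hy => (Finset.mem_inter.1 hy).1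
          have n1 : p2 ∉ D := fun h => hp2'.2 (hCK (hDC _ h))
          have n2 : p ∉ insert p2 D := by
            rw [Finset.mem_insert, not_or]; exact ⟨hpp2, fun h => hpC (hDC _ h)⟩
          have n3 : x ∉ insert p (insert p2 D) := by
            simp only [Finset.mem_insert, not_or]
            exact ⟨fun e => hxL (e ▸ hp'.1), fun e => hxL (e ▸ hp2'.1), fun h => hxK (hCK (hDC _ h))⟩
          have hG : insert x (insert p (insert p2 D)) ∈ F := by
            refine (hF _).2 ⟨?_, ?_, ?_⟩
            · refine Finset.insert_subset hxX (Finset.insert_subset (hFX L hL hp'.1)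
                (Finset.insert_subset (hFX L hL hp2'.1) fun y hy => hFX K hK (hCK (hDC y hy))))
            · rw [Finset.card_insert_of_notMem n3, Finset.card_insert_of_notMem n2,
                Finset.card_insert_of_notMem n1]; omega
            · refine IsClq.insert hsymm (hLc.mono ?_) ?_
              · exact Finset.insert_subset hp'.1 (Finset.insert_subset hp2'.1
                  fun y hy => hCL (hDC y hy))
              · intro y hy hne
                simp only [Finset.mem_insert] at hy
                rcases hy with rfl | rfl | hy
                · exact hFc M hM _ hpM x hxM hne
                · exact hFc N hN _ hp2N x hxN hne
                · exact hFc N hN _ (hDN y hy) x hxN hne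
          have hlast := h1 K hK _ hG
          have : K ∩ insert x (insert p (insert p2 D)) ⊆ D := by
            intro y hy
            simp only [Finset.mem_inter (s₁ := K), Finset.mem_insert] at hy
            obtain ⟨hyK, rfl | rfl | rfl | h⟩ := hy
            · exact absurd hyK hxK
            · exact absurd hyK hp'.2
            · exact absurd hyK hp2'.2
            · exact h
          have := Finset.card_le_card this
          omega

theorem dim_one_eq {E : Type*} [NormedAddCommGroup E] [InnerProductSpace ℝ E]
    [FiniteDimensional ℝ E] (hE : Module.finrank ℝ E ≤ 1) (u v : E) (R : ℝ)
    (hu : inner ℝ u u = R) (hv : inner ℝ v v = R) (huv : 0 < inner ℝ u v) : u = v := by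
  obtain ⟨w, hw⟩ := finrank_le_one_iff.1 hE
  obtain ⟨s, rfl⟩ := hw u
  obtain ⟨t, rfl⟩ := hw v
  simp only [inner_smul_left, inner_smul_right, RCLike.conj_to_real] at hu hv huv
  have hw0 : 0 ≤ inner ℝ w w := real_inner_self_nonneg
  have hw1 : inner ℝ w w ≠ 0 := by
    intro h; rw [h] at huv; simp at huv
  have h2 : inner ℝ w w * ((s - t) * (s + t)) = 0 := by linarith
  rcases mul_eq_zero.1 ((mul_eq_zero.1 h2).resolve_left hw1) with h | h
  · rw [sub_eq_zero.1 h]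
  · have hs : s = -t := by linarith
    subst hs
    nlinarith [mul_nonneg (mul_self_nonneg t) hw0]

theorem family_h1 (d : ℕ) (hd : 4 ≤ d) [DecidableEq (EuclideanSpace ℝ (Fin d))]
    (X K L : Finset (EuclideanSpace ℝ (Fin d)))
    (hdiam : ∀ x ∈ X, ∀ y ∈ X, ‖x - y‖ ≤ 1) (hKX : K ⊆ X) (hLX : L ⊆ X)
    (hKd : K.card = d) (hLd : L.card = d)
    (hK : ∀ x ∈ K, ∀ y ∈ K, x ≠ y → ‖x - y‖ = 1)
    (hL : ∀ x ∈ L, ∀ y ∈ L, x ≠ y → ‖x - y‖ = 1)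
    (hs : d - 3 ≤ (K ∩ L).card) : d ≤ (K ∩ L).card + 2 := by
  by_contra hlt
  have hk : (K ∩ L).card = d - 3 := by omega
  have hCK : K ∩ L ⊆ K := Finset.inter_subset_left
  have hCL : K ∩ L ⊆ L := Finset.inter_subset_right
  obtain ⟨o, V, hV, hmem, hin⟩ := sphere_setup d (K ∩ L) (Finset.card_pos.1 (by omega))
    (fun x hx y hy => hK x (hCK hx) y (hCK hy))
  have cK : (K \ L).card = 3 := by
    have := Finset.card_sdiff_add_card_inter K L; omega
  have cL : (L \ K).card = 3 := by
    have := Finset.card_sdiff_add_card_inter L K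
    rw [Finset.inter_comm L K] at this; omega
  have ext3 : ∀ S : Finset (EuclideanSpace ℝ (Fin d)), S.card = 3 →
      ∃ a : Fin 3 → EuclideanSpace ℝ (Fin d), Function.Injective a ∧ ∀ i, a i ∈ S := by
    intro S hS
    obtain ⟨x, y, z, h1, h2, h3, rfl⟩ := Finset.card_eq_three.1 hS
    refine ⟨![x, y, z], inj3 h1 h2 h3, fun i => ?_⟩
    fin_cases i <;> simp
  obtain ⟨a, hai, ha⟩ := ext3 _ cK
  obtain ⟨b, hbi, hb⟩ := ext3 _ cL
  have a1 : ∀ i, a i ∈ K ∧ a i ∉ L := fun i => Finset.mem_sdiff.1 (ha i)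
  have b1 : ∀ i, b i ∈ L ∧ b i ∉ K := fun i => Finset.mem_sdiff.1 (hb i)
  have a2 : ∀ i, ∀ q ∈ K ∩ L, ‖a i - q‖ = 1 := fun i q hq =>
    hK _ (a1 i).1 q (hCK hq) (fun e => (a1 i).2 (e ▸ hCL hq))
  have b2 : ∀ i, ∀ q ∈ K ∩ L, ‖b i - q‖ = 1 := fun i q hq =>
    hL _ (b1 i).1 q (hCL hq) (fun e => (b1 i).2 (e ▸ hCK hq))
  have hkpos : (0 : ℝ) < ((K ∩ L).card : ℝ) := by
    have : 0 < (K ∩ L).card := by omega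
    exact_mod_cast this
  obtain ⟨i, j, hij⟩ := two_triples (E := V) (by omega)
    (fun i => ⟨a i - o, hmem _ (a2 i)⟩) (fun i => ⟨b i - o, hmem _ (b2 i)⟩)
    (1 / (2 * ((K ∩ L).card : ℝ))) (1 / 2) (by positivity) (by norm_num)
    (by
      intro i
      have := hin _ _ (a2 i) (a2 i)
      simp only [sub_self, norm_zero] at this
      rw [Submodule.coe_inner, this]; ring)
    (by
      intro i
      have := hin _ _ (b2 i) (b2 i)
      simp only [sub_self, norm_zero] at this
      rw [Submodule.coe_inner, this]; ring)
    (by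
      intro i j hij
      have := hin _ _ (a2 i) (a2 j)
      rw [hK _ (a1 i).1 _ (a1 j).1 (fun e => hij (hai e))] at this
      rw [Submodule.coe_inner, this]; ring)
    (by
      intro i j hij
      have := hin _ _ (b2 i) (b2 j)
      rw [hL _ (b1 i).1 _ (b1 j).1 (fun e => hij (hbi e))] at this
      rw [Submodule.coe_inner, this]; ring)
    (by
      intro i j
      have := hin _ _ (a2 i) (b2 j)
      rw [Submodule.coe_inner, this]
      have h1 := hdiam _ (hKX (a1 i).1) _ (hLX (b1 j).1)
      nlinarith [norm_nonneg (a i - b j)])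
  have e : a i = b j := by
    have := congrArg Subtype.val hij
    simpa using this
  exact (a1 i).2 (e ▸ (b1 j).1)

theorem family_h2 (d : ℕ) (hd : 4 ≤ d)
    (X S : Finset (EuclideanSpace ℝ (Fin d)))
    (hdiam : ∀ x ∈ X, ∀ y ∈ X, ‖x - y‖ ≤ 1)
    (hSd : S.card = d) (hS : ∀ x ∈ S, ∀ y ∈ S, x ≠ y → ‖x - y‖ = 1)
    (v : EuclideanSpace ℝ (Fin d)) (hv : v ∈ X) (v' : EuclideanSpace ℝ (Fin d)) (hv' : v' ∈ X)
    (h : ∀ x ∈ S, ‖x - v‖ = 1) (h' : ∀ x ∈ S, ‖x - v'‖ = 1) : v = v' := by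
  obtain ⟨o, V, hV, hmem, hin⟩ := sphere_setup d S (Finset.card_pos.1 (by omega)) hS
  have g : ∀ q ∈ S, ‖v - q‖ = 1 := fun q hq => by rw [norm_sub_rev]; exact h q hq
  have g' : ∀ q ∈ S, ‖v' - q‖ = 1 := fun q hq => by rw [norm_sub_rev]; exact h' q hq
  have hpos : (0 : ℝ) < 1 / (2 * (S.card : ℝ)) := by
    have : (0 : ℝ) < (S.card : ℝ) := by
      have : 0 < S.card := by omega
      exact_mod_cast this
    positivity
  have := dim_one_eq (E := V) (by omega) ⟨v - o, hmem _ g⟩ ⟨v' - o, hmem _ g'⟩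
    (1 / 2 + 1 / (2 * (S.card : ℝ)))
    (by
      have := hin _ _ g g
      simp only [sub_self, norm_zero] at this
      rw [Submodule.coe_inner, this]; ring)
    (by
      have := hin _ _ g' g'
      simp only [sub_self, norm_zero] at this
      rw [Submodule.coe_inner, this]; ring)
    (by
      have := hin _ _ g g'
      rw [Submodule.coe_inner, this]
      have h1 := hdiam _ hv _ hv'
      nlinarith [norm_nonneg (v - v')])
  have := congrArg Subtype.val this
  simpa using this

theorem family_h3 (d : ℕ) (hd : 4 ≤ d) [DecidableEq (EuclideanSpace ℝ (Fin d))]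
    (X C : Finset (EuclideanSpace ℝ (Fin d))) (F : Finset (Finset (EuclideanSpace ℝ (Fin d))))
    (hdiam : ∀ x ∈ X, ∀ y ∈ X, ‖x - y‖ ≤ 1)
    (hF : ∀ K ∈ F, K ⊆ X ∧ K.card = d ∧ ∀ x ∈ K, ∀ y ∈ K, x ≠ y → ‖x - y‖ = 1)
    (hCd : C.card + 2 = d) (hC : ∀ x ∈ C, ∀ y ∈ C, x ≠ y → ‖x - y‖ = 1)
    (hFC : ∀ K ∈ F, C ⊆ K) : F.card ≤ X.card := by
  classical
  obtain ⟨o, V, hV, hmem, hin⟩ := sphere_setup d C (Finset.card_pos.1 (by omega)) hC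
  have hpos : (0 : ℝ) < 1 / (2 * (C.card : ℝ)) := by
    have : (0 : ℝ) < (C.card : ℝ) := by
      have : 0 < C.card := by omega
      exact_mod_cast this
    positivity
  let Y := X.filter (fun x => ∀ q ∈ C, ‖x - q‖ = 1)
  have hY : ∀ x, x ∈ Y ↔ x ∈ X ∧ ∀ q ∈ C, ‖x - q‖ = 1 := fun x => Finset.mem_filter
  have hinj : Set.InjOn (fun K => K \ C) (F : Set (Finset (EuclideanSpace ℝ (Fin d)))) := by
    intro K hK L hL h
    have h : K \ C = L \ C := h
    rw [← Finset.sdiff_union_of_subset (hFC K hK), h, Finset.sdiff_union_of_subset (hFC L hL)]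
  rw [← Finset.card_image_of_injOn hinj]
  have hG : ∀ s ∈ F.image (fun K => K \ C), s ⊆ Y ∧ s.card = 2 ∧
      ∀ x ∈ s, ∀ y ∈ s, x ≠ y → ‖x - y‖ = 1 := by
    intro s hs
    obtain ⟨K, hK, rfl⟩ := Finset.mem_image.1 hs
    obtain ⟨k1, k2, k3⟩ := hF K hK
    refine ⟨fun x hx => ?_, ?_, fun x hx y hy => ?_⟩
    · rw [Finset.mem_sdiff] at hx
      exact (hY x).2 ⟨k1 hx.1, fun q hq =>
        k3 x hx.1 q (hFC K hK hq) (fun e => hx.2 (e ▸ hq))⟩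
    · rw [Finset.card_sdiff_of_subset (hFC K hK)]; omega
    · exact k3 x (Finset.mem_sdiff.1 hx).1 y (Finset.mem_sdiff.1 hy).1
  refine le_trans (edge_count Y.card Y (F.image (fun K => K \ C)) rfl
    (fun s hs => ⟨(hG s hs).1, (hG s hs).2.1⟩) ?_) (Finset.card_filter_le _ _)
  intro v w hw hvw
  have hvY : v ∈ Y := (hG _ (hvw 0).2).1 (by simp)
  have hwY : ∀ i, w i ∈ Y := fun i => (hG _ (hvw i).2).1 (by simp)
  have ev : ∀ i, ‖v - w i‖ = 1 := fun i =>
    (hG _ (hvw i).2).2.2 v (by simp) (w i) (by simp) (hvw i).1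
  have yin : ∀ x ∈ Y, ∀ q ∈ C, ‖x - q‖ = 1 := fun x hx => ((hY x).1 hx).2
  have self : ∀ x (hx : x ∈ Y), inner ℝ (⟨x - o, hmem _ (yin x hx)⟩ : V)
      (⟨x - o, hmem _ (yin x hx)⟩ : V) = 1 / 2 + 1 / (2 * (C.card : ℝ)) := by
    intro x hx
    have := hin _ _ (yin x hx) (yin x hx)
    simp only [sub_self, norm_zero] at this
    rw [Submodule.coe_inner, this]; ring
  have unit : ∀ x (hx : x ∈ Y) y (hy : y ∈ Y), ‖x - y‖ = 1 →
      inner ℝ (⟨x - o, hmem _ (yin x hx)⟩ : V)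
      (⟨y - o, hmem _ (yin y hy)⟩ : V) = 1 / (2 * (C.card : ℝ)) := by
    intro x hx y hy hxy
    have := hin _ _ (yin x hx) (yin y hy)
    rw [hxy] at this
    rw [Submodule.coe_inner, this]; ring
  have lower : ∀ x (hx : x ∈ Y) y (hy : y ∈ Y), 1 / (2 * (C.card : ℝ)) ≤
      inner ℝ (⟨x - o, hmem _ (yin x hx)⟩ : V)
      (⟨y - o, hmem _ (yin y hy)⟩ : V) := by
    intro x hx y hy
    have := hin _ _ (yin x hx) (yin y hy)
    rw [Submodule.coe_inner, this]
    have h1 := hdiam _ ((hY x).1 hx).1 _ ((hY y).1 hy).1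
    nlinarith [norm_nonneg (x - y)]
  obtain ⟨i, hi⟩ := middle_nbr (E := V) (by omega) ⟨v - o, hmem _ (yin v hvY)⟩
    (fun i => ⟨w i - o, hmem _ (yin _ (hwY i))⟩) (1 / (2 * (C.card : ℝ)))
    (1 / 2 + 1 / (2 * (C.card : ℝ))) hpos (by linarith)
    (by
      intro i j hij
      have := congrArg Subtype.val hij
      exact hw (by simpa using this))
    (self v hvY) (fun i => self _ (hwY i)) (fun i => unit v hvY _ (hwY i) (ev i))
  refine ⟨i, fun s hs his => ?_⟩
  obtain ⟨s1, s2, s3⟩ := hG s hs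
  obtain ⟨z, hzs, hzw⟩ : ∃ z ∈ s, z ≠ w i := by
    obtain ⟨p, q, hpq, rfl⟩ := Finset.card_eq_two.1 s2
    by_cases hp : p = w i
    · exact ⟨q, by simp, fun e => hpq (hp.trans e.symm)⟩
    · exact ⟨p, by simp, hp⟩
  have hz := hi ⟨z - o, hmem _ (yin z (s1 hzs))⟩ (self z (s1 hzs))
    (fun j => lower z (s1 hzs) _ (hwY j)) (unit z (s1 hzs) _ (hwY i) (s3 z hzs _ his hzw))
  have hzv : z = v := by
    have := congrArg Subtype.val hz
    simpa using this
  subst hzv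
  symm
  apply Finset.eq_of_subset_of_card_le
  · intro x hx
    rw [Finset.mem_insert, Finset.mem_singleton] at hx
    rcases hx with rfl | rfl
    · exact hzs
    · exact his
  · rw [s2, Finset.card_pair hzw]

attribute [local instance] Classical.propDecidable

theorem schur_under_intersection_hypothesis (d : ℕ) (hd : d ≥ 4)
    (X : Finset (EuclideanSpace ℝ (Fin d))) (n : ℕ) (hn : X.card = n)
    (hdiam : ∀ x ∈ X, ∀ y ∈ X, ‖x - y‖ ≤ 1)
    (hshare : ∀ K₁ K₂ : Finset (EuclideanSpace ℝ (Fin d)),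
      K₁ ⊆ X → K₂ ⊆ X → K₁.card = d → K₂.card = d →
      (∀ x ∈ K₁, ∀ y ∈ K₁, x ≠ y → ‖x - y‖ = 1) →
      (∀ x ∈ K₂, ∀ y ∈ K₂, x ≠ y → ‖x - y‖ = 1) →
      d - 3 ≤ (K₁ ∩ K₂).card) :
    ((X.powersetCard d).filter
      (fun s => ∀ x ∈ s, ∀ y ∈ s, x ≠ y → ‖x - y‖ = 1)).card ≤ n := by
  have hF : ∀ K, K ∈ ((X.powersetCard d).filter
      (fun s => ∀ x ∈ s, ∀ y ∈ s, x ≠ y → ‖x - y‖ = 1)) ↔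
      K ⊆ X ∧ K.card = d ∧ IsClq (fun x y => ‖x - y‖ = 1) K := by
    intro K
    rw [Finset.mem_filter, Finset.mem_powersetCard, and_assoc]
    rfl
  rw [← hn]
  refine clique_count d (by omega) (fun x y => ‖x - y‖ = 1)
    (fun x y h => by rw [norm_sub_rev]; exact h) X _ hF ?_ ?_ ?_
  · intro K hK L hL
    obtain ⟨k1, k2, k3⟩ := (hF K).1 hK
    obtain ⟨l1, l2, l3⟩ := (hF L).1 hL
    exact family_h1 d hd X K L hdiam k1 l1 k2 l2 k3 l3 (hshare K L k1 l1 k2 l2 k3 l3)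
  · intro S hS v hv v' hv' h h'
    obtain ⟨k1, k2, k3⟩ := (hF S).1 hS
    exact family_h2 d hd X S hdiam k2 k3 v hv v' hv' h h'
  · intro C _ hCd hCc hFC
    exact family_h3 d hd X C _ hdiam (fun K hK => (hF K).1 hK) hCd hCc hFC
end

section
/- Let X be a finite set of n points lying on a circle in the Euclidean plane (i.e., there are a point O ∈ ℝ² and a radius r > 0 with ‖x − O‖ = r for all x ∈ X), with all pairwise distances at most 1. Then the number of unordered pairs {x, y} ⊆ X with ‖x − y‖ = 1 is at most n if n is odd, and at most n − 1 if n is even. -/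
attribute [local instance] Classical.propDecidable

/-- The set of unordered pairs of points of `X ⊆ ℝ²` at distance exactly `1`. -/
noncomputable def unitPairs2 (X : Finset (EuclideanSpace ℝ (Fin 2))) :
    Finset (Finset (EuclideanSpace ℝ (Fin 2))) :=
  (X.powersetCard 2).filter (fun s => ∀ x ∈ s, ∀ y ∈ s, x ≠ y → ‖x - y‖ = 1)

lemma key_ineq (a b c s R : ℝ) (hR : 0 < R) (hs : 0 < s) (hcs : s ^ 2 + c ^ 2 = 1)
    (hab : a ^ 2 + b ^ 2 = R ^ 2) (ha : 0 ≤ a) (hb : c * R ≤ b) : c * a ≤ s * b := by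
  rcases le_or_gt 0 b with h0 | h0
  · rcases le_or_gt c 0 with hc | hc
    · nlinarith [mul_nonneg hs.le h0, mul_nonneg ha (neg_nonneg.mpr hc)]
    · have h1 : 0 ≤ c * R := by positivity
      have h2 : (c * R) ^ 2 ≤ b ^ 2 := by gcongr
      refine le_of_abs_le (abs_le_of_sq_le_sq ?_ (by positivity))
      nlinarith
  · have hc : c < 0 := by nlinarith
    have h2 : b ^ 2 ≤ (c * R) ^ 2 := by nlinarith
    suffices h : s * (-b) ≤ (-c) * a by linarith
    have hc' : 0 ≤ -c := by linarith
    refine le_of_abs_le (abs_le_of_sq_le_sq ?_ (by positivity))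
    nlinarith

lemma normsq2 (x y : EuclideanSpace ℝ (Fin 2)) :
    ‖x - y‖ ^ 2 = (x 0 - y 0) ^ 2 + (x 1 - y 1) ^ 2 := by
  simp [EuclideanSpace.norm_sq_eq, Fin.sum_univ_two]

lemma ext2 {x y : EuclideanSpace ℝ (Fin 2)} (h0 : x 0 = y 0) (h1 : x 1 = y 1) : x = y := by
  ext i; fin_cases i
  · exact h0
  · exact h1

noncomputable def rot (O : EuclideanSpace ℝ (Fin 2)) (c s : ℝ) (z : EuclideanSpace ℝ (Fin 2)) :
    EuclideanSpace ℝ (Fin 2) :=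
  !₂[O 0 + (c * (z 0 - O 0) - s * (z 1 - O 1)), O 1 + (s * (z 0 - O 0) + c * (z 1 - O 1))]

lemma rot0 (O : EuclideanSpace ℝ (Fin 2)) (c s : ℝ) (z : EuclideanSpace ℝ (Fin 2)) :
    rot O c s z 0 = O 0 + (c * (z 0 - O 0) - s * (z 1 - O 1)) := by simp [rot]

lemma rot1 (O : EuclideanSpace ℝ (Fin 2)) (c s : ℝ) (z : EuclideanSpace ℝ (Fin 2)) :
    rot O c s z 1 = O 1 + (s * (z 0 - O 0) + c * (z 1 - O 1)) := by simp [rot]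

/-- an edge determines the rotation -/
lemma edge_rot (O u v : EuclideanSpace ℝ (Fin 2)) (R s : ℝ) (hR : 0 < R)
    (hu : (u 0 - O 0) ^ 2 + (u 1 - O 1) ^ 2 = R)
    (hd : (u 0 - O 0) * (v 0 - O 0) + (u 1 - O 1) * (v 1 - O 1) = R - 1 / 2)
    (hc : (u 0 - O 0) * (v 1 - O 1) - (u 1 - O 1) * (v 0 - O 0) = s * R) :
    v = rot O (1 - 1 / (2 * R)) s u := by
  have hk : (1 - 1 / (2 * R)) * R = R - 1 / 2 := by field_simp
  rw [← hk] at hd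
  generalize 1 - 1 / (2 * R) = c at *
  apply ext2
  · rw [rot0]
    apply mul_left_cancel₀ hR.ne'
    linear_combination (u 0 - O 0) * hd - (u 1 - O 1) * hc - (v 0 - O 0) * hu
  · rw [rot1]
    apply mul_left_cancel₀ hR.ne'
    linear_combination (u 1 - O 1) * hd + (u 0 - O 0) * hc - (v 1 - O 1) * hu

lemma rot_inj (O : EuclideanSpace ℝ (Fin 2)) (c s : ℝ) (h : s ^ 2 + c ^ 2 = 1) :
    Function.Injective (rot O c s) := by
  intro z w hzw
  have h0 := congrArg (fun t => t 0) hzw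
  have h1 := congrArg (fun t => t 1) hzw
  simp only [rot0, rot1] at h0 h1
  apply ext2
  · linear_combination c * h0 + s * h1 - (z 0 - w 0) * h
  · linear_combination c * h1 - s * h0 - (z 1 - w 1) * h

set_option maxHeartbeats 2000000 in
theorem diameters_on_circle (X : Finset (EuclideanSpace ℝ (Fin 2))) (n : ℕ)
    (hn : X.card = n) (O : EuclideanSpace ℝ (Fin 2)) (r : ℝ) (hr : r > 0)
    (hcirc : ∀ x ∈ X, ‖x - O‖ = r)
    (hdiam : ∀ x ∈ X, ∀ y ∈ X, ‖x - y‖ ≤ 1) :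
    (Odd n → (unitPairs2 X).card ≤ n) ∧ (Even n → (unitPairs2 X).card ≤ n - 1) := by
  obtain ⟨R, hRdef⟩ : ∃ R, R = r ^ 2 := ⟨_, rfl⟩
  have hR : 0 < R := by rw [hRdef]; positivity
  obtain ⟨c, hc⟩ : ∃ c, c = 1 - 1 / (2 * R) := ⟨_, rfl⟩
  obtain ⟨s, hs⟩ : ∃ s, s = √(1 - c ^ 2) := ⟨_, rfl⟩
  have hs0 : 0 ≤ s := by rw [hs]; positivity
  have hcR : c * R = R - 1 / 2 := by rw [hc]; field_simp
  have hX : ∀ x ∈ X, (x 0 - O 0) ^ 2 + (x 1 - O 1) ^ 2 = R := by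
    intro x hx
    rw [← normsq2, hcirc x hx, hRdef]
  have hD : ∀ x ∈ X, ∀ y ∈ X,
      c * R ≤ (x 0 - O 0) * (y 0 - O 0) + (x 1 - O 1) * (y 1 - O 1) := by
    intro x hx y hy
    have h1 : ‖x - y‖ ^ 2 ≤ 1 := pow_le_one₀ (norm_nonneg _) (hdiam x hx y hy)
    rw [normsq2] at h1
    nlinarith [hX x hx, hX y hy]
  have hedge : ∀ u ∈ X, ∀ v ∈ X, ‖u - v‖ = 1 →
      s ^ 2 + c ^ 2 = 1 ∧ (v = rot O c s u ∨ u = rot O c s v) := by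
    intro u hu v hv huv
    have h1 : ‖u - v‖ ^ 2 = 1 := by rw [huv]; norm_num
    rw [normsq2] at h1
    have hu' := hX u hu
    have hv' := hX v hv
    have hd : (u 0 - O 0) * (v 0 - O 0) + (u 1 - O 1) * (v 1 - O 1) = R - 1 / 2 := by
      linear_combination (hu' + hv' - h1) / 2
    have hcr : ((u 0 - O 0) * (v 1 - O 1) - (u 1 - O 1) * (v 0 - O 0)) ^ 2
        = (1 - c ^ 2) * R ^ 2 := by
      have e : (c * R) ^ 2 = (R - 1 / 2) ^ 2 := by rw [hcR]
      have e2 : ((u 0 - O 0) * (v 0 - O 0) + (u 1 - O 1) * (v 1 - O 1)) ^ 2 = (R - 1 / 2) ^ 2 := by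
        rw [hd]
      have e3 : ((u 0 - O 0) ^ 2 + (u 1 - O 1) ^ 2) * ((v 0 - O 0) ^ 2 + (v 1 - O 1) ^ 2)
        = R * R := by rw [hu', hv']
      linear_combination e3 - e2 + e
    have hpos : 0 ≤ 1 - c ^ 2 := by
      by_contra h
      push Not at h
      have : (1 - c ^ 2) * R ^ 2 < 0 := mul_neg_of_neg_of_pos h (by positivity)
      nlinarith [sq_nonneg ((u 0 - O 0) * (v 1 - O 1) - (u 1 - O 1) * (v 0 - O 0))]
    have hs2 : s ^ 2 = 1 - c ^ 2 := by rw [hs, Real.sq_sqrt hpos]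
    refine ⟨by linarith, ?_⟩
    rw [← hs2, ← mul_pow] at hcr
    rcases sq_eq_sq_iff_eq_or_eq_neg.mp hcr with h | h
    · left
      rw [hc]
      exact edge_rot O u v R s hR hu' hd h
    · right
      rw [hc]
      exact edge_rot O v u R s hR hv' (by linarith) (by linarith)
  have hsub : unitPairs2 X ⊆ (X.filter (fun u => rot O c s u ∈ X)).image
      (fun u => {u, rot O c s u}) := by
    intro t ht
    simp only [unitPairs2, Finset.mem_filter, Finset.mem_powersetCard] at ht
    obtain ⟨⟨htX, htc⟩, hd⟩ := ht
    obtain ⟨u, v, huv, rfl⟩ := Finset.card_eq_two.mp htc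
    have hu : u ∈ X := htX (by simp)
    have hv : v ∈ X := htX (by simp)
    have h1 := hd u (by simp) v (by simp) huv
    rw [Finset.mem_image]
    rcases (hedge u hu v hv h1).2 with h | h
    · exact ⟨u, by simp [hu, ← h, hv], by simp [← h]⟩
    · exact ⟨v, by simp [hv, ← h, hu], by simp [← h, Finset.pair_comm]⟩
  have hc1 := Finset.card_le_card hsub
  have hc2 := Finset.card_image_le (s := X.filter (fun u => rot O c s u ∈ X))
    (f := fun u => ({u, rot O c s u} : Finset (EuclideanSpace ℝ (Fin 2))))
  have hc3 := Finset.card_filter_le X (fun u => rot O c s u ∈ X)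
  refine ⟨fun _ => by omega, fun hev => ?_⟩
  by_contra hlt
  have hn0 : 0 < n := by omega
  have hfX : X.filter (fun u => rot O c s u ∈ X) = X :=
    Finset.eq_of_subset_of_card_le (Finset.filter_subset _ _) (by omega)
  have hmem : ∀ u ∈ X, rot O c s u ∈ X := fun u hu => by
    rw [← hfX] at hu
    exact (Finset.mem_filter.mp hu).2
  have hinj : Set.InjOn (fun u => ({u, rot O c s u} : Finset (EuclideanSpace ℝ (Fin 2)))) X := by
    have : (X.filter (fun u => rot O c s u ∈ X)).card ≤ _ := le_trans (by omega) hc1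
    have h := Finset.card_image_iff.mp (le_antisymm hc2 this)
    rwa [hfX] at h
  have hcs : s ^ 2 + c ^ 2 = 1 := by
    have hne : (unitPairs2 X).Nonempty := Finset.card_pos.mp (by omega)
    obtain ⟨t, ht⟩ := hne
    simp only [unitPairs2, Finset.mem_filter, Finset.mem_powersetCard] at ht
    obtain ⟨⟨htX, htc⟩, hd⟩ := ht
    obtain ⟨u, v, huv, rfl⟩ := Finset.card_eq_two.mp htc
    exact (hedge u (htX (by simp)) v (htX (by simp)) (hd u (by simp) v (by simp) huv)).1
  obtain ⟨x, hx⟩ : X.Nonempty := Finset.card_pos.mp (by omega)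
  have hc_lt : c < 1 := by rw [hc]; have : 0 < 1 / (2 * R) := by positivity
                           linarith
  have hs1 : 0 < s := by
    rcases hs0.lt_or_eq with h | h
    · exact h
    · exfalso
      have hcm : c = -1 := by
        have : (c - 1) * (c + 1) = 0 := by rw [← h] at hcs; linarith
        rcases mul_eq_zero.mp this with h | h <;> linarith
      have hrr : rot O c s (rot O c s x) = x := by
        apply ext2 <;> simp only [rot0, rot1, ← h, hcm] <;> ring
      have heq : x = rot O c s x := by
        apply hinj hx (hmem x hx)
        simp only [hrr, Finset.pair_comm]
      have h0 := congrArg (fun t => t 0) heq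
      have h1 := congrArg (fun t => t 1) heq
      simp only [rot0, rot1, ← h, hcm] at h0 h1
      have h0' : x 0 - O 0 = 0 := by linarith
      have h1' : x 1 - O 1 = 0 := by linarith
      have := hX x hx
      rw [h0', h1'] at this
      norm_num at this
      linarith
  have hri := rot_inj O c s hcs
  have himg : X.image (rot O c s) = X := by
    apply Finset.eq_of_subset_of_card_le
    · intro t ht
      obtain ⟨u, hu, rfl⟩ := Finset.mem_image.mp ht
      exact hmem u hu
    · rw [Finset.card_image_of_injective _ hri]
  let a : EuclideanSpace ℝ (Fin 2) → ℝ :=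
    fun z => (x 0 - O 0) * (z 1 - O 1) - (x 1 - O 1) * (z 0 - O 0)
  let b : EuclideanSpace ℝ (Fin 2) → ℝ :=
    fun z => (x 0 - O 0) * (z 0 - O 0) + (x 1 - O 1) * (z 1 - O 1)
  have hb : ∀ z ∈ X, c * R ≤ b z := fun z hz => hD x hx z hz
  have hab : ∀ z ∈ X, a z ^ 2 + b z ^ 2 = R ^ 2 := by
    intro z hz
    have e3 : ((x 0 - O 0) ^ 2 + (x 1 - O 1) ^ 2) * ((z 0 - O 0) ^ 2 + (z 1 - O 1) ^ 2)
        = R * R := by rw [hX x hx, hX z hz]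
    simp only [a, b]
    linear_combination e3
  have har : ∀ z, a (rot O c s z) = s * b z + c * a z := by
    intro z; simp only [a, b, rot0, rot1]; ring
  have har' : ∀ z, a z = c * a (rot O c s z) - s * b (rot O c s z) := by
    intro z; simp only [a, b, rot0, rot1]
    linear_combination (-((x 0 - O 0) * (z 1 - O 1) - (x 1 - O 1) * (z 0 - O 0))) * hcs
  have hPN : (X.filter (fun z => 0 < a z)).image (rot O c s) = X.filter (fun z => a z < 0) := by
    ext w
    simp only [Finset.mem_image, Finset.mem_filter]
    constructor
    · rintro ⟨z, ⟨hz, haz⟩, rfl⟩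
      refine ⟨hmem z hz, ?_⟩
      by_contra h
      push Not at h
      have := key_ineq _ _ c s R hR hs1 hcs (hab _ (hmem z hz)) h (hb _ (hmem z hz))
      have := har' z
      linarith
    · rintro ⟨hw, haw⟩
      rw [← himg] at hw
      obtain ⟨z, hz, rfl⟩ := Finset.mem_image.mp hw
      refine ⟨z, ⟨hz, ?_⟩, rfl⟩
      by_contra h
      push Not at h
      have := key_ineq (-a z) (b z) c s R hR hs1 hcs (by rw [neg_sq]; exact hab z hz)
        (by linarith) (hb z hz)
      have := har z
      linarith
  have hcard := Finset.card_image_of_injective (X.filter (fun z => 0 < a z)) hri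
  rw [hPN] at hcard
  have hzero : X.filter (fun z => a z = 0) = {x} := by
    ext z
    simp only [Finset.mem_filter, Finset.mem_singleton]
    constructor
    · rintro ⟨hz, haz⟩
      have h1 := hab z hz
      have h2 := hb z hz
      have h3 : (b z - R) * (b z + R) = 0 := by rw [haz] at h1; linarith
      have hcm : -1 < c := by nlinarith
      have hbz : b z = R := by
        rcases mul_eq_zero.mp h3 with h | h
        · linarith
        · have h5 : 0 < (c + 1) * R := mul_pos (by linarith) hR
          linarith
      have h4 := hX x hx
      simp only [a, b] at haz hbz
      apply ext2
      · have : R * (z 0 - x 0) = 0 := by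
          linear_combination (x 0 - O 0) * hbz - (x 1 - O 1) * haz - (z 0 - O 0) * h4
        rcases mul_eq_zero.mp this with h | h <;> linarith
      · have : R * (z 1 - x 1) = 0 := by
          linear_combination (x 1 - O 1) * hbz + (x 0 - O 0) * haz - (z 1 - O 1) * h4
        rcases mul_eq_zero.mp this with h | h <;> linarith
    · rintro rfl
      exact ⟨hx, by simp only [a]; ring⟩
  have hA := Finset.card_filter_add_card_filter_not (s := X) (fun z => 0 < a z)
  have hB := Finset.card_filter_add_card_filter_not
    (s := X.filter (fun z => ¬ 0 < a z)) (fun z => a z < 0)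
  have e1 : (X.filter (fun z => ¬ 0 < a z)).filter (fun z => a z < 0)
      = X.filter (fun z => a z < 0) := by
    ext z; simp only [Finset.mem_filter]; constructor
    · rintro ⟨⟨h, _⟩, h'⟩; exact ⟨h, h'⟩
    · rintro ⟨h, h'⟩; exact ⟨⟨h, by linarith⟩, h'⟩
  have e2 : (X.filter (fun z => ¬ 0 < a z)).filter (fun z => ¬ a z < 0)
      = X.filter (fun z => a z = 0) := by
    ext z; simp only [Finset.mem_filter]; constructor
    · rintro ⟨⟨h, h1⟩, h'⟩; exact ⟨h, by linarith⟩
    · rintro ⟨h, h'⟩; exact ⟨⟨h, by linarith⟩, by linarith⟩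
  rw [e1, e2, hzero, Finset.card_singleton] at hB
  obtain ⟨m, hm⟩ := hev
  omega
end
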